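/- Let 1 < α < 2 and let ψ : ℝ → [0,1] be a smooth even function supported in (−2π, 2π) with ψ = 1 on [−π, π]; set η(ξ) = ψ(‖ξ‖) − ψ(2‖ξ‖) for ξ ∈ ℝ² (so η is supported in the annulus π/2 ≤ ‖ξ‖ ≤ 2π). Then there exists a constant C = C(α, ψ) > 0 such that for every dyadic number N = 2^{−k} with k ∈ ℕ ∪ {0}, every v ∈ ℝ², and every τ > 0, |∫_{[−π,π]²} e^{iτ(v·ξ − w_α(ξ))} η(ξ/N) dξ| ≤ C · N^{2 − (3/4)α} · τ^{−3/4}. (This frequency-localized oscillatory integral bound is equivalent, after rescaling ξ ↦ ξ/h, τ = 2^α t/h^α, v = x/(hτ), to the uniform-in-h dispersive estimate ‖U_h(t)P_N f‖_{L^∞_h} ≤ C (N/h)^{2 − (3/4)α} |t|^{−3/4} ‖f‖_{L^1_h} for U_h(t) = e^{−it(−Δ_h)^{α/2}} on hℤ².) -/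

import Mathlib

open Real MeasureTheory

section helpers
open Set
open scoped ContDiff Topology

lemma split_lemma (g : ℝ → ℂ) (a b c δ M0 M : ℝ) (hab : a ≤ b)
    (hδ : 0 ≤ δ) (hg : ContinuousOn g (Icc a b)) (hM0 : ∀ x ∈ Icc a b, ‖g x‖ ≤ M0) (hM : 0 ≤ M)
    (h : ∀ p q, a ≤ p → p ≤ q → q ≤ b → (∀ x ∈ Icc p q, δ ≤ |x - c|) →
      ‖∫ x in p..q, g x‖ ≤ M) :
    ‖∫ x in a..b, g x‖ ≤ 2 * δ * M0 + 2 * M := by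
  have hM00 : 0 ≤ M0 := (norm_nonneg _).trans (hM0 a ⟨le_rfl, hab⟩)
  have hIntg : ∀ p q, a ≤ p → p ≤ b → a ≤ q → q ≤ b → IntervalIntegrable g volume p q := by
    intro p q h1 h2 h3 h4
    apply ContinuousOn.intervalIntegrable
    apply hg.mono
    intro x hx
    rcases le_total p q with h | h
    · rw [uIcc_of_le h] at hx; exact ⟨h1.trans hx.1, hx.2.trans h4⟩
    · rw [uIcc_of_ge h] at hx; exact ⟨h3.trans hx.1, hx.2.trans h2⟩
  -- left point and right point
  set p := max a (min b (c - δ)) with hp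
  set q := min b (max a (c + δ)) with hq
  have hap : a ≤ p := le_max_left _ _
  have hpb : p ≤ b := max_le hab (min_le_left _ _)
  have hqb : q ≤ b := min_le_left _ _
  have haq : a ≤ q := le_min hab (le_max_left _ _)
  have hpq : p ≤ q := by
    apply max_le haq
    apply le_min (min_le_left _ _)
    exact (min_le_right _ _).trans (le_trans (by linarith) (le_max_right _ _))
  have hlen : q - p ≤ 2 * δ := by
    rcases le_total (c + δ) a with h1 | h1
    · have : q = a := by rw [hq, max_eq_left h1, min_eq_right hab]
      linarith
    · rcases le_total b (c - δ) with h2 | h2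
      · have : p = b := by rw [hp, min_eq_left h2, max_eq_right hab]
        linarith
      · have e1 : q ≤ c + δ := by rw [hq, max_eq_right h1]; exact min_le_right _ _
        have e2 : c - δ ≤ p := by rw [hp, min_eq_right h2]; exact le_max_right _ _
        linarith
  have hI1 : ‖∫ x in a..p, g x‖ ≤ M := by
    rcases eq_or_lt_of_le hap with h1 | h1
    · rw [← h1]; simpa using hM
    · apply h a p le_rfl hap hpb
      intro x hx
      have : p ≤ c - δ := by
        rcases max_choice a (min b (c - δ)) with h2 | h2
        · rw [← hp] at h2; linarith
        · rw [← hp] at h2; rw [h2]; exact min_le_right _ _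
      rw [abs_of_nonpos] <;> linarith [hx.2]
  have hI3 : ‖∫ x in q..b, g x‖ ≤ M := by
    rcases eq_or_lt_of_le hqb with h1 | h1
    · rw [← h1]; simpa using hM
    · apply h q b haq hqb le_rfl
      intro x hx
      have : c + δ ≤ q := by
        rcases min_choice b (max a (c + δ)) with h2 | h2
        · rw [← hq] at h2; linarith
        · rw [← hq] at h2; rw [h2]; exact le_max_right _ _
      rw [abs_of_nonneg] <;> linarith [hx.1]
  have hI2 : ‖∫ x in p..q, g x‖ ≤ 2 * δ * M0 := by
    have := intervalIntegral.norm_integral_le_of_norm_le_const (a := p) (b := q) (f := g) (C := M0)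
      (by
        intro x hx
        rw [uIoc_of_le hpq] at hx
        exact hM0 x ⟨hap.trans hx.1.le, hx.2.trans hqb⟩)
    rw [abs_of_nonneg (by linarith)] at this
    nlinarith
  have e1 := intervalIntegral.integral_add_adjacent_intervals
    (hIntg a p le_rfl hab hap hpb) (hIntg p q hap hpb haq hqb)
  have e2 := intervalIntegral.integral_add_adjacent_intervals
    (hIntg a q le_rfl hab haq hqb) (hIntg q b haq hqb hab le_rfl)
  rw [← e2, ← e1]
  calc _ ≤ _ := norm_add₃_le
    _ ≤ _ := by linarith

lemma vdc_base (f0 f1 f2 : ℝ → ℝ) (a b μ : ℝ) (hab : a ≤ b)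
    (h0 : ∀ x ∈ Icc a b, HasDerivAt f0 (f1 x) x)
    (h1 : ∀ x ∈ Icc a b, HasDerivAt f1 (f2 x) x)
    (hc : ContinuousOn f2 (Icc a b)) (hs : ∀ x ∈ Icc a b, 0 ≤ f2 x)
    (hμ0 : 0 < μ) (hμ : ∀ x ∈ Icc a b, μ ≤ |f1 x|) :
    ‖∫ x in a..b, Complex.exp (Complex.I * (f0 x : ℂ))‖ ≤ 4 / μ := by
  have hne : ∀ x ∈ Icc a b, f1 x ≠ 0 := by
    intro x hx h
    have := hμ x hx
    rw [h, abs_zero] at this; linarith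
  have hc0 : ContinuousOn f0 (Icc a b) := fun x hx => (h0 x hx).continuousAt.continuousWithinAt
  have hc1 : ContinuousOn f1 (Icc a b) := fun x hx => (h1 x hx).continuousAt.continuousWithinAt
  have hab' : uIcc a b = Icc a b := uIcc_of_le hab
  let r : ℝ → ℝ := fun x => (f1 x)⁻¹
  let r' : ℝ → ℝ := fun x => - f2 x / (f1 x) ^ 2
  have hr : ∀ x ∈ Icc a b, HasDerivAt r (r' x) x := fun x hx => (h1 x hx).inv (hne x hx)
  have hr'c : ContinuousOn r' (Icc a b) :=
    (hc.neg).div (hc1.pow 2) (fun x hx => pow_ne_zero 2 (hne x hx))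
  have hrb : ∀ x ∈ Icc a b, |r x| ≤ 1 / μ := by
    intro x hx
    simp only [r, abs_inv, one_div]
    exact inv_anti₀ hμ0 (hμ x hx)
  let u : ℝ → ℂ := fun x => -Complex.I * (r x : ℂ)
  let u' : ℝ → ℂ := fun x => -Complex.I * (r' x : ℂ)
  let v : ℝ → ℂ := fun x => Complex.exp (Complex.I * (f0 x : ℂ))
  let v' : ℝ → ℂ := fun x => Complex.exp (Complex.I * (f0 x : ℂ)) * (Complex.I * (f1 x : ℂ))
  have hu : ∀ x ∈ Icc a b, HasDerivAt u (u' x) x := fun x hx =>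
    ((hr x hx).ofReal_comp).const_mul _
  have hv : ∀ x ∈ Icc a b, HasDerivAt v (v' x) x := fun x hx =>
    (((h0 x hx).ofReal_comp).const_mul _).cexp
  have hvn : ∀ x, ‖v x‖ = 1 := by
    intro x; simp only [v]; rw [mul_comm]; exact Complex.norm_exp_ofReal_mul_I _
  have hu'i : IntervalIntegrable u' volume a b := by
    apply ContinuousOn.intervalIntegrable
    rw [hab']
    exact (continuousOn_const).mul (Complex.continuous_ofReal.comp_continuousOn hr'c)
  have hv'i : IntervalIntegrable v' volume a b := by
    apply ContinuousOn.intervalIntegrable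
    rw [hab']
    apply ContinuousOn.mul
    · exact Complex.continuous_exp.comp_continuousOn
        ((continuousOn_const).mul (Complex.continuous_ofReal.comp_continuousOn hc0))
    · exact (continuousOn_const).mul (Complex.continuous_ofReal.comp_continuousOn hc1)
  have key := intervalIntegral.integral_mul_deriv_eq_deriv_mul (u := u) (v := v) (u' := u') (v' := v')
    (a := a) (b := b) (by rw [hab']; exact hu) (by rw [hab']; exact hv) hu'i hv'i
  have e : ∫ x in a..b, Complex.exp (Complex.I * (f0 x : ℂ)) = ∫ x in a..b, u x * v' x := by
    apply intervalIntegral.integral_congr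
    intro x hx
    rw [hab'] at hx
    have : (f1 x : ℂ) ≠ 0 := by exact_mod_cast hne x hx
    simp only [u, v', r]
    push_cast
    field_simp
    simp
  rw [e, key]
  have hun : ∀ x ∈ Icc a b, ‖u x‖ ≤ 1 / μ := by
    intro x hx
    simp only [u, norm_mul, norm_neg, Complex.norm_I, one_mul, Complex.norm_real]
    exact hrb x hx
  have hI : ‖∫ x in a..b, u' x * v x‖ ≤ 2 / μ := by
    have h2 : ‖∫ x in a..b, u' x * v x‖ ≤ ∫ x in a..b, - r' x := by
      apply intervalIntegral.norm_integral_le_of_norm_le hab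
      · refine Filter.Eventually.of_forall fun x hx => ?_
        have hx' : x ∈ Icc a b := ⟨hx.1.le, hx.2⟩
        rw [norm_mul, hvn, mul_one]
        simp only [u', norm_mul, norm_neg, Complex.norm_I, one_mul, Complex.norm_real]
        rw [Real.norm_eq_abs, abs_of_nonpos]
        simp only [r']
        rw [neg_div]
        exact neg_nonpos.2 (div_nonneg (hs x hx') (sq_nonneg _))
      · apply ContinuousOn.intervalIntegrable
        rw [hab']; exact hr'c.neg
    have h3 : ∫ x in a..b, - r' x = r a - r b := by
      rw [intervalIntegral.integral_neg, intervalIntegral.integral_eq_sub_of_hasDerivAt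
        (f := r)]
      · ring
      · rw [hab']; exact hr
      · apply ContinuousOn.intervalIntegrable
        rw [hab']; exact hr'c
    rw [h3] at h2
    have := hrb a ⟨le_rfl, hab⟩
    have := hrb b ⟨hab, le_rfl⟩
    have := le_abs_self (r a)
    have := neg_abs_le (r b)
    have e4 : 2 / μ = 1 / μ + 1 / μ := by ring
    linarith
  have hA : ‖u b * v b‖ ≤ 1 / μ := by
    rw [norm_mul, hvn, mul_one]; exact hun b ⟨hab, le_rfl⟩
  have hB : ‖u a * v a‖ ≤ 1 / μ := by
    rw [norm_mul, hvn, mul_one]; exact hun a ⟨le_rfl, hab⟩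
  calc _ ≤ ‖u b * v b - u a * v a‖ + ‖∫ x in a..b, u' x * v x‖ := norm_sub_le _ _
    _ ≤ ‖u b * v b‖ + ‖u a * v a‖ + ‖∫ x in a..b, u' x * v x‖ := by gcongr; exact norm_sub_le _ _
    _ ≤ 1 / μ + 1 / μ + 2 / μ := by gcongr
    _ = 4 / μ := by ring

lemma growth_lemma (f f' : ℝ → ℝ) (a b l : ℝ) (hab : a ≤ b) (hl : 0 < l)
    (h : ∀ x ∈ Icc a b, HasDerivAt f (f' x) x) (hl' : ∀ x ∈ Icc a b, l ≤ f' x) :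
    ∃ c ∈ Icc a b, ∀ x ∈ Icc a b, l * |x - c| ≤ |f x| := by
  have hc : ContinuousOn f (Icc a b) := fun x hx => (h x hx).continuousAt.continuousWithinAt
  have mv : ∀ x ∈ Icc a b, ∀ y ∈ Icc a b, x ≤ y → l * (y - x) ≤ f y - f x := by
    intro x hx y hy hxy
    apply Convex.mul_sub_le_image_sub_of_le_deriv (convex_Icc a b) hc _ _ x hx y hy hxy
    · intro z hz
      exact (h z (interior_subset hz)).differentiableAt.differentiableWithinAt
    · intro z hz
      rw [(h z (interior_subset hz)).deriv]
      exact hl' z (interior_subset hz)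
  have ha : a ∈ Icc a b := ⟨le_rfl, hab⟩
  have hb : b ∈ Icc a b := ⟨hab, le_rfl⟩
  have fin : ∀ c ∈ Icc a b, f c = 0 → ∀ x ∈ Icc a b, l * |x - c| ≤ |f x| := by
    intro c hcm h0 x hx
    rcases le_total x c with h1 | h1
    · have := mv x hx c hcm h1
      rw [abs_of_nonpos (by linarith)]
      have := neg_abs_le (f x)
      linarith
    · have := mv c hcm x hx h1
      rw [abs_of_nonneg (by linarith)]
      have := le_abs_self (f x)
      linarith
  rcases le_total 0 (f a) with h1 | h1
  · refine ⟨a, ha, fun x hx => ?_⟩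
    have := mv a ha x hx hx.1
    rw [abs_of_nonneg (by linarith [hx.1])]
    have := le_abs_self (f x)
    linarith
  · rcases le_total (f b) 0 with h2 | h2
    · refine ⟨b, hb, fun x hx => ?_⟩
      have := mv x hx b hb hx.2
      rw [abs_of_nonpos (by linarith [hx.2])]
      have := neg_abs_le (f x)
      linarith
    · obtain ⟨c, hcm, h0⟩ := intermediate_value_Icc hab hc ⟨h1, h2⟩
      exact ⟨c, hcm, fin c hcm h0⟩

lemma cexp_int_neg (f : ℝ → ℝ) (a b : ℝ) :
    ‖∫ x in a..b, Complex.exp (Complex.I * ((-f x : ℝ) : ℂ))‖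
      = ‖∫ x in a..b, Complex.exp (Complex.I * (f x : ℂ))‖ := by
  have : ∀ x, Complex.exp (Complex.I * ((-f x : ℝ) : ℂ))
      = (starRingEnd ℂ) (Complex.exp (Complex.I * (f x : ℂ))) := by
    intro x
    rw [← Complex.exp_conj]
    simp
  simp_rw [this]
  have h2 : ∫ x in a..b, (starRingEnd ℂ) (Complex.exp (Complex.I * (f x : ℂ)))
      = (starRingEnd ℂ) (∫ x in a..b, Complex.exp (Complex.I * (f x : ℂ))) := by
    simp only [intervalIntegral, map_sub, integral_conj]
  rw [h2]
  exact RCLike.norm_conj _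

/-- van der Corput lemma of order `k + 2`. -/
lemma vdc_pos (k : ℕ) : ∃ c > 0, ∀ (F : ℕ → ℝ → ℝ) (a b l : ℝ), a ≤ b → 0 < l →
    (∀ i < k + 2, ∀ x ∈ Icc a b, HasDerivAt (F i) (F (i + 1) x) x) →
    ContinuousOn (F (k + 2)) (Icc a b) → (∀ x ∈ Icc a b, l ≤ F (k + 2) x) →
    ‖∫ x in a..b, Complex.exp (Complex.I * (F 0 x : ℂ))‖ ≤ c * l ^ (-(1 : ℝ) / (k + 2)) := by
  have hsplit : ∀ (F : ℕ → ℝ → ℝ) (a b : ℝ), (∀ x ∈ Icc a b, HasDerivAt (F 0) (F (0 + 1) x) x) →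
      ContinuousOn (fun x => Complex.exp (Complex.I * (F 0 x : ℂ))) (Icc a b) := by
    intro F a b h
    have hc0 : ContinuousOn (F 0) (Icc a b) := fun x hx => (h x hx).continuousAt.continuousWithinAt
    exact Complex.continuous_exp.comp_continuousOn
        ((continuousOn_const).mul (Complex.continuous_ofReal.comp_continuousOn hc0))
  have hnorm : ∀ t : ℝ, ‖Complex.exp (Complex.I * (t : ℂ))‖ ≤ 1 := by
    intro t; rw [mul_comm, Complex.norm_exp_ofReal_mul_I]
  induction k with
  | zero =>
    refine ⟨10, by norm_num, ?_⟩
    intro F a b l hab hl hd hcont hlow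
    obtain ⟨c, hc, hgr⟩ := growth_lemma (F 1) (F 2) a b l hab hl (hd 1 (by norm_num)) hlow
    set δ := l ^ (-(1 : ℝ) / 2) with hδ
    have hδ0 : 0 < δ := rpow_pos_of_pos hl _
    have hlδ : l * δ * δ = 1 := by
      rw [hδ, mul_assoc, ← rpow_add hl]
      norm_num [rpow_neg_one, hl.ne']
    have := split_lemma _ a b c δ 1 (4 * δ) hab hδ0.le (hsplit F a b (hd 0 (by norm_num)))
      (fun x _ => hnorm _) (by positivity) (by
        intro p q hap hpq hqb hx
        have hsub : Icc p q ⊆ Icc a b := Icc_subset_Icc hap hqb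
        have := vdc_base (F 0) (F 1) (F 2) p q (l * δ) hpq
          (fun x hx => hd 0 (by norm_num) x (hsub hx)) (fun x hx => hd 1 (by norm_num) x (hsub hx))
          (hcont.mono hsub) (fun x hx => hl.le.trans (hlow x (hsub hx))) (by positivity)
          (fun x hx' => le_trans (by gcongr; exact hx x hx') (hgr x (hsub hx')))
        refine this.trans (le_of_eq ?_)
        rw [div_eq_iff (by positivity)]
        linear_combination (-4) * hlδ)
    calc _ ≤ _ := this
      _ = 10 * δ := by ring
      _ = _ := by rw [hδ]; norm_num
  | succ k ih =>
    obtain ⟨c₀, hc₀, ih⟩ := ih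
    refine ⟨2 + 2 * c₀, by positivity, ?_⟩
    intro F a b l hab hl hd hcont hlow
    obtain ⟨c, hc, hgr⟩ := growth_lemma (F (k + 2)) (F (k + 3)) a b l hab hl
      (hd (k + 2) (by omega)) hlow
    set δ := l ^ (-(1 : ℝ) / (k + 3)) with hδ
    have hδ0 : 0 < δ := rpow_pos_of_pos hl _
    have hlδ : (l * δ) ^ (-(1 : ℝ) / (k + 2)) = δ := by
      have e : l * l ^ (-(1 : ℝ) / (k + 3)) = l ^ (1 + -(1 : ℝ) / (k + 3)) := by
        rw [rpow_add hl, rpow_one]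
      rw [hδ, e, ← rpow_mul hl.le]
      congr 1
      field_simp
      ring
    have hck : ContinuousOn (F (k + 2)) (Icc a b) :=
      fun x hx => (hd (k + 2) (by omega) x hx).continuousAt.continuousWithinAt
    have := split_lemma _ a b c δ 1 (c₀ * δ) hab hδ0.le (hsplit F a b (hd 0 (by omega)))
      (fun x _ => hnorm _) (by positivity) (by
        intro p q hap hpq hqb hx
        have hsub : Icc p q ⊆ Icc a b := Icc_subset_Icc hap hqb
        have hbig : ∀ x ∈ Icc p q, l * δ ≤ |F (k + 2) x| :=
          fun x hx' => le_trans (by gcongr; exact hx x hx') (hgr x (hsub hx'))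
        have hlδ0 : 0 < l * δ := by positivity
        have hcase : (∀ x ∈ Icc p q, l * δ ≤ F (k + 2) x) ∨
            (∀ x ∈ Icc p q, l * δ ≤ - F (k + 2) x) := by
          by_contra hcon
          push Not at hcon
          obtain ⟨⟨x, hx1, hx2⟩, ⟨y, hy1, hy2⟩⟩ := hcon
          have hx3 := hbig x hx1
          have hy3 := hbig y hy1
          have hx4 : F (k + 2) x ≤ - (l * δ) := by
            rcases abs_cases (F (k + 2) x) with ⟨h1, h2⟩ | ⟨h1, h2⟩ <;> linarith
          have hy4 : l * δ ≤ F (k + 2) y := by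
            rcases abs_cases (F (k + 2) y) with ⟨h1, h2⟩ | ⟨h1, h2⟩ <;> linarith
          have hcc : ContinuousOn (F (k + 2)) (uIcc x y) := hck.mono (by
            intro z hz
            exact hsub ((ordConnected_Icc.uIcc_subset hx1 hy1) hz))
          have h0 : (0 : ℝ) ∈ uIcc (F (k + 2) x) (F (k + 2) y) := by
            rw [mem_uIcc]; left; constructor <;> linarith
          obtain ⟨z, hz, hz0⟩ := intermediate_value_uIcc hcc h0
          have := hbig z ((ordConnected_Icc.uIcc_subset hx1 hy1) hz)
          rw [hz0, abs_zero] at this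
          linarith
        rcases hcase with hcase | hcase
        · have := ih F p q (l * δ) hpq hlδ0 (fun i hi x hx => hd i (by omega) x (hsub hx))
            (hck.mono hsub) hcase
          rwa [hlδ] at this
        · have := ih (fun i x => - F i x) p q (l * δ) hpq hlδ0
            (fun i hi x hx => (hd i (by omega) x (hsub hx)).neg)
            (hck.mono hsub).neg hcase
          rw [cexp_int_neg] at this
          rwa [hlδ] at this)
    calc _ ≤ _ := this
      _ = (2 + 2 * c₀) * δ := by ring
      _ = _ := by
        rw [hδ]; congr 2; push_cast; ring_nf

/-- van der Corput lemma of order `k + 2` with amplitude, for the phase `τ F`. -/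
lemma vdc_amp (k : ℕ) : ∃ c > 0, ∀ (F : ℕ → ℝ → ℝ) (A A' : ℝ → ℂ) (a b l τ M : ℝ), a ≤ b → 0 < l →
    0 < τ →
    (∀ i < k + 2, ∀ x ∈ Icc a b, HasDerivAt (F i) (F (i + 1) x) x) →
    ContinuousOn (F (k + 2)) (Icc a b) → (∀ x ∈ Icc a b, l ≤ |F (k + 2) x|) →
    (∀ x ∈ Icc a b, HasDerivAt A (A' x) x) → ContinuousOn A' (Icc a b) →
    (∀ x ∈ Icc a b, ‖A x‖ ≤ M) → (∀ x ∈ Icc a b, ‖A' x‖ ≤ M) →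
    ‖∫ x in a..b, Complex.exp (Complex.I * ((τ * F 0 x : ℝ) : ℂ)) * A x‖
      ≤ c * (τ * l) ^ (-(1 : ℝ) / (k + 2)) * (M * (1 + (b - a))) := by
  obtain ⟨c, hc, H⟩ := vdc_pos k
  refine ⟨c, hc, ?_⟩
  intro F A A' a b l τ M hab hl hτ hd hcont hlow hA hA'c hAM hA'M
  have hck : ContinuousOn (F 0) (Icc a b) :=
      fun x hx => (hd 0 (by omega) x hx).continuousAt.continuousWithinAt
  have hcase : (∀ x ∈ Icc a b, l ≤ F (k + 2) x) ∨ (∀ x ∈ Icc a b, l ≤ - F (k + 2) x) := by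
    by_contra hcon
    push Not at hcon
    obtain ⟨⟨x, hx1, hx2⟩, ⟨y, hy1, hy2⟩⟩ := hcon
    have hx3 := hlow x hx1
    have hy3 := hlow y hy1
    have hx4 : F (k + 2) x ≤ - l := by
      rcases abs_cases (F (k + 2) x) with ⟨h1, h2⟩ | ⟨h1, h2⟩ <;> linarith
    have hy4 : l ≤ F (k + 2) y := by
      rcases abs_cases (F (k + 2) y) with ⟨h1, h2⟩ | ⟨h1, h2⟩ <;> linarith
    have hcc : ContinuousOn (F (k + 2)) (uIcc x y) := hcont.mono
      (ordConnected_Icc.uIcc_subset hx1 hy1)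
    have h0 : (0 : ℝ) ∈ uIcc (F (k + 2) x) (F (k + 2) y) := by
      rw [mem_uIcc]; left; constructor <;> linarith
    obtain ⟨z, hz, hz0⟩ := intermediate_value_uIcc hcc h0
    have := hlow z ((ordConnected_Icc.uIcc_subset hx1 hy1) hz)
    rw [hz0, abs_zero] at this
    linarith
  set B := c * (τ * l) ^ (-(1 : ℝ) / (k + 2)) with hB
  have hB0 : 0 ≤ B := by positivity
  have hE : ∀ z ∈ Icc a b, ‖∫ x in a..z, Complex.exp (Complex.I * ((τ * F 0 x : ℝ) : ℂ))‖ ≤ B := by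
    intro z hz
    have hsub : Icc a z ⊆ Icc a b := Icc_subset_Icc le_rfl hz.2
    rcases hcase with hcase | hcase
    · exact H (fun i x => τ * F i x) a z (τ * l) hz.1 (by positivity)
        (fun i hi x hx => (hd i hi x (hsub hx)).const_mul τ)
        (continuousOn_const.mul (hcont.mono hsub))
        (fun x hx => by have := hcase x (hsub hx); gcongr)
    · rw [← cexp_int_neg]
      exact H (fun i x => - (τ * F i x)) a z (τ * l) hz.1 (by positivity)
        (fun i hi x hx => ((hd i hi x (hsub hx)).const_mul τ).neg)
        (continuousOn_const.mul (hcont.mono hsub)).neg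
        (fun x hx => by
          have := hcase x (hsub hx)
          have h2 := mul_le_mul_of_nonneg_left this hτ.le
          linarith)
  have hab' : uIcc a b = Icc a b := uIcc_of_le hab
  have hgc : ContinuousOn (fun x => Complex.exp (Complex.I * ((τ * F 0 x : ℝ) : ℂ))) (Icc a b) :=
    Complex.continuous_exp.comp_continuousOn ((continuousOn_const).mul
      (Complex.continuous_ofReal.comp_continuousOn (continuousOn_const.mul hck)))
  set g := fun x => Complex.exp (Complex.I * ((τ * F 0 x : ℝ) : ℂ)) with hg
  set E : ℝ → ℂ := fun z => ∫ x in a..z, g x with hEdef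
  have hEc : ContinuousOn E (uIcc a b) := by
    apply intervalIntegral.continuousOn_primitive_interval
    rw [hab']
    exact hgc.integrableOn_Icc
  have key := intervalIntegral.integral_deriv_mul_eq_sub_of_hasDeriv_right
    (u := E) (v := A) (u' := g) (v' := A') (a := a) (b := b)
    hEc (by rw [hab']; exact fun x hx => (hA x hx).continuousAt.continuousWithinAt)
    (by
      intro x hx
      rw [min_eq_left hab, max_eq_right hab] at hx
      have hx' : Icc a b ∈ nhds x := Icc_mem_nhds hx.1 hx.2
      apply HasDerivAt.hasDerivWithinAt
      apply intervalIntegral.integral_hasDerivAt_right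
      · apply ContinuousOn.intervalIntegrable
        rw [uIcc_of_le hx.1.le]
        exact hgc.mono (Icc_subset_Icc le_rfl hx.2.le)
      · exact (hgc.mono Ioo_subset_Icc_self).stronglyMeasurableAtFilter isOpen_Ioo x hx
      · exact hgc.continuousAt hx')
    (by
      intro x hx
      rw [min_eq_left hab, max_eq_right hab] at hx
      exact (hA x ⟨hx.1.le, hx.2.le⟩).hasDerivWithinAt)
    (by apply ContinuousOn.intervalIntegrable; rw [hab']; exact hgc)
    (by apply ContinuousOn.intervalIntegrable; rw [hab']; exact hA'c)
  have hAc : ContinuousOn A (Icc a b) := fun x hx => (hA x hx).continuousAt.continuousWithinAt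
  rw [intervalIntegral.integral_add
    (by apply ContinuousOn.intervalIntegrable; rw [hab']; exact hgc.mul hAc)
    (by apply ContinuousOn.intervalIntegrable; rw [hab'] at hEc ⊢; exact hEc.mul hA'c)] at key
  have hEa : E a = 0 := by simp [hEdef]
  rw [hEa, zero_mul, sub_zero] at key
  have key2 : ∫ x in a..b, g x * A x = E b * A b - ∫ x in a..b, E x * A' x := by
    rw [← key]; ring
  have hM : 0 ≤ M := (norm_nonneg _).trans (hAM a ⟨le_rfl, hab⟩)
  have h2 : ‖∫ x in a..b, E x * A' x‖ ≤ B * M * (b - a) := by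
    have := intervalIntegral.norm_integral_le_of_norm_le_const (a := a) (b := b)
      (f := fun x => E x * A' x) (C := B * M)
      (by
        intro x hx
        rw [uIoc_of_le hab] at hx
        have hx' : x ∈ Icc a b := ⟨hx.1.le, hx.2⟩
        rw [norm_mul]
        exact mul_le_mul (hE x hx') (hA'M x hx') (norm_nonneg _) hB0)
    rwa [abs_of_nonneg (by linarith)] at this
  have hb : b ∈ Icc a b := ⟨hab, le_rfl⟩
  have h3 : ‖E b * A b‖ ≤ B * M := by
    rw [norm_mul]
    exact mul_le_mul (hE b hb) (hAM b hb) (norm_nonneg _) hB0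
  rw [key2]
  calc _ ≤ ‖E b * A b‖ + ‖∫ x in a..b, E x * A' x‖ := norm_sub_le _ _
    _ ≤ B * M + B * M * (b - a) := add_le_add h3 h2
    _ = _ := by ring

lemma m_part (K Z R : ℝ → ℂ) (p q v τ r M : ℝ) (hpq : p ≤ q) (hτ : 0 < τ) (hr : 0 < r)
    (hlen : q - p ≤ 1)
    (hZ : ∀ m ∈ Icc p q, HasDerivAt Z (Complex.I * τ * (v - m) * K m + R m) m)
    (hK : ContinuousOn K (Icc p q)) (hR : ContinuousOn R (Icc p q))
    (hZM : ∀ m ∈ Icc p q, ‖Z m‖ ≤ M) (hRM : ∀ m ∈ Icc p q, ‖R m‖ ≤ M)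
    (hv : ∀ m ∈ Icc p q, r ≤ |m - v|) :
    ‖∫ m in p..q, K m‖ ≤ 5 * M / (τ * r) := by
  have hpq' : uIcc p q = Icc p q := uIcc_of_le hpq
  have hM : 0 ≤ M := (norm_nonneg _).trans (hZM p ⟨le_rfl, hpq⟩)
  have hne : ∀ m ∈ Icc p q, v - m ≠ 0 := by
    intro m hm h
    have := hv m hm
    rw [show m - v = 0 by linarith, abs_zero] at this
    linarith
  let ρ : ℝ → ℝ := fun m => (v - m)⁻¹
  let ρ' : ℝ → ℝ := fun m => 1 / (v - m) ^ 2
  have hρ : ∀ m ∈ Icc p q, HasDerivAt ρ (ρ' m) m := by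
    intro m hm
    have := ((hasDerivAt_id m).const_sub v).inv (hne m hm)
    refine this.congr_deriv ?_
    simp [ρ']
  have hρ'c : ContinuousOn ρ' (Icc p q) :=
    continuousOn_const.div ((continuousOn_const.sub continuousOn_id).pow 2)
      (fun x hx => pow_ne_zero 2 (hne x hx))
  have hρb : ∀ m ∈ Icc p q, |ρ m| ≤ 1 / r := by
    intro m hm
    simp only [ρ, abs_inv, one_div]
    apply inv_anti₀ hr
    rw [abs_sub_comm]; exact hv m hm
  let u : ℝ → ℂ := fun m => (-Complex.I / τ) * (ρ m : ℂ)
  let u' : ℝ → ℂ := fun m => (-Complex.I / τ) * (ρ' m : ℂ)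
  have hu : ∀ x ∈ Icc p q, HasDerivAt u (u' x) x := fun x hx =>
    ((hρ x hx).ofReal_comp).const_mul _
  have huc : ContinuousOn u (Icc p q) := fun x hx => (hu x hx).continuousAt.continuousWithinAt
  have hu'c : ContinuousOn u' (Icc p q) :=
    (continuousOn_const).mul (Complex.continuous_ofReal.comp_continuousOn hρ'c)
  have hnc : ‖(-Complex.I / τ : ℂ)‖ = 1 / τ := by
    rw [norm_div, norm_neg, Complex.norm_I, Complex.norm_real, Real.norm_eq_abs, abs_of_pos hτ]
  have hun : ∀ x ∈ Icc p q, ‖u x‖ ≤ 1 / (τ * r) := by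
    intro x hx
    simp only [u]
    rw [norm_mul, hnc, Complex.norm_real, Real.norm_eq_abs]
    calc 1 / τ * |ρ x| ≤ 1 / τ * (1 / r) := by gcongr; exact hρb x hx
      _ = _ := by field_simp
  let Z' : ℝ → ℂ := fun m => Complex.I * τ * (v - m) * K m + R m
  have hZ'c : ContinuousOn Z' (Icc p q) := by
    apply ContinuousOn.add _ hR
    apply ContinuousOn.mul _ hK
    apply Continuous.continuousOn
    fun_prop
  have hZc : ContinuousOn Z (Icc p q) := fun x hx => (hZ x hx).continuousAt.continuousWithinAt
  have ii : ∀ f : ℝ → ℂ, ContinuousOn f (Icc p q) → IntervalIntegrable f volume p q := by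
    intro f hf
    apply ContinuousOn.intervalIntegrable
    rwa [hpq']
  have key := intervalIntegral.integral_mul_deriv_eq_deriv_mul (u := u) (v := Z) (u' := u') (v' := Z')
    (a := p) (b := q) (by rw [hpq']; exact hu) (by rw [hpq']; exact hZ) (ii _ hu'c) (ii _ hZ'c)
  have e : ∫ m in p..q, K m = (∫ m in p..q, u m * Z' m) - ∫ m in p..q, u m * R m := by
    rw [← intervalIntegral.integral_sub (ii (fun m => u m * Z' m) (huc.mul hZ'c))
      (ii (fun m => u m * R m) (huc.mul hR))]
    apply intervalIntegral.integral_congr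
    intro x hx
    rw [hpq'] at hx
    have h1 : ((v : ℂ) - x) ≠ 0 := by exact_mod_cast hne x hx
    have h2 : (τ : ℂ) ≠ 0 := by exact_mod_cast hτ.ne'
    simp only [u, Z', ρ]
    push_cast
    field_simp
    ring_nf
    simp
    ring
  have hp : p ∈ Icc p q := ⟨le_rfl, hpq⟩
  have hq : q ∈ Icc p q := ⟨hpq, le_rfl⟩
  set S := M / (τ * r) with hS
  have b1 : ∀ x ∈ Icc p q, ‖u x * Z x‖ ≤ S := by
    intro x hx
    rw [norm_mul, hS]
    calc _ ≤ 1 / (τ * r) * M := mul_le_mul (hun x hx) (hZM x hx) (norm_nonneg _) (by positivity)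
      _ = _ := by ring
  have b2 : ‖∫ m in p..q, u m * R m‖ ≤ S := by
    have := intervalIntegral.norm_integral_le_of_norm_le_const (a := p) (b := q)
      (f := fun x => u x * R x) (C := S)
      (by
        intro x hx
        rw [uIoc_of_le hpq] at hx
        have hx' : x ∈ Icc p q := ⟨hx.1.le, hx.2⟩
        rw [norm_mul, hS]
        calc _ ≤ 1 / (τ * r) * M := mul_le_mul (hun x hx') (hRM x hx') (norm_nonneg _) (by positivity)
          _ = _ := by ring)
    rw [abs_of_nonneg (by linarith)] at this
    have hS0 : 0 ≤ S := by positivity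
    nlinarith
  have b3 : ‖∫ m in p..q, u' m * Z m‖ ≤ 2 * S := by
    have h2 : ‖∫ x in p..q, u' x * Z x‖ ≤ ∫ x in p..q, (M / τ) * ρ' x := by
      apply intervalIntegral.norm_integral_le_of_norm_le hpq
      · refine Filter.Eventually.of_forall fun x hx => ?_
        have hx' : x ∈ Icc p q := ⟨hx.1.le, hx.2⟩
        simp only [u']
        rw [norm_mul, norm_mul, hnc, Complex.norm_real, Real.norm_eq_abs,
          abs_of_nonneg (by simp only [ρ']; positivity)]
        have h0 : 0 ≤ ρ' x := by simp only [ρ']; positivity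
        calc 1 / τ * ρ' x * ‖Z x‖ ≤ 1 / τ * ρ' x * M := by gcongr; exact hZM x hx'
          _ = _ := by ring
      · apply ContinuousOn.intervalIntegrable
        rw [hpq']; exact continuousOn_const.mul hρ'c
    have h3 : ∫ x in p..q, (M / τ) * ρ' x = (M / τ) * (ρ q - ρ p) := by
      rw [intervalIntegral.integral_const_mul, intervalIntegral.integral_eq_sub_of_hasDerivAt
        (f := ρ)]
      · rw [hpq']; exact hρ
      · apply ContinuousOn.intervalIntegrable
        rw [hpq']; exact hρ'c
    rw [h3] at h2
    have h4 := hρb p hp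
    have h5 := hρb q hq
    have h6 := le_abs_self (ρ q)
    have h7 := neg_abs_le (ρ p)
    calc _ ≤ _ := h2
      _ ≤ (M / τ) * (2 * (1 / r)) := by gcongr; linarith
      _ = _ := by rw [hS]; field_simp
  rw [e, key]
  calc _ ≤ ‖u q * Z q - u p * Z p - ∫ m in p..q, u' m * Z m‖ + ‖∫ m in p..q, u m * R m‖ :=
        norm_sub_le _ _
    _ ≤ ‖u q * Z q - u p * Z p‖ + ‖∫ m in p..q, u' m * Z m‖ + ‖∫ m in p..q, u m * R m‖ := by
        gcongr; exact norm_sub_le _ _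
    _ ≤ ‖u q * Z q‖ + ‖u p * Z p‖ + ‖∫ m in p..q, u' m * Z m‖ + ‖∫ m in p..q, u m * R m‖ := by
        gcongr; exact norm_sub_le _ _
    _ ≤ S + S + 2 * S + S := by gcongr; exacts [b1 q hq, b1 p hp]
    _ = _ := by rw [hS]; ring

lemma m_main (K Z R : ℝ → ℂ) (p q v τ M : ℝ) (hpq : p ≤ q) (hτ : 1 ≤ τ)
    (hlen : q - p ≤ 1)
    (hZ : ∀ m ∈ Icc p q, HasDerivAt Z (Complex.I * τ * (v - m) * K m + R m) m)
    (hK : ContinuousOn K (Icc p q)) (hR : ContinuousOn R (Icc p q))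
    (hKM : ∀ m ∈ Icc p q, ‖K m‖ ≤ M)
    (hZM : ∀ m ∈ Icc p q, ‖Z m‖ ≤ M) (hRM : ∀ m ∈ Icc p q, ‖R m‖ ≤ M) :
    ‖∫ m in p..q, K m‖ ≤ 12 * M * τ ^ (-(1 : ℝ) / 2) := by
  have hτ0 : 0 < τ := by linarith
  have hM : 0 ≤ M := (norm_nonneg _).trans (hZM p ⟨le_rfl, hpq⟩)
  set r := τ ^ (-(1 : ℝ) / 2) with hr
  have hr0 : 0 < r := rpow_pos_of_pos hτ0 _
  have hτr : τ * r * r = 1 := by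
    rw [hr, mul_assoc, ← rpow_add hτ0]
    norm_num [rpow_neg_one, hτ0.ne']
  have := split_lemma K p q v r M (5 * M * r) hpq hr0.le hK hKM (by positivity) (by
    intro p' q' h1 h2 h3 h4
    have hsub : Icc p' q' ⊆ Icc p q := Icc_subset_Icc h1 h3
    have := m_part K Z R p' q' v τ r M h2 hτ0 hr0 (by linarith) (fun m hm => hZ m (hsub hm))
      (hK.mono hsub) (hR.mono hsub) (fun m hm => hZM m (hsub hm)) (fun m hm => hRM m (hsub hm)) h4
    refine this.trans (le_of_eq ?_)
    rw [div_eq_iff (by positivity)]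
    linear_combination (-5 * M) * hτr)
  calc _ ≤ _ := this
    _ = _ := by ring

lemma cont_param (f : ℝ → ℝ → ℂ) (p q r s : ℝ) (hrs : r ≤ s)
    (hf : ContinuousOn (fun z : ℝ × ℝ => f z.1 z.2) (Icc p q ×ˢ Icc r s)) :
    ContinuousOn (fun m => ∫ y in r..s, f m y) (Icc p q) := by
  have hcomp : IsCompact (Icc p q ×ˢ Icc r s) := isCompact_Icc.prod isCompact_Icc
  obtain ⟨C, hC⟩ := hcomp.exists_bound_of_continuousOn hf
  intro m hm
  apply intervalIntegral.continuousWithinAt_of_dominated_interval (bound := fun _ => C)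
  · filter_upwards [self_mem_nhdsWithin] with m' hm'
    rw [uIoc_of_le hrs]
    have : ContinuousOn (fun y => f m' y) (Icc r s) :=
      hf.comp (f := fun y => (m', y)) (by fun_prop) (fun y hy => ⟨hm', hy⟩)
    exact (this.mono Ioc_subset_Icc_self).aestronglyMeasurable measurableSet_Ioc
  · filter_upwards [self_mem_nhdsWithin] with m' hm'
    refine Filter.Eventually.of_forall fun y hy => ?_
    rw [uIoc_of_le hrs] at hy
    exact hC (m', y) ⟨hm', Ioc_subset_Icc_self hy⟩
  · simp
  · refine Filter.Eventually.of_forall fun y hy => ?_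
    rw [uIoc_of_le hrs] at hy
    have : ContinuousOn (fun m' => f m' y) (Icc p q) :=
      hf.comp (f := fun m' => (m', y)) (by fun_prop) (fun m' hm' => ⟨hm', Ioc_subset_Icc_self hy⟩)
    exact this m hm

noncomputable def Dx (f : ℝ × ℝ × ℝ → ℝ) (p : ℝ × ℝ × ℝ) : ℝ := fderiv ℝ f p (0, 1, 0)
noncomputable def Dy (f : ℝ × ℝ × ℝ → ℝ) (p : ℝ × ℝ × ℝ) : ℝ := fderiv ℝ f p (0, 0, 1)

lemma contDiffOn_Dx {f : ℝ × ℝ × ℝ → ℝ} {V : Set (ℝ × ℝ × ℝ)} (hV : IsOpen V)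
    (hf : ContDiffOn ℝ ∞ f V) : ContDiffOn ℝ ∞ (Dx f) V :=
  (hf.fderiv_of_isOpen hV (m := ∞) (by simp)).clm_apply contDiffOn_const

lemma contDiffOn_Dy {f : ℝ × ℝ × ℝ → ℝ} {V : Set (ℝ × ℝ × ℝ)} (hV : IsOpen V)
    (hf : ContDiffOn ℝ ∞ f V) : ContDiffOn ℝ ∞ (Dy f) V :=
  (hf.fderiv_of_isOpen hV (m := ∞) (by simp)).clm_apply contDiffOn_const

lemma contDiffOn_Dy_iter {f : ℝ × ℝ × ℝ → ℝ} {V : Set (ℝ × ℝ × ℝ)} (hV : IsOpen V)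
    (hf : ContDiffOn ℝ ∞ f V) (i : ℕ) : ContDiffOn ℝ ∞ (Dy^[i] f) V := by
  induction i with
  | zero => exact hf
  | succ i ih => rw [Function.iterate_succ_apply']; exact contDiffOn_Dy hV ih

lemma diffAt_of_on {f : ℝ × ℝ × ℝ → ℝ} {V : Set (ℝ × ℝ × ℝ)} (hV : IsOpen V)
    (hf : ContDiffOn ℝ ∞ f V) {p : ℝ × ℝ × ℝ} (hp : p ∈ V) : DifferentiableAt ℝ f p :=
  (hf.contDiffAt (hV.mem_nhds hp)).differentiableAt (by simp)

lemma hasDerivAt_x {f : ℝ × ℝ × ℝ → ℝ} {n x y : ℝ} (hf : DifferentiableAt ℝ f (n, x, y)) :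
    HasDerivAt (fun x => f (n, x, y)) (Dx f (n, x, y)) x := by
  have h : HasDerivAt (fun x : ℝ => ((n, x, y) : ℝ × ℝ × ℝ)) (0, 1, 0) x :=
    (hasDerivAt_const x n).prodMk ((hasDerivAt_id x).prodMk (hasDerivAt_const x y))
  exact hf.hasFDerivAt.comp_hasDerivAt x h

lemma hasDerivAt_y {f : ℝ × ℝ × ℝ → ℝ} {n x y : ℝ} (hf : DifferentiableAt ℝ f (n, x, y)) :
    HasDerivAt (fun y => f (n, x, y)) (Dy f (n, x, y)) y := by
  have h : HasDerivAt (fun y : ℝ => ((n, x, y) : ℝ × ℝ × ℝ)) (0, 0, 1) y :=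
    (hasDerivAt_const y n).prodMk ((hasDerivAt_const y x).prodMk (hasDerivAt_id y))
  exact hf.hasFDerivAt.comp_hasDerivAt y h

lemma mem_box {n m y n₀ m₀ y₀ δ : ℝ} : ((n, m, y) : ℝ × ℝ × ℝ) ∈
    Metric.closedBall ((n₀, m₀, y₀) : ℝ × ℝ × ℝ) δ ↔
    |n - n₀| ≤ δ ∧ |m - m₀| ≤ δ ∧ |y - y₀| ≤ δ := by
  simp [Prod.dist_eq, Real.dist_eq]

/-- the model phase -/
noncomputable def Psi (G : ℝ × ℝ × ℝ → ℝ) (v₁ v₂ n m y : ℝ) : ℝ :=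
  v₂ * y + (v₁ - m) * Dx G (n, m, y) + G (n, m, y)

noncomputable def ePsi (G : ℝ × ℝ × ℝ → ℝ) (τ v₁ v₂ n m y : ℝ) : ℂ :=
  Complex.exp (Complex.I * ((τ * Psi G v₁ v₂ n m y : ℝ) : ℂ))

lemma norm_ePsi (G : ℝ × ℝ × ℝ → ℝ) (τ v₁ v₂ n m y : ℝ) : ‖ePsi G τ v₁ v₂ n m y‖ = 1 := by
  rw [ePsi, mul_comm, Complex.norm_exp_ofReal_mul_I]

lemma bdd_box {f : ℝ × ℝ × ℝ → ℝ} {V : Set (ℝ × ℝ × ℝ)} (hf : ContDiffOn ℝ ∞ f V)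
    {q₀ : ℝ × ℝ × ℝ} {δ : ℝ} (hB : Metric.closedBall q₀ δ ⊆ V) :
    ∃ M ≥ 0, ∀ q ∈ Metric.closedBall q₀ δ, |f q| ≤ M := by
  obtain ⟨C, hC⟩ := (isCompact_closedBall q₀ δ).exists_bound_of_continuousOn
    (hf.continuousOn.mono hB)
  exact ⟨max C 0, le_max_right _ _, fun q hq => (hC q hq).trans (le_max_left _ _)⟩

/-- the inner bound in the `y` direction -/
lemma inner_bound (G : ℝ × ℝ × ℝ → ℝ) (V : Set (ℝ × ℝ × ℝ)) (hV : IsOpen V)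
    (hG : ContDiffOn ℝ ∞ G V) (n₀ m₀ y₀ δ : ℝ) (hδ : 0 < δ)
    (hB : Metric.closedBall ((n₀, m₀, y₀) : ℝ × ℝ × ℝ) δ ⊆ V) (k : ℕ) (hk : k ≤ 2)
    (l : ℝ) (hl : 0 < l)
    (A : ℝ × ℝ × ℝ → ℝ) (hA : ContDiffOn ℝ ∞ A V) :
    ∃ C ≥ 0, ∀ n m r s v₁ v₂ τ : ℝ, |n - n₀| ≤ δ → |m - m₀| ≤ δ → y₀ - δ ≤ r → r ≤ s → s ≤ y₀ + δ →
      1 ≤ τ →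
      ‖∫ y in r..s, ePsi G τ v₁ v₂ n m y * (A (n, m, y) : ℂ)‖ ≤ C ∧
      ((∀ y ∈ Icc r s, l ≤ |Dy^[k + 2] G (n, m, y) + (v₁ - m) * Dy^[k + 2] (Dx G) (n, m, y)|) →
      ‖∫ y in r..s, ePsi G τ v₁ v₂ n m y * (A (n, m, y) : ℂ)‖ ≤ C * τ ^ (-(1 : ℝ) / 4)) := by
  obtain ⟨c, hc, H⟩ := vdc_amp k
  obtain ⟨M₁, hM₁, hA₁⟩ := bdd_box hA hB
  obtain ⟨M₂, hM₂, hA₂⟩ := bdd_box (contDiffOn_Dy hV hA) hB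
  set M := max M₁ M₂
  have hM : 0 ≤ M := hM₁.trans (le_max_left _ _)
  set C := c * l ^ (-(1 : ℝ) / (k + 2)) * (M * (1 + 2 * δ)) + M * (2 * δ) with hC
  refine ⟨C, by positivity, ?_⟩
  intro n m r s v₁ v₂ τ hn hm hr hrs hs hτ
  have hτ0 : 0 < τ := by linarith
  have hmem : ∀ y ∈ Icc r s, ((n, m, y) : ℝ × ℝ × ℝ) ∈
      Metric.closedBall ((n₀, m₀, y₀) : ℝ × ℝ × ℝ) δ := by
    intro y hy
    rw [mem_box]
    refine ⟨hn, hm, abs_le.2 ⟨by linarith [hy.1], by linarith [hy.2]⟩⟩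
  constructor
  · have := intervalIntegral.norm_integral_le_of_norm_le_const (a := r) (b := s)
      (f := fun y => ePsi G τ v₁ v₂ n m y * (A (n, m, y) : ℂ)) (C := M)
      (by
        intro x hx
        rw [uIoc_of_le hrs] at hx
        rw [norm_mul, norm_ePsi, one_mul, Complex.norm_real]
        exact (hA₁ _ (hmem x ⟨hx.1.le, hx.2⟩)).trans (le_max_left _ _))
    rw [abs_of_nonneg (by linarith)] at this
    refine this.trans ?_
    have h1 : M * (s - r) ≤ M * (2 * δ) := by gcongr; linarith
    have h2 : 0 ≤ c * l ^ (-(1 : ℝ) / (k + 2)) * (M * (1 + 2 * δ)) := by positivity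
    linarith
  · intro hlow
    have hdG : ∀ i, ∀ y ∈ Icc r s, HasDerivAt (fun y => Dy^[i] G (n, m, y))
        (Dy^[i + 1] G (n, m, y)) y := by
      intro i y hy
      rw [Function.iterate_succ_apply']
      exact hasDerivAt_y (diffAt_of_on hV (contDiffOn_Dy_iter hV hG i) (hB (hmem y hy)))
    have hGx := contDiffOn_Dx hV hG
    have hdGx : ∀ i, ∀ y ∈ Icc r s, HasDerivAt (fun y => Dy^[i] (Dx G) (n, m, y))
        (Dy^[i + 1] (Dx G) (n, m, y)) y := by
      intro i y hy
      rw [Function.iterate_succ_apply']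
      exact hasDerivAt_y (diffAt_of_on hV (contDiffOn_Dy_iter hV hGx i) (hB (hmem y hy)))
    let e : ℕ → ℝ → ℝ := fun i y => if i = 0 then v₂ * y else if i = 1 then v₂ else 0
    have he : ∀ i y, HasDerivAt (e i) (e (i + 1) y) y := by
      intro i y
      match i with
      | 0 => simpa [e] using (hasDerivAt_id y).const_mul v₂
      | 1 => simpa [e] using (hasDerivAt_const y v₂)
      | (j + 2) => simpa [e] using (hasDerivAt_const y (0 : ℝ))
    let F : ℕ → ℝ → ℝ := fun i y =>
      e i y + (v₁ - m) * Dy^[i] (Dx G) (n, m, y) + Dy^[i] G (n, m, y)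
    have hF : ∀ i, ∀ y ∈ Icc r s, HasDerivAt (F i) (F (i + 1) y) y := by
      intro i y hy
      exact ((he i y).add ((hdGx i y hy).const_mul _)).add (hdG i y hy)
    have := H F (fun y => (A (n, m, y) : ℂ)) (fun y => (Dy A (n, m, y) : ℂ)) r s l τ M hrs hl hτ0
      (fun i _ => hF i) (fun y hy => (hF _ y hy).continuousAt.continuousWithinAt)
      (by
        intro y hy
        have := hlow y hy
        simp only [F, e]
        rw [if_neg (by omega), if_neg (by omega)]
        convert this using 2
        ring)
      (fun y hy => (hasDerivAt_y (diffAt_of_on hV hA (hB (hmem y hy)))).ofReal_comp)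
      (by
        intro y hy
        have h1 := diffAt_of_on hV (contDiffOn_Dy hV hA) (hB (hmem y hy))
        exact ((hasDerivAt_y h1).ofReal_comp).continuousAt.continuousWithinAt)
      (by
        intro y hy
        rw [Complex.norm_real]
        exact (hA₁ _ (hmem y hy)).trans (le_max_left _ _))
      (by
        intro y hy
        rw [Complex.norm_real]
        exact (hA₂ _ (hmem y hy)).trans (le_max_right _ _))
    have e0 : ∀ y, F 0 y = Psi G v₁ v₂ n m y := by
      intro y
      simp [F, e, Psi]
    simp only [e0] at this
    have hτ4 : τ ^ (-(1 : ℝ) / (k + 2)) ≤ τ ^ (-(1 : ℝ) / 4) := by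
      apply rpow_le_rpow_of_exponent_le hτ
      have hk' : (k : ℝ) ≤ 2 := by exact_mod_cast hk
      rw [neg_div, neg_div, neg_le_neg_iff]
      apply one_div_le_one_div_of_le (by positivity)
      linarith
    refine this.trans ?_
    rw [mul_rpow hτ0.le hl.le]
    have hlp : 0 ≤ l ^ (-(1 : ℝ) / (k + 2)) := by positivity
    calc c * (τ ^ (-(1 : ℝ) / (k + 2)) * l ^ (-(1 : ℝ) / (k + 2))) * (M * (1 + (s - r)))
        ≤ c * (τ ^ (-(1 : ℝ) / 4) * l ^ (-(1 : ℝ) / (k + 2))) * (M * (1 + 2 * δ)) := by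
          gcongr; linarith
      _ = (c * l ^ (-(1 : ℝ) / (k + 2)) * (M * (1 + 2 * δ))) * τ ^ (-(1 : ℝ) / 4) := by ring
      _ ≤ C * τ ^ (-(1 : ℝ) / 4) := by
          gcongr
          have : 0 ≤ M * (2 * δ) := by positivity
          linarith

lemma ePsi_hasDerivAt_m (G : ℝ × ℝ × ℝ → ℝ) (V : Set (ℝ × ℝ × ℝ)) (hV : IsOpen V)
    (hG : ContDiffOn ℝ ∞ G V) (b : ℝ × ℝ × ℝ → ℝ) (hb : ContDiffOn ℝ ∞ b V)
    (τ v₁ v₂ n m y : ℝ) (h : (n, m, y) ∈ V) :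
    HasDerivAt (fun m => ePsi G τ v₁ v₂ n m y * (b (n, m, y) : ℂ))
      (Complex.I * τ * (v₁ - m) *
        (ePsi G τ v₁ v₂ n m y * ((b (n, m, y) * Dx (Dx G) (n, m, y) : ℝ) : ℂ))
        + ePsi G τ v₁ v₂ n m y * (Dx b (n, m, y) : ℂ)) m := by
  have h1 : HasDerivAt (fun m => Psi G v₁ v₂ n m y) ((v₁ - m) * Dx (Dx G) (n, m, y)) m := by
    have a1 := hasDerivAt_x (diffAt_of_on hV hG h)
    have a2 := hasDerivAt_x (diffAt_of_on hV (contDiffOn_Dx hV hG) h)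
    have a3 := (((hasDerivAt_id m).const_sub v₁).mul a2)
    have a4 := ((hasDerivAt_const m (v₂ * y)).add a3).add a1
    refine a4.congr_deriv ?_
    simp
  have h2 := hasDerivAt_x (diffAt_of_on hV hb h)
  have h3 := (((h1.const_mul τ).ofReal_comp).const_mul Complex.I).cexp.mul h2.ofReal_comp
  refine h3.congr_deriv ?_
  simp only [ePsi]
  push_cast
  ring

lemma ePsi_cont (G : ℝ × ℝ × ℝ → ℝ) (V : Set (ℝ × ℝ × ℝ)) (hV : IsOpen V)
    (hG : ContDiffOn ℝ ∞ G V) (A : ℝ × ℝ × ℝ → ℝ) (hA : ContDiffOn ℝ ∞ A V) (S : Set (ℝ × ℝ))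
    (τ v₁ v₂ n : ℝ) (h : ∀ z ∈ S, (n, z) ∈ V) :
    ContinuousOn (fun z : ℝ × ℝ => ePsi G τ v₁ v₂ n z.1 z.2 * (A (n, z.1, z.2) : ℂ)) S := by
  have c1 : ∀ f : ℝ × ℝ × ℝ → ℝ, ContDiffOn ℝ ∞ f V →
      ContinuousOn (fun z : ℝ × ℝ => f (n, z.1, z.2)) S := by
    intro f hf
    exact hf.continuousOn.comp (f := fun z : ℝ × ℝ => (n, z.1, z.2)) (by fun_prop) h
  have h1 := c1 _ hG
  have h2 := c1 _ (contDiffOn_Dx hV hG)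
  have h3 := c1 _ hA
  unfold ePsi Psi
  apply ContinuousOn.mul
  · apply Complex.continuous_exp.comp_continuousOn
    apply continuousOn_const.mul
    apply Complex.continuous_ofReal.comp_continuousOn
    apply continuousOn_const.mul
    apply ContinuousOn.add _ h1
    apply ContinuousOn.add (by fun_prop)
    exact ContinuousOn.mul (by fun_prop) h2
  · exact Complex.continuous_ofReal.comp_continuousOn h3

lemma Z_deriv (G : ℝ × ℝ × ℝ → ℝ) (V : Set (ℝ × ℝ × ℝ)) (hV : IsOpen V)
    (hG : ContDiffOn ℝ ∞ G V) (b : ℝ × ℝ × ℝ → ℝ) (hb : ContDiffOn ℝ ∞ b V)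
    (n₀ m₀ y₀ δ : ℝ) (hδ : 0 < δ)
    (hB : Metric.closedBall ((n₀, m₀, y₀) : ℝ × ℝ × ℝ) (2 * δ) ⊆ V)
    (n m r s v₁ v₂ τ : ℝ) (hn : |n - n₀| ≤ δ) (hm : |m - m₀| ≤ δ) (hr : y₀ - δ ≤ r) (hrs : r ≤ s)
    (hs : s ≤ y₀ + δ) :
    HasDerivAt (fun m => ∫ y in r..s, ePsi G τ v₁ v₂ n m y * (b (n, m, y) : ℂ))
      (Complex.I * τ * (v₁ - m) * (∫ y in r..s,
        ePsi G τ v₁ v₂ n m y * ((b (n, m, y) * Dx (Dx G) (n, m, y) : ℝ) : ℂ))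
        + ∫ y in r..s, ePsi G τ v₁ v₂ n m y * (Dx b (n, m, y) : ℂ)) m := by
  have hmem : ∀ z ∈ Icc (m₀ - 2 * δ) (m₀ + 2 * δ) ×ˢ Icc r s, ((n, z) : ℝ × ℝ × ℝ) ∈ V := by
    rintro ⟨m', y⟩ ⟨hm', hy⟩
    apply hB
    rw [mem_box]
    simp only at hm' hy
    refine ⟨by linarith, abs_le.2 ⟨by linarith [hm'.1], by linarith [hm'.2]⟩,
      abs_le.2 ⟨by linarith [hy.1], by linarith [hy.2]⟩⟩
  have hbG : ContDiffOn ℝ ∞ (fun q => b q * Dx (Dx G) q) V :=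
    hb.mul (contDiffOn_Dx hV (contDiffOn_Dx hV hG))
  have c0 := ePsi_cont G V hV hG b hb _ τ v₁ v₂ n hmem
  have c1 := ePsi_cont G V hV hG _ hbG _ τ v₁ v₂ n hmem
  have c2 := ePsi_cont G V hV hG _ (contDiffOn_Dx hV hb) _ τ v₁ v₂ n hmem
  let D : ℝ → ℝ → ℂ := fun m y => (Complex.I * τ * (v₁ - m) *
        (ePsi G τ v₁ v₂ n m y * ((b (n, m, y) * Dx (Dx G) (n, m, y) : ℝ) : ℂ))
        + ePsi G τ v₁ v₂ n m y * (Dx b (n, m, y) : ℂ))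
  have cD : ContinuousOn (fun z : ℝ × ℝ => D z.1 z.2)
      (Icc (m₀ - 2 * δ) (m₀ + 2 * δ) ×ˢ Icc r s) := by
    apply ContinuousOn.add _ c2
    apply ContinuousOn.mul _ c1
    apply Continuous.continuousOn
    fun_prop
  obtain ⟨C, hC⟩ := (isCompact_Icc.prod isCompact_Icc).exists_bound_of_continuousOn cD
  have hmI : m ∈ Icc (m₀ - 2 * δ) (m₀ + 2 * δ) := by
    rw [abs_le] at hm; constructor <;> linarith [hm.1, hm.2]
  have slice : ∀ f : ℝ → ℝ → ℂ, ContinuousOn (fun z : ℝ × ℝ => f z.1 z.2)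
      (Icc (m₀ - 2 * δ) (m₀ + 2 * δ) ×ˢ Icc r s) → ∀ m' ∈ Icc (m₀ - 2 * δ) (m₀ + 2 * δ),
      ContinuousOn (f m') (Icc r s) := by
    intro f hf m' hm'
    exact hf.comp (f := fun y => (m', y)) (by fun_prop) (fun y hy => ⟨hm', hy⟩)
  have hball : Metric.ball m δ ⊆ Icc (m₀ - 2 * δ) (m₀ + 2 * δ) := by
    intro m' hm'
    rw [Metric.mem_ball, Real.dist_eq, abs_lt] at hm'
    rw [abs_le] at hm
    constructor <;> linarith [hm.1, hm.2, hm'.1, hm'.2]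
  have hrs' : uIcc r s = Icc r s := uIcc_of_le hrs
  have key := (intervalIntegral.hasDerivAt_integral_of_dominated_loc_of_deriv_le
    (F := fun m y => ePsi G τ v₁ v₂ n m y * (b (n, m, y) : ℂ)) (F' := D) (x₀ := m)
    (s := Metric.ball m δ) (a := r) (b := s) (μ := volume)
    (bound := fun _ => C) (Metric.ball_mem_nhds m hδ)
    (by
      filter_upwards [Metric.ball_mem_nhds m hδ] with m' hm'
      rw [uIoc_of_le hrs]
      exact ((slice (fun m y => ePsi G τ v₁ v₂ n m y * (b (n, m, y) : ℂ)) c0 m' (hball hm')).mono Ioc_subset_Icc_self).aestronglyMeasurable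
        measurableSet_Ioc)
    (by
      apply ContinuousOn.intervalIntegrable
      rw [hrs']
      exact slice (fun m y => ePsi G τ v₁ v₂ n m y * (b (n, m, y) : ℂ)) c0 m hmI)
    (by
      rw [uIoc_of_le hrs]
      exact ((slice D cD m hmI).mono Ioc_subset_Icc_self).aestronglyMeasurable
        measurableSet_Ioc)
    (by
      refine Filter.Eventually.of_forall fun y hy m' hm' => ?_
      rw [uIoc_of_le hrs] at hy
      exact hC (m', y) ⟨hball hm', Ioc_subset_Icc_self hy⟩)
    (by simp)
    (by
      refine Filter.Eventually.of_forall fun y hy m' hm' => ?_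
      rw [uIoc_of_le hrs] at hy
      exact ePsi_hasDerivAt_m G V hV hG b hb τ v₁ v₂ n m' y
        (hmem (m', y) ⟨hball hm', Ioc_subset_Icc_self hy⟩))).2
  refine key.congr_deriv ?_
  simp only [D]
  rw [intervalIntegral.integral_add, intervalIntegral.integral_const_mul]
  · apply IntervalIntegrable.const_mul
    apply ContinuousOn.intervalIntegrable
    rw [hrs']
    exact slice (fun m y => ePsi G τ v₁ v₂ n m y * ((b (n, m, y) * Dx (Dx G) (n, m, y) : ℝ) : ℂ)) c1 m hmI
  · apply ContinuousOn.intervalIntegrable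
    rw [hrs']
    exact slice (fun m y => ePsi G τ v₁ v₂ n m y * (Dx b (n, m, y) : ℂ)) c2 m hmI

theorem model (G : ℝ × ℝ × ℝ → ℝ) (V : Set (ℝ × ℝ × ℝ)) (hV : IsOpen V)
    (hG : ContDiffOn ℝ ∞ G V) (n₀ m₀ y₀ : ℝ) (h₀ : (n₀, m₀, y₀) ∈ V) (k : ℕ) (hk : k ≤ 2)
    (hne : Dy^[k + 2] G (n₀, m₀, y₀) ≠ 0) :
    ∃ δ > 0, Metric.closedBall ((n₀, m₀, y₀) : ℝ × ℝ × ℝ) δ ⊆ V ∧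
      ∀ b : ℝ × ℝ × ℝ → ℝ, ContDiffOn ℝ ∞ b V → ∃ C ≥ 0,
        ∀ n p q r s v₁ v₂ τ : ℝ, |n - n₀| ≤ δ → m₀ - δ ≤ p → p ≤ q → q ≤ m₀ + δ →
        y₀ - δ ≤ r → r ≤ s → s ≤ y₀ + δ → 1 ≤ τ →
        ‖∫ m in p..q, ∫ y in r..s, ePsi G τ v₁ v₂ n m y *
          ((b (n, m, y) * Dx (Dx G) (n, m, y) : ℝ) : ℂ)‖ ≤ C * τ ^ (-(3 : ℝ) / 4) := by
  set q₀ : ℝ × ℝ × ℝ := (n₀, m₀, y₀) with hq₀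
  set P := Dy^[k + 2] G with hP
  set Q := Dy^[k + 2] (Dx G) with hQ
  have hPc : ContDiffOn ℝ ∞ P V := contDiffOn_Dy_iter hV hG _
  have hQc : ContDiffOn ℝ ∞ Q V := contDiffOn_Dy_iter hV (contDiffOn_Dx hV hG) _
  set c := |P q₀| with hc
  have hc0 : 0 < c := abs_pos.2 hne
  have ev : ∀ᶠ z in 𝓝 q₀, z ∈ V ∧ c / 2 < |P z| ∧ |Q z| < |Q q₀| + 1 := by
    have e1 := hV.mem_nhds h₀
    have e2 : ∀ᶠ z in 𝓝 q₀, c / 2 < |P z| :=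
      ((hPc.continuousOn.continuousAt e1).abs).eventually_const_lt (by
        change c / 2 < c; linarith)
    have e3 : ∀ᶠ z in 𝓝 q₀, |Q z| < |Q q₀| + 1 :=
      ((hQc.continuousOn.continuousAt e1).abs).eventually_lt_const (by linarith)
    filter_upwards [e1, e2, e3] with z h1 h2 h3 using ⟨h1, h2, h3⟩
  obtain ⟨δ₁, hδ₁, hball⟩ := Metric.nhds_basis_closedBall.mem_iff.1 ev
  set MQ := |Q q₀| + 1 with hMQ
  have hMQ0 : 0 < MQ := by positivity
  set ε := c / (4 * MQ) with hε
  have hε0 : 0 < ε := by positivity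
  set δ := min (δ₁ / 2) (min (ε / 4) (1 / 2)) with hδ
  have hδ0 : 0 < δ := by positivity
  have hd1 : 2 * δ ≤ δ₁ := by have : δ ≤ δ₁ / 2 := min_le_left _ _; linarith
  have hd2 : δ ≤ ε / 4 := (min_le_right _ _).trans (min_le_left _ _)
  have hd3 : δ ≤ 1 / 2 := (min_le_right _ _).trans (min_le_right _ _)
  have hB2 : Metric.closedBall q₀ (2 * δ) ⊆ V := fun z hz =>
    (hball (Metric.closedBall_subset_closedBall hd1 hz)).1
  have hB1 : Metric.closedBall q₀ δ ⊆ V := fun z hz =>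
    hB2 (Metric.closedBall_subset_closedBall (by linarith) hz)
  refine ⟨δ, hδ0, hB1, ?_⟩
  intro b hb
  have hbG : ContDiffOn ℝ ∞ (fun q => b q * Dx (Dx G) q) V :=
    hb.mul (contDiffOn_Dx hV (contDiffOn_Dx hV hG))
  have hbx := contDiffOn_Dx hV hb
  obtain ⟨C₁, hC₁, H₁⟩ := inner_bound G V hV hG n₀ m₀ y₀ δ hδ0 hB1 k hk (c / 4) (by positivity) b hb
  obtain ⟨C₂, hC₂, H₂⟩ := inner_bound G V hV hG n₀ m₀ y₀ δ hδ0 hB1 k hk (c / 4) (by positivity) _ hbG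
  obtain ⟨C₃, hC₃, H₃⟩ := inner_bound G V hV hG n₀ m₀ y₀ δ hδ0 hB1 k hk (c / 4) (by positivity) _ hbx
  set C := C₁ + C₂ + C₃ with hC
  have hC0 : 0 ≤ C := by positivity
  refine ⟨12 * C + 5 * C / (ε / 2), by positivity, ?_⟩
  intro n p q r s v₁ v₂ τ hn hp hpq hq hr hrs hs hτ
  have hτ0 : 0 < τ := by linarith
  have hmI : ∀ m ∈ Icc p q, |m - m₀| ≤ δ := fun m hm =>
    abs_le.2 ⟨by linarith [hm.1], by linarith [hm.2]⟩
  set K : ℝ → ℂ := fun m => ∫ y in r..s, ePsi G τ v₁ v₂ n m y *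
          ((b (n, m, y) * Dx (Dx G) (n, m, y) : ℝ) : ℂ) with hK
  set Z : ℝ → ℂ := fun m => ∫ y in r..s, ePsi G τ v₁ v₂ n m y * (b (n, m, y) : ℂ) with hZ
  set R : ℝ → ℂ := fun m => ∫ y in r..s, ePsi G τ v₁ v₂ n m y * (Dx b (n, m, y) : ℂ) with hR
  have hmem : ∀ z ∈ Icc p q ×ˢ Icc r s, ((n, z) : ℝ × ℝ × ℝ) ∈ Metric.closedBall q₀ δ := by
    rintro ⟨m', y⟩ ⟨hm', hy⟩
    rw [hq₀, mem_box]
    simp only at hm' hy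
    exact ⟨hn, hmI m' hm', abs_le.2 ⟨by linarith [hy.1], by linarith [hy.2]⟩⟩
  have hZd : ∀ m ∈ Icc p q, HasDerivAt Z (Complex.I * τ * (v₁ - m) * K m + R m) m := fun m hm =>
    Z_deriv G V hV hG b hb n₀ m₀ y₀ δ hδ0 hB2 n m r s v₁ v₂ τ hn (hmI m hm) hr hrs hs
  have hKc : ContinuousOn K (Icc p q) := cont_param _ p q r s hrs
    (ePsi_cont G V hV hG _ hbG _ τ v₁ v₂ n (fun z hz => hB1 (hmem z hz)))
  have hRc : ContinuousOn R (Icc p q) := cont_param _ p q r s hrs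
    (ePsi_cont G V hV hG _ hbx _ τ v₁ v₂ n (fun z hz => hB1 (hmem z hz)))
  have hτ34 : 0 ≤ τ ^ (-(3 : ℝ) / 4) := by positivity
  by_cases hcase : ∃ m ∈ Icc p q, |m - v₁| < ε / 2
  · obtain ⟨m₁, hm₁, hmv⟩ := hcase
    have hlow : ∀ m ∈ Icc p q, ∀ y ∈ Icc r s,
        c / 4 ≤ |P (n, m, y) + (v₁ - m) * Q (n, m, y)| := by
      intro m hm y hy
      have hz := hball (Metric.closedBall_subset_closedBall (show δ ≤ δ₁ by linarith)
        (hmem (m, y) ⟨hm, hy⟩))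
      obtain ⟨-, h2, h3⟩ := hz
      have h4 : |v₁ - m| ≤ ε := by
        rw [abs_lt] at hmv
        rw [abs_le]
        constructor <;> linarith [hm₁.1, hm₁.2, hm.1, hm.2, hmv.1, hmv.2]
      have h5 : |(v₁ - m) * Q (n, m, y)| ≤ c / 4 := by
        rw [abs_mul]
        calc _ ≤ ε * MQ := mul_le_mul h4 h3.le (abs_nonneg _) hε0.le
          _ = c / 4 := by rw [hε]; field_simp
      have h6 := abs_sub_abs_le_abs_sub (P (n, m, y)) (-((v₁ - m) * Q (n, m, y)))
      rw [abs_neg, sub_neg_eq_add] at h6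
      linarith
    set M := C * τ ^ (-(1 : ℝ) / 4) with hM
    have hτ4 : 0 ≤ τ ^ (-(1 : ℝ) / 4) := by positivity
    have := m_main K Z R p q v₁ τ M hpq hτ (by linarith) hZd hKc hRc
      (fun m hm => ((H₂ n m r s v₁ v₂ τ hn (hmI m hm) hr hrs hs hτ).2 (hlow m hm)).trans
        (by rw [hM]; gcongr; linarith))
      (fun m hm => ((H₁ n m r s v₁ v₂ τ hn (hmI m hm) hr hrs hs hτ).2 (hlow m hm)).trans
        (by rw [hM]; gcongr; linarith))
      (fun m hm => ((H₃ n m r s v₁ v₂ τ hn (hmI m hm) hr hrs hs hτ).2 (hlow m hm)).trans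
        (by rw [hM]; gcongr; linarith))
    refine this.trans ?_
    have e : τ ^ (-(1 : ℝ) / 4) * τ ^ (-(1 : ℝ) / 2) = τ ^ (-(3 : ℝ) / 4) := by
      rw [← rpow_add hτ0]; norm_num
    calc 12 * M * τ ^ (-(1 : ℝ) / 2) = 12 * C * (τ ^ (-(1 : ℝ) / 4) * τ ^ (-(1 : ℝ) / 2)) := by
          rw [hM]; ring
      _ = 12 * C * τ ^ (-(3 : ℝ) / 4) := by rw [e]
      _ ≤ _ := by
          gcongr
          have : 0 ≤ 5 * C / (ε / 2) := by positivity
          linarith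
  · push Not at hcase
    have := m_part K Z R p q v₁ τ (ε / 2) C hpq hτ0 (by positivity) (by linarith) hZd hKc hRc
      (fun m hm => ((H₁ n m r s v₁ v₂ τ hn (hmI m hm) hr hrs hs hτ).1).trans (by linarith))
      (fun m hm => ((H₃ n m r s v₁ v₂ τ hn (hmI m hm) hr hrs hs hτ).1).trans (by linarith))
      hcase
    refine this.trans ?_
    have e : τ⁻¹ ≤ τ ^ (-(3 : ℝ) / 4) := by
      rw [← rpow_neg_one]
      exact rpow_le_rpow_of_exponent_le hτ (by norm_num)
    calc 5 * C / (τ * (ε / 2)) = 5 * C / (ε / 2) * τ⁻¹ := by field_simp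
      _ ≤ 5 * C / (ε / 2) * τ ^ (-(3 : ℝ) / 4) := by gcongr
      _ ≤ _ := by gcongr; linarith

noncomputable def kap (W : ℝ × ℝ × ℝ → ℝ) (p : ℝ × ℝ × ℝ) : ℝ := -(Dy (Dx W) p) / (Dx (Dx W) p)
noncomputable def LL (W f : ℝ × ℝ × ℝ → ℝ) (p : ℝ × ℝ × ℝ) : ℝ := Dy f p + kap W p * Dx f p

lemma fderiv_split {f : ℝ × ℝ × ℝ → ℝ} {p : ℝ × ℝ × ℝ} (s t : ℝ) :
    fderiv ℝ f p (0, s, t) = s * Dx f p + t * Dy f p := by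
  rw [Dx, Dy, ← smul_eq_mul, ← smul_eq_mul, ← map_smul, ← map_smul, ← map_add]
  simp

lemma inv_lemma (W : ℝ × ℝ × ℝ → ℝ) (U : Set (ℝ × ℝ × ℝ)) (hU : IsOpen U)
    (hW : ContDiffOn ℝ ∞ W U) (p₀ : ℝ × ℝ × ℝ) (hp₀ : p₀ ∈ U) (h0 : Dx (Dx W) p₀ ≠ 0) :
    ∃ (V O : Set (ℝ × ℝ × ℝ)) (X : ℝ × ℝ × ℝ → ℝ), IsOpen V ∧ IsOpen O ∧ O ⊆ U ∧ p₀ ∈ O ∧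
      ContDiffOn ℝ ∞ X V ∧ (∀ p ∈ O, 0 < Dx (Dx W) p * Dx (Dx W) p₀) ∧
      (∀ n m y, (n, m, y) ∈ V → (n, X (n, m, y), y) ∈ O ∧ Dx W (n, X (n, m, y), y) = m) ∧
      (∀ n x y, (n, x, y) ∈ O → (n, Dx W (n, x, y), y) ∈ V ∧ X (n, Dx W (n, x, y), y) = x) := by
  have hDW := contDiffOn_Dx hU hW
  have hDDW := contDiffOn_Dx hU hDW
  set Θ : ℝ × ℝ × ℝ → ℝ × ℝ × ℝ := fun p => (p.1, Dx W p, p.2.2) with hΘ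
  have hΘc : ∀ p ∈ U, ContDiffAt ℝ ∞ Θ p := by
    intro p hp
    have := hDW.contDiffAt (hU.mem_nhds hp)
    exact contDiffAt_fst.prodMk (this.prodMk (contDiffAt_snd.snd))
  have hder : ∀ p ∈ U, Dx (Dx W) p ≠ 0 → ∃ e : (ℝ × ℝ × ℝ) ≃L[ℝ] (ℝ × ℝ × ℝ),
      HasFDerivAt Θ (e : (ℝ × ℝ × ℝ) →L[ℝ] (ℝ × ℝ × ℝ)) p := by
    intro p hp hne
    have hd := (diffAt_of_on hU hDW hp).hasFDerivAt
    set T : (ℝ × ℝ × ℝ) →L[ℝ] (ℝ × ℝ × ℝ) := (ContinuousLinearMap.fst ℝ ℝ (ℝ × ℝ)).prod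
      ((fderiv ℝ (Dx W) p).prod
        ((ContinuousLinearMap.snd ℝ ℝ ℝ).comp (ContinuousLinearMap.snd ℝ ℝ (ℝ × ℝ)))) with hT
    have hTd : HasFDerivAt Θ T p := by
      refine HasFDerivAt.prodMk hasFDerivAt_fst (hd.prodMk ?_)
      exact ((ContinuousLinearMap.snd ℝ ℝ ℝ).comp
        (ContinuousLinearMap.snd ℝ ℝ (ℝ × ℝ))).hasFDerivAt
    have hinj : Function.Injective T.toLinearMap := by
      rw [← LinearMap.ker_eq_bot, LinearMap.ker_eq_bot']
      rintro ⟨a, b, c⟩ h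
      have h' : T (a, b, c) = 0 := h
      simp only [hT, ContinuousLinearMap.prod_apply, ContinuousLinearMap.coe_fst',
        ContinuousLinearMap.coe_comp, Function.comp_apply, ContinuousLinearMap.coe_snd',
        Prod.mk_eq_zero] at h'
      obtain ⟨ha, hb, hc⟩ := h'
      subst ha hc
      rw [fderiv_split] at hb
      have : b = 0 := by
        simpa [hne] using hb
      simp [this]
    refine ⟨(LinearEquiv.ofInjectiveEndo T.toLinearMap hinj).toContinuousLinearEquiv, ?_⟩
    convert hTd using 1
    ext u <;> rfl
  obtain ⟨e0, he0⟩ := hder p₀ hp₀ h0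
  set e := (hΘc p₀ hp₀).toOpenPartialHomeomorph Θ he0 (by simp) with he
  have hcoe : (e : ℝ × ℝ × ℝ → ℝ × ℝ × ℝ) = Θ :=
    ContDiffAt.toOpenPartialHomeomorph_coe (hΘc p₀ hp₀) he0 (by simp)
  have hsrc : p₀ ∈ e.source := ContDiffAt.mem_toOpenPartialHomeomorph_source (hΘc p₀ hp₀) he0 (by simp)
  set O1 : Set (ℝ × ℝ × ℝ) := U ∩ {p | 0 < Dx (Dx W) p * Dx (Dx W) p₀} with hO1
  have hO1o : IsOpen O1 := (hDDW.continuousOn.mul continuousOn_const).isOpen_inter_preimage hU isOpen_Ioi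
  have hp1 : p₀ ∈ O1 := ⟨hp₀, mul_self_pos.2 h0⟩
  refine ⟨e.target ∩ e.symm ⁻¹' O1, e.source ∩ O1, fun q => (e.symm q).2.1,
    e.isOpen_inter_preimage_symm hO1o, e.open_source.inter hO1o, fun p hp => hp.2.1,
    ⟨hsrc, hp1⟩, ?_, fun p hp => hp.2.2, ?_, ?_⟩
  · intro q hq
    have h1 := hq.2.2
    have hne : Dx (Dx W) (e.symm q) ≠ 0 := by
      intro h
      simp only [mem_ofPred_eq, h, zero_mul, lt_irrefl] at h1
    obtain ⟨e1, he1⟩ := hder _ hq.2.1 hne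
    have := e.contDiffAt_symm hq.1 (f₀' := e1) (by rw [hcoe]; exact he1)
      (by rw [hcoe]; exact hΘc _ hq.2.1)
    exact (this.snd.fst).contDiffWithinAt
  · intro n m y hq
    have hr := e.right_inv hq.1
    rw [hcoe] at hr
    simp only [hΘ, Prod.mk.injEq] at hr
    have hs : e.symm (n, m, y) = (n, (e.symm (n, m, y)).2.1, y) := by
      ext
      · exact hr.1
      · rfl
      · exact hr.2.2
    refine ⟨?_, ?_⟩
    · rw [← hs]
      exact ⟨e.map_target hq.1, hq.2⟩
    · rw [← hs]; exact hr.2.1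
  · intro n x y hq
    have hm := e.map_source hq.1
    have hl := e.left_inv hq.1
    rw [hcoe] at hl hm
    simp only [hΘ] at hl hm
    refine ⟨⟨hm, ?_⟩, ?_⟩
    · rw [mem_preimage, hl]; exact hq.2
    · show (e.symm _).2.1 = x
      rw [hl]

/-- properties of the generating function -/
lemma gen_lemma (W : ℝ × ℝ × ℝ → ℝ) (V O : Set (ℝ × ℝ × ℝ)) (X : ℝ × ℝ × ℝ → ℝ) (hV : IsOpen V)
    (hO : IsOpen O) (hW : ContDiffOn ℝ ∞ W O)
    (hX : ContDiffOn ℝ ∞ X V) (hne : ∀ p ∈ O, Dx (Dx W) p ≠ 0)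
    (h1 : ∀ n m y, (n, m, y) ∈ V → (n, X (n, m, y), y) ∈ O ∧ Dx W (n, X (n, m, y), y) = m)
    (G : ℝ × ℝ × ℝ → ℝ) (hG : G = fun q => q.2.1 * X q - W (q.1, X q, q.2.2)) :
    ContDiffOn ℝ ∞ G V ∧ (∀ q ∈ V, Dx G q = X q) ∧
    (∀ q ∈ V, Dx (Dx G) q = (Dx (Dx W) (q.1, X q, q.2.2))⁻¹) ∧
    (∀ q ∈ V, ∀ j, Dy^[j + 1] G q = - ((LL W)^[j] (Dy W)) (q.1, X q, q.2.2)) := by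
  set σ : ℝ × ℝ × ℝ → ℝ × ℝ × ℝ := fun q => (q.1, X q, q.2.2) with hσ
  have hmaps : MapsTo σ V O := fun q hq => (h1 q.1 q.2.1 q.2.2 hq).1
  have hσc : ContDiffOn ℝ ∞ σ V := contDiffOn_fst.prodMk (hX.prodMk contDiffOn_snd.snd)
  have hσd : ∀ q ∈ V, HasFDerivAt σ ((ContinuousLinearMap.fst ℝ ℝ (ℝ × ℝ)).prod
      ((fderiv ℝ X q).prod
        ((ContinuousLinearMap.snd ℝ ℝ ℝ).comp (ContinuousLinearMap.snd ℝ ℝ (ℝ × ℝ))))) q := by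
    intro q hq
    refine HasFDerivAt.prodMk hasFDerivAt_fst ((diffAt_of_on hV hX hq).hasFDerivAt.prodMk ?_)
    exact ((ContinuousLinearMap.snd ℝ ℝ ℝ).comp
        (ContinuousLinearMap.snd ℝ ℝ (ℝ × ℝ))).hasFDerivAt
  have chx : ∀ f : ℝ × ℝ × ℝ → ℝ, ContDiffOn ℝ ∞ f O → ∀ q ∈ V,
      Dx (fun q => f (σ q)) q = Dx f (σ q) * Dx X q := by
    intro f hf q hq
    have := ((diffAt_of_on hO hf (hmaps hq)).hasFDerivAt.comp q (hσd q hq)).fderiv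
    have e : (fun q => f (σ q)) = f ∘ σ := rfl
    rw [e, Dx, this]
    simp only [ContinuousLinearMap.coe_comp, Function.comp_apply, ContinuousLinearMap.prod_apply,
      ContinuousLinearMap.coe_fst', ContinuousLinearMap.coe_snd']
    rw [fderiv_split, Dx, Dx]; ring
  have chy : ∀ f : ℝ × ℝ × ℝ → ℝ, ContDiffOn ℝ ∞ f O → ∀ q ∈ V,
      Dy (fun q => f (σ q)) q = Dy f (σ q) + Dy X q * Dx f (σ q) := by
    intro f hf q hq
    have := ((diffAt_of_on hO hf (hmaps hq)).hasFDerivAt.comp q (hσd q hq)).fderiv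
    have e : (fun q => f (σ q)) = f ∘ σ := rfl
    rw [e, Dy, this]
    simp only [ContinuousLinearMap.coe_comp, Function.comp_apply, ContinuousLinearMap.prod_apply,
      ContinuousLinearMap.coe_fst', ContinuousLinearMap.coe_snd']
    rw [fderiv_split, Dy, Dy]; ring
  have congr_x : ∀ f g : ℝ × ℝ × ℝ → ℝ, (∀ q ∈ V, f q = g q) → ∀ q ∈ V, Dx f q = Dx g q := by
    intro f g h q hq
    rw [Dx, Dx, Filter.EventuallyEq.fderiv_eq
      (Filter.eventuallyEq_of_mem (hV.mem_nhds hq) h)]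
  have congr_y : ∀ f g : ℝ × ℝ × ℝ → ℝ, (∀ q ∈ V, f q = g q) → ∀ q ∈ V, Dy f q = Dy g q := by
    intro f g h q hq
    rw [Dy, Dy, Filter.EventuallyEq.fderiv_eq
      (Filter.eventuallyEq_of_mem (hV.mem_nhds hq) h)]
  have hDW := contDiffOn_Dx hO hW
  have hm : ∀ q ∈ V, Dx W (σ q) = q.2.1 := fun q hq => (h1 q.1 q.2.1 q.2.2 hq).2
  have hfm : ∀ q : ℝ × ℝ × ℝ, HasFDerivAt (fun q : ℝ × ℝ × ℝ => q.2.1)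
      ((ContinuousLinearMap.fst ℝ ℝ ℝ).comp (ContinuousLinearMap.snd ℝ ℝ (ℝ × ℝ))) q := fun q =>
    ((ContinuousLinearMap.fst ℝ ℝ ℝ).comp (ContinuousLinearMap.snd ℝ ℝ (ℝ × ℝ))).hasFDerivAt
  have hXm : ∀ q ∈ V, Dx X q = (Dx (Dx W) (σ q))⁻¹ := by
    intro q hq
    have h := congr_x _ _ hm q hq
    rw [chx _ hDW q hq] at h
    have h2 : Dx (fun q : ℝ × ℝ × ℝ => q.2.1) q = 1 := by
      rw [Dx, (hfm q).fderiv]; simp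
    rw [h2] at h
    exact eq_inv_of_mul_eq_one_right h
  have hXy : ∀ q ∈ V, Dy X q = kap W (σ q) := by
    intro q hq
    have h := congr_y _ _ hm q hq
    rw [chy _ hDW q hq] at h
    have h2 : Dy (fun q : ℝ × ℝ × ℝ => q.2.1) q = 0 := by
      rw [Dy, (hfm q).fderiv]; simp
    rw [h2] at h
    rw [kap, eq_div_iff (hne _ (hmaps hq))]
    linarith
  have hWσ : ContDiffOn ℝ ∞ (fun q => W (σ q)) V := hW.comp hσc hmaps
  have hGc : ContDiffOn ℝ ∞ G V := by
    rw [hG]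
    exact (contDiffOn_snd.fst.mul hX).sub hWσ
  have hGd : ∀ q ∈ V, ∀ u, fderiv ℝ G q u = q.2.1 * fderiv ℝ X q u + u.2.1 * X q
      - fderiv ℝ (fun q => W (σ q)) q u := by
    intro q hq u
    rw [hG]
    have := (((hfm q).mul (diffAt_of_on hV hX hq).hasFDerivAt).sub
      (diffAt_of_on hV hWσ hq).hasFDerivAt).fderiv
    erw [this]
    simp [mul_comm]
  have hGx : ∀ q ∈ V, Dx G q = X q := by
    intro q hq
    have a := chx _ hW q hq
    rw [hm q hq] at a
    have b := hGd q hq (0, 1, 0)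
    rw [Dx] at a ⊢
    rw [b, a, Dx]; ring
  have hGy : ∀ q ∈ V, Dy G q = - Dy W (σ q) := by
    intro q hq
    have a := chy _ hW q hq
    rw [hm q hq] at a
    have b := hGd q hq (0, 0, 1)
    rw [Dy] at a ⊢
    rw [b, a]; simp only [Dy]; ring
  refine ⟨hGc, hGx, fun q hq => (congr_x _ _ hGx q hq).trans (hXm q hq), ?_⟩
  have hkap : ContDiffOn ℝ ∞ (kap W) O :=
    (contDiffOn_Dy hO hDW).neg.div (contDiffOn_Dx hO hDW) hne
  have hLL : ∀ f, ContDiffOn ℝ ∞ f O → ContDiffOn ℝ ∞ (LL W f) O := fun f hf =>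
    (contDiffOn_Dy hO hf).add (hkap.mul (contDiffOn_Dx hO hf))
  have hLi : ∀ j, ContDiffOn ℝ ∞ ((LL W)^[j] (Dy W)) O := by
    intro j
    induction j with
    | zero => exact contDiffOn_Dy hO hW
    | succ j ih => rw [Function.iterate_succ_apply']; exact hLL _ ih
  intro q hq j
  induction j generalizing q with
  | zero => exact hGy q hq
  | succ j ih =>
    rw [Function.iterate_succ_apply', congr_y _ _ ih q hq, Function.iterate_succ_apply']
    have := chy _ (hLi j) q hq
    have e2 : Dy (fun q => -((LL W)^[j] (Dy W)) (q.1, X q, q.2.2)) q =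
      - Dy (fun q => ((LL W)^[j] (Dy W)) (q.1, X q, q.2.2)) q := by
      rw [Dy, Dy, fderiv_fun_neg]; simp
    rw [e2, LL, this, hXy q hq]

noncomputable def eW (W : ℝ × ℝ × ℝ → ℝ) (τ : ℝ) (v : ℝ × ℝ) (n : ℝ) (ξ : ℝ × ℝ) : ℂ :=
  Complex.exp (Complex.I * ((τ * (v.1 * ξ.1 + v.2 * ξ.2 - W (n, ξ)) : ℝ) : ℂ))

lemma norm_eW (W : ℝ × ℝ × ℝ → ℝ) (τ : ℝ) (v : ℝ × ℝ) (n : ℝ) (ξ : ℝ × ℝ) :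
    ‖eW W τ v n ξ‖ = 1 := by
  rw [eW, mul_comm, Complex.norm_exp_ofReal_mul_I]

/-- the region on which the localised integral lives -/
def Reg (W : ℝ × ℝ × ℝ → ℝ) (n A₁ B₁ A₂ B₂ : ℝ) : Set (ℝ × ℝ) :=
  {ξ | Dx W (n, ξ) ∈ Icc A₁ B₁ ∧ ξ.2 ∈ Icc A₂ B₂}

lemma meas_Reg (W : ℝ × ℝ × ℝ → ℝ) (n A₁ B₁ A₂ B₂ : ℝ) : MeasurableSet (Reg W n A₁ B₁ A₂ B₂) := by
  have h1 : Measurable (fun ξ : ℝ × ℝ => Dx W (n, ξ)) :=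
    (measurable_fderiv_apply_const ℝ W ((0, 1, 0) : ℝ × ℝ × ℝ)).comp (by fun_prop)
  exact (h1 measurableSet_Icc).inter (measurable_snd measurableSet_Icc)

lemma int_aux (ξ₀ : ℝ × ℝ) (ε : ℝ) (φ : ℝ × ℝ → ℂ) (hφ : ContinuousOn φ (Metric.ball ξ₀ ε))
    (hφ1 : ∀ ξ, ‖φ ξ‖ ≤ 1) (a : ℝ × ℝ → ℝ) (ha : Continuous a)
    (has : ∀ ξ, a ξ ≠ 0 → ξ ∈ Metric.ball ξ₀ ε) (S : Set (ℝ × ℝ)) (hS : MeasurableSet S) :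
    Integrable (S.indicator (fun ξ => φ ξ * (a ξ : ℂ))) := by
  have h1 : IntegrableOn (fun ξ => φ ξ * (a ξ : ℂ)) (Metric.ball ξ₀ ε) := by
    obtain ⟨C, hC⟩ := (isCompact_closedBall ξ₀ ε).exists_bound_of_continuousOn ha.continuousOn
    refine IntegrableOn.of_bound (by exact measure_ball_lt_top) ?_ C ?_
    · refine ContinuousOn.aestronglyMeasurable ?_ Metric.isOpen_ball.measurableSet
      exact hφ.mul (by fun_prop)
    · refine (ae_restrict_iff' Metric.isOpen_ball.measurableSet).2 (Filter.Eventually.of_forall ?_)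
      intro ξ hξ
      rw [norm_mul, Complex.norm_real]
      have := hC ξ (Metric.ball_subset_closedBall hξ)
      calc ‖φ ξ‖ * ‖a ξ‖ ≤ 1 * ‖a ξ‖ := by gcongr; exact hφ1 ξ
        _ ≤ C := by linarith
  have h2 : Integrable (fun ξ => φ ξ * (a ξ : ℂ)) := by
    rw [← integrableOn_iff_integrable_of_support_subset (s := Metric.ball ξ₀ ε)]
    · exact h1
    · intro ξ hξ
      apply has
      intro h
      simp [h] at hξ
  exact h2.indicator hS

theorem local_thm (W : ℝ × ℝ × ℝ → ℝ) (U : Set (ℝ × ℝ × ℝ)) (hU : IsOpen U)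
    (hW : ContDiffOn ℝ ∞ W U) (n₀ : ℝ) (ξ₀ : ℝ × ℝ) (hp₀ : (n₀, ξ₀) ∈ U)
    (h0 : Dx (Dx W) (n₀, ξ₀) ≠ 0) (k : ℕ) (hk : k ≤ 2)
    (hne : (LL W)^[k + 1] (Dy W) (n₀, ξ₀) ≠ 0) :
    ∃ ε > 0, ∀ a : ℝ × ℝ → ℝ, ContDiff ℝ ∞ a → (∀ ξ, a ξ ≠ 0 → ξ ∈ Metric.ball ξ₀ ε) →
      ∃ C ≥ 0, ∀ n, |n - n₀| < ε → ∀ (A₁ B₁ A₂ B₂ : ℝ) (v : ℝ × ℝ) (τ : ℝ), 1 ≤ τ →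
        ‖∫ ξ, (Reg W n A₁ B₁ A₂ B₂).indicator (fun ξ => eW W τ v n ξ * (a ξ : ℂ)) ξ‖
          ≤ C * τ ^ (-(3 : ℝ) / 4) := by
  obtain ⟨V, O, X, hV, hO, hOU, hpO, hX, hsgn, h1, h2⟩ := inv_lemma W U hU hW _ hp₀ h0
  have hneO : ∀ p ∈ O, Dx (Dx W) p ≠ 0 := by
    intro p hp h
    have := hsgn p hp
    rw [h, zero_mul] at this
    exact lt_irrefl _ this
  have hWO := hW.mono hOU
  set G : ℝ × ℝ × ℝ → ℝ := fun q => q.2.1 * X q - W (q.1, X q, q.2.2) with hGdef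
  obtain ⟨hG, hGx, hGxx, hGy⟩ := gen_lemma W V O X hV hO hWO hX hneO h1 G rfl
  obtain ⟨x₀, y₀⟩ := ξ₀
  set m₀ := Dx W (n₀, x₀, y₀) with hm₀
  obtain ⟨hq₀V, hX₀⟩ := h2 n₀ x₀ y₀ hpO
  rw [← hm₀] at hq₀V hX₀
  have hne' : Dy^[k + 2] G (n₀, m₀, y₀) ≠ 0 := by
    rw [hGy _ hq₀V (k + 1)]
    simp only [hX₀]
    exact neg_ne_zero.2 hne
  obtain ⟨δ, hδ, hB, hmod⟩ := model G V hV hG n₀ m₀ y₀ hq₀V k hk hne'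
  -- choose ε
  have hΘc : ContinuousOn (fun p : ℝ × ℝ × ℝ => (p.1, Dx W p, p.2.2)) O :=
    continuousOn_fst.prodMk ((contDiffOn_Dx hO hWO).continuousOn.prodMk (by fun_prop))
  have hO' := hΘc.isOpen_inter_preimage hO (Metric.isOpen_ball (x := (n₀, m₀, y₀)) (ε := δ))
  obtain ⟨ε, hε, hball⟩ := Metric.isOpen_iff.1 hO' (n₀, x₀, y₀) ⟨hpO, Metric.mem_ball_self hδ⟩
  refine ⟨ε, hε, ?_⟩
  intro a ha has
  set s₀ : ℝ := Dx (Dx W) (n₀, x₀, y₀) / |Dx (Dx W) (n₀, x₀, y₀)| with hs₀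
  have habs : ∀ p ∈ O, |(Dx (Dx W) p)⁻¹| = s₀ * (Dx (Dx W) p)⁻¹ := by
    intro p hp
    have := hsgn p hp
    rw [hs₀, abs_inv]
    rcases pos_and_pos_or_neg_and_neg_of_mul_pos this with ⟨u1, u2⟩ | ⟨u1, u2⟩
    · rw [abs_of_pos u1, abs_of_pos u2, div_self u2.ne', one_mul]
    · rw [abs_of_neg u1, abs_of_neg u2, div_neg, div_self u2.ne, neg_one_mul, inv_neg]
  set b : ℝ × ℝ × ℝ → ℝ := fun q => s₀ * a (X q, q.2.2) with hb
  have hbc : ContDiffOn ℝ ∞ b V := by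
    apply contDiffOn_const.mul
    exact ha.comp_contDiffOn (hX.prodMk contDiffOn_snd.snd)
  obtain ⟨C, hC, H⟩ := hmod b hbc
  refine ⟨C, hC, ?_⟩
  intro n hn A₁ B₁ A₂ B₂ v τ hτ
  have hτ0 : 0 < τ := by linarith
  -- facts for ξ in the ball
  have hmem : ∀ x y, ((x, y) : ℝ × ℝ) ∈ Metric.ball (x₀, y₀) ε → (n, x, y) ∈ O ∧
      (n, Dx W (n, x, y), y) ∈ Metric.ball ((n₀, m₀, y₀) : ℝ × ℝ × ℝ) δ := by
    intro x y h
    have : ((n, x, y) : ℝ × ℝ × ℝ) ∈ Metric.ball ((n₀, x₀, y₀) : ℝ × ℝ × ℝ) ε := by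
      rw [Metric.mem_ball, Prod.dist_eq, max_lt_iff]
      exact ⟨by rw [Real.dist_eq]; exact hn, h⟩
    exact hball this
  have hnδ : |n - n₀| ≤ δ := by
    have := (hmem x₀ y₀ (Metric.mem_ball_self hε)).2
    exact (mem_box.1 (Metric.ball_subset_closedBall this)).1
  have hφ : ContinuousOn (eW W τ v n) (Metric.ball (x₀, y₀) ε) := by
    have : ContinuousOn (fun ξ : ℝ × ℝ => W (n, ξ)) (Metric.ball (x₀, y₀) ε) :=
      hWO.continuousOn.comp (by fun_prop) (fun ξ hξ => (hmem ξ.1 ξ.2 hξ).1)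
    have h3 : ContinuousOn (fun ξ : ℝ × ℝ => τ * (v.1 * ξ.1 + v.2 * ξ.2 - W (n, ξ)))
        (Metric.ball (x₀, y₀) ε) :=
      continuousOn_const.mul (ContinuousOn.sub (by fun_prop) this)
    exact Complex.continuous_exp.comp_continuousOn
      (continuousOn_const.mul (Complex.continuous_ofReal.comp_continuousOn h3))
  have hInt := int_aux (x₀, y₀) ε (eW W τ v n) hφ (fun ξ => (norm_eW W τ v n ξ).le) a
    ha.continuous has _ (meas_Reg W n A₁ B₁ A₂ B₂)
  set F := (Reg W n A₁ B₁ A₂ B₂).indicator (fun ξ => eW W τ v n ξ * (a ξ : ℂ)) with hF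
  set p := max A₁ (m₀ - δ) with hp
  set q := min B₁ (m₀ + δ) with hq
  set r := max A₂ (y₀ - δ) with hr
  set s := min B₂ (y₀ + δ) with hs
  have hpqV : ∀ m ∈ Icc p q, ∀ y ∈ Icc r s, (n, m, y) ∈ V := by
    intro m hm y hy
    apply hB
    rw [mem_box]
    have a1 := (le_max_right _ _).trans hm.1
    have a2 := hm.2.trans (min_le_right _ _)
    have a3 := (le_max_right _ _).trans hy.1
    have a4 := hy.2.trans (min_le_right _ _)
    exact ⟨hnδ, abs_le.2 ⟨by linarith, by linarith⟩, abs_le.2 ⟨by linarith, by linarith⟩⟩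
  have hcut : ∀ x y, F (x, y) ≠ 0 → y ∈ Icc r s ∧ Dx W (n, x, y) ∈ Icc p q ∧
      X (n, Dx W (n, x, y), y) = x := by
    intro x y h
    have hR : (x, y) ∈ Reg W n A₁ B₁ A₂ B₂ := by
      by_contra h'
      exact h (indicator_of_notMem h' _)
    have ha0 : a (x, y) ≠ 0 := by
      intro h'
      apply h
      rw [hF, indicator_of_mem hR, h']; simp
    obtain ⟨m1, m2⟩ := hmem x y (has _ ha0)
    have m3 := mem_box.1 (Metric.ball_subset_closedBall m2)
    have m4 := abs_le.1 m3.2.1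
    have m5 := abs_le.1 m3.2.2
    refine ⟨⟨max_le hR.2.1 (by linarith), le_min hR.2.2 (by linarith)⟩,
      ⟨max_le hR.1.1 (by linarith), le_min hR.1.2 (by linarith)⟩, (h2 n x y m1).2⟩
  -- the inner integral
  have hinner : ∀ y, ∫ x, F (x, y) = (Icc r s).indicator (fun y => ∫ m in Icc p q,
      ePsi G τ v.1 v.2 n m y * ((b (n, m, y) * Dx (Dx G) (n, m, y) : ℝ) : ℂ)) y := by
    intro y
    by_cases hy : y ∈ Icc r s
    · rw [indicator_of_mem hy]
      have e1 : (fun x => F (x, y)) = ((fun m => X (n, m, y)) '' Icc p q).indicator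
          (fun x => eW W τ v n (x, y) * (a (x, y) : ℂ)) := by
        funext x
        by_cases hx : x ∈ (fun m => X (n, m, y)) '' Icc p q
        · rw [indicator_of_mem hx]
          obtain ⟨m, hm, rfl⟩ := hx
          simp only
          have := (h1 n m y (hpqV m hm y hy)).2
          rw [hF, indicator_of_mem]
          refine ⟨?_, ?_⟩
          · show Dx W (n, X (n, m, y), y) ∈ _
            rw [this]
            exact ⟨(le_max_left _ _).trans hm.1, hm.2.trans (min_le_left _ _)⟩
          · exact ⟨(le_max_left _ _).trans hy.1, hy.2.trans (min_le_left _ _)⟩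
        · rw [indicator_of_notMem hx]
          by_contra h
          obtain ⟨_, u1, u2⟩ := hcut x y h
          exact hx ⟨_, u1, u2⟩
      have hXd : ∀ m ∈ Icc p q, HasDerivWithinAt (fun m => X (n, m, y)) (Dx X (n, m, y)) (Icc p q) m :=
        fun m hm => (hasDerivAt_x (diffAt_of_on hV hX (hpqV m hm y hy))).hasDerivWithinAt
      have hinj : InjOn (fun m => X (n, m, y)) (Icc p q) := by
        intro m hm m' hm' h
        simp only at h
        rw [← (h1 n m y (hpqV m hm y hy)).2, ← (h1 n m' y (hpqV m' hm' y hy)).2, h]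
      have himg : MeasurableSet ((fun m => X (n, m, y)) '' Icc p q) := by
        apply IsCompact.measurableSet
        exact isCompact_Icc.image_of_continuousOn (fun m hm => (hXd m hm).continuousWithinAt)
      rw [e1, integral_indicator himg,
        integral_image_eq_integral_abs_deriv_smul measurableSet_Icc hXd hinj]
      apply setIntegral_congr_fun measurableSet_Icc
      intro m hm
      have hv := hpqV m hm y hy
      have hXx : Dx X (n, m, y) = Dx (Dx G) (n, m, y) := by
        rw [Dx, Dx, Filter.EventuallyEq.fderiv_eq
          (Filter.eventuallyEq_of_mem (hV.mem_nhds hv) hGx)]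
      simp only
      rw [hXx, hGxx _ hv]
      simp only
      rw [habs _ (h1 n m y hv).1]
      have hphase : ePsi G τ v.1 v.2 n m y = eW W τ v n (X (n, m, y), y) := by
        unfold ePsi eW Psi
        rw [hGx _ hv]
        simp only [hGdef]
        congr 4
        ring
      rw [hphase, hb]
      simp only [Complex.real_smul]
      push_cast
      ring
    · rw [indicator_of_notMem hy]
      have : (fun x => F (x, y)) = fun _ => 0 := by
        funext x
        by_contra h
        exact hy (hcut x y h).1
      rw [this]; simp
  have hfub : ∫ ξ, F ξ = ∫ y in Icc r s, ∫ m in Icc p q,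
      ePsi G τ v.1 v.2 n m y * ((b (n, m, y) * Dx (Dx G) (n, m, y) : ℝ) : ℂ) := by
    rw [← integral_indicator measurableSet_Icc]
    have := integral_prod_symm (μ := (volume : Measure ℝ)) (ν := (volume : Measure ℝ)) F hInt
    rw [← Measure.volume_eq_prod] at this
    rw [this]
    exact integral_congr_ae (Filter.Eventually.of_forall hinner)
  rw [hfub]
  by_cases hpq : p ≤ q
  swap
  · rw [Icc_eq_empty hpq]
    simp only [Measure.restrict_empty, integral_zero_measure, integral_zero, norm_zero]
    positivity
  by_cases hrs : r ≤ s
  swap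
  · rw [Icc_eq_empty hrs]
    simp only [Measure.restrict_empty, integral_zero_measure, norm_zero]
    positivity
  have hbG : ContDiffOn ℝ ∞ (fun q => b q * Dx (Dx G) q) V :=
    hbc.mul (contDiffOn_Dx hV (contDiffOn_Dx hV hG))
  have hcont := ePsi_cont G V hV hG _ hbG (Icc p q ×ˢ Icc r s) τ v.1 v.2 n
    (fun z hz => hpqV z.1 hz.1 z.2 hz.2)
  have hii : IntegrableOn (fun z : ℝ × ℝ => ePsi G τ v.1 v.2 n z.1 z.2 *
      ((b (n, z.1, z.2) * Dx (Dx G) (n, z.1, z.2) : ℝ) : ℂ)) (Icc p q ×ˢ Icc r s) :=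
    ContinuousOn.integrableOn_compact (isCompact_Icc.prod isCompact_Icc) hcont
  have hsw := integral_integral_swap (μ := (volume : Measure ℝ).restrict (Icc p q))
    (ν := (volume : Measure ℝ).restrict (Icc r s))
    (f := fun m y => ePsi G τ v.1 v.2 n m y * ((b (n, m, y) * Dx (Dx G) (n, m, y) : ℝ) : ℂ))
    (by rw [Measure.prod_restrict]; exact hii)
  rw [← hsw]
  have := H n p q r s v.1 v.2 τ hnδ (le_max_right _ _) hpq (min_le_right _ _)
    (le_max_right _ _) hrs (min_le_right _ _) hτ
  simp only [intervalIntegral.integral_of_le hpq, intervalIntegral.integral_of_le hrs,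
    ← integral_Icc_eq_integral_Ioc] at this
  exact this

lemma pou (K : Set (ℝ × ℝ)) (hK : IsCompact K) (Q : (ℝ × ℝ → ℝ) → Prop) (hQ0 : Q (fun _ => 0))
    (hadd : ∀ a b, Q a → Q b → Q (fun ξ => a ξ + b ξ))
    (hloc : ∀ p ∈ K, ∃ ε > 0, ∀ a : ℝ × ℝ → ℝ, ContDiff ℝ ∞ a →
      (∀ ξ, a ξ ≠ 0 → ξ ∈ Metric.ball p ε) → Q a)
    (a : ℝ × ℝ → ℝ) (ha : ContDiff ℝ ∞ a) (has : ∀ ξ, a ξ ≠ 0 → ξ ∈ K) : Q a := by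
  choose! ε hε H using hloc
  have claim : ∀ t : Finset (ℝ × ℝ), (∀ p ∈ t, p ∈ K) → ∀ a : ℝ × ℝ → ℝ, ContDiff ℝ ∞ a →
      (∀ ξ, a ξ ≠ 0 → ∃ p ∈ t, ξ ∈ Metric.ball p (ε p / 2)) → Q a := by
    classical
    intro t
    induction t using Finset.induction_on with
    | empty =>
      intro _ a _ h
      have : a = fun _ => 0 := by
        funext ξ
        by_contra h'
        obtain ⟨p, hp, _⟩ := h ξ h'
        simp at hp
      rw [this]; exact hQ0
    | insert p t hpt ih =>
      intro ht a ha h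
      have hpK := ht p (Finset.mem_insert_self p t)
      have hε0 := hε p hpK
      let f : ContDiffBump p := ⟨ε p / 2, ε p, by linarith, by linarith⟩
      have h1 : Q (fun ξ => f ξ * a ξ) := by
        apply H p hpK _ (f.contDiff.mul ha)
        intro ξ hξ
        have : f ξ ≠ 0 := left_ne_zero_of_mul hξ
        rw [← Function.mem_support, f.support_eq] at this
        exact this
      have h2 : Q (fun ξ => (1 - f ξ) * a ξ) := by
        apply ih (fun q hq => ht q (Finset.mem_insert_of_mem hq)) _
          ((contDiff_const.sub f.contDiff).mul ha)
        intro ξ hξ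
        obtain ⟨q, hq, hqb⟩ := h ξ (right_ne_zero_of_mul hξ)
        rcases Finset.mem_insert.1 hq with rfl | hq'
        · exfalso
          have : f ξ = 1 := f.one_of_mem_closedBall (Metric.ball_subset_closedBall hqb)
          rw [this] at hξ
          simp at hξ
        · exact ⟨q, hq', hqb⟩
      have := hadd _ _ h1 h2
      convert this using 2
      ring
  obtain ⟨t, ht, hcov⟩ := hK.elim_nhds_subcover (fun p => Metric.ball p (ε p / 2))
    (fun p hp => Metric.ball_mem_nhds p (by linarith [hε p hp]))
  apply claim t ht a ha
  intro ξ hξ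
  have := hcov (has ξ hξ)
  simpa using this

lemma Dx_eq {f : ℝ × ℝ × ℝ → ℝ} {n x y d : ℝ} (hf : DifferentiableAt ℝ f (n, x, y))
    (h : HasDerivAt (fun x => f (n, x, y)) d x) : Dx f (n, x, y) = d :=
  (hasDerivAt_x hf).unique h

lemma Dy_eq {f : ℝ × ℝ × ℝ → ℝ} {n x y d : ℝ} (hf : DifferentiableAt ℝ f (n, x, y))
    (h : HasDerivAt (fun y => f (n, x, y)) d y) : Dy f (n, x, y) = d :=
  (hasDerivAt_y hf).unique h

lemma Dx_congr {f g : ℝ × ℝ × ℝ → ℝ} {V : Set (ℝ × ℝ × ℝ)} (hV : IsOpen V)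
    (h : ∀ q ∈ V, f q = g q) {q : ℝ × ℝ × ℝ} (hq : q ∈ V) : Dx f q = Dx g q := by
  rw [Dx, Dx, Filter.EventuallyEq.fderiv_eq (Filter.eventuallyEq_of_mem (hV.mem_nhds hq) h)]

lemma Dy_congr {f g : ℝ × ℝ × ℝ → ℝ} {V : Set (ℝ × ℝ × ℝ)} (hV : IsOpen V)
    (h : ∀ q ∈ V, f q = g q) {q : ℝ × ℝ × ℝ} (hq : q ∈ V) : Dy f q = Dy g q := by
  rw [Dy, Dy, Filter.EventuallyEq.fderiv_eq (Filter.eventuallyEq_of_mem (hV.mem_nhds hq) h)]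

lemma LL_congr {W f g : ℝ × ℝ × ℝ → ℝ} {V : Set (ℝ × ℝ × ℝ)} (hV : IsOpen V)
    (h : ∀ q ∈ V, f q = g q) {q : ℝ × ℝ × ℝ} (hq : q ∈ V) : LL W f q = LL W g q := by
  rw [LL, LL, Dx_congr hV h hq, Dy_congr hV h hq]

lemma LL_mul {W f g : ℝ × ℝ × ℝ → ℝ} {q : ℝ × ℝ × ℝ} (hf : DifferentiableAt ℝ f q)
    (hg : DifferentiableAt ℝ g q) :
    LL W (fun q => f q * g q) q = LL W f q * g q + f q * LL W g q := by
  simp only [LL, Dx, Dy]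
  rw [fderiv_fun_mul hf hg]
  simp
  ring

lemma contDiffOn_LL {W f : ℝ × ℝ × ℝ → ℝ} {O : Set (ℝ × ℝ × ℝ)} (hO : IsOpen O)
    (hW : ContDiffOn ℝ ∞ W O) (hne : ∀ p ∈ O, Dx (Dx W) p ≠ 0) (hf : ContDiffOn ℝ ∞ f O) :
    ContDiffOn ℝ ∞ (LL W f) O := by
  have hDW := contDiffOn_Dx hO hW
  have hkap : ContDiffOn ℝ ∞ (kap W) O :=
    (contDiffOn_Dy hO hDW).neg.div (contDiffOn_Dx hO hDW) hne
  exact (contDiffOn_Dy hO hf).add (hkap.mul (contDiffOn_Dx hO hf))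

lemma pow_D1 (g : ℝ × ℝ × ℝ → ℝ) (a : ℝ) (p : ℝ × ℝ × ℝ) (hg : DifferentiableAt ℝ g p)
    (hpos : 0 < g p) (u : ℝ × ℝ × ℝ) :
    fderiv ℝ (fun q => g q ^ a) p u = a * g p ^ (a - 1) * fderiv ℝ g p u := by
  rw [(hg.hasFDerivAt.rpow_const (Or.inl hpos.ne')).fderiv]
  simp

lemma pow_D2 (g : ℝ × ℝ × ℝ → ℝ) (U : Set (ℝ × ℝ × ℝ)) (hU : IsOpen U)
    (hg : ContDiffOn ℝ ∞ g U) (hpos : ∀ p ∈ U, 0 < g p) (a : ℝ) (p : ℝ × ℝ × ℝ) (hp : p ∈ U)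
    (u u' : ℝ × ℝ × ℝ) :
    fderiv ℝ (fun q => fderiv ℝ (fun q => g q ^ a) q u') p u =
      a * g p ^ (a - 2) * (g p * fderiv ℝ (fun q => fderiv ℝ g q u') p u
        - (1 - a) * (fderiv ℝ g p u * fderiv ℝ g p u')) := by
  have h1 : (fun q => fderiv ℝ (fun q => g q ^ a) q u') =ᶠ[𝓝 p]
      fun q => (a * g q ^ (a - 1)) * fderiv ℝ g q u' :=
    Filter.eventuallyEq_of_mem (hU.mem_nhds hp) fun q hq =>
      pow_D1 g a q (diffAt_of_on hU hg hq) (hpos q hq) u'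
  have hgd := diffAt_of_on hU hg hp
  have hgu : DifferentiableAt ℝ (fun q => fderiv ℝ g q u') p :=
    diffAt_of_on hU ((hg.fderiv_of_isOpen hU (m := ∞) (by simp)).clm_apply contDiffOn_const) hp
  have hgp : DifferentiableAt ℝ (fun q => g q ^ (a - 1)) p :=
    (hgd.hasFDerivAt.rpow_const (Or.inl (hpos p hp).ne')).differentiableAt
  rw [h1.fderiv_eq, fderiv_fun_mul (hgp.const_mul a) hgu]
  simp only [add_apply, smul_apply, smul_eq_mul]
  rw [fderiv_const_mul hgp]
  simp only [smul_apply, smul_eq_mul]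
  rw [pow_D1 g (a - 1) p hgd (hpos p hp) u]
  have e1 : g p ^ (a - 1) = g p ^ (a - 2) * g p := by
    rw [← rpow_add_one (hpos p hp).ne']; congr 1; ring
  rw [show a - 1 - 1 = a - 2 by ring, e1]
  ring

lemma pow_contDiffOn (g : ℝ × ℝ × ℝ → ℝ) (U : Set (ℝ × ℝ × ℝ))
    (hg : ContDiffOn ℝ ∞ g U) (hpos : ∀ p ∈ U, 0 < g p) (a : ℝ) :
    ContDiffOn ℝ ∞ (fun q => g q ^ a) U :=
  hg.rpow_const_of_ne (fun p hp => (hpos p hp).ne')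

/-- formula for `LL W (Dy W)` for `W = g ^ a` -/
lemma pow_LL (g : ℝ × ℝ × ℝ → ℝ) (U : Set (ℝ × ℝ × ℝ)) (hU : IsOpen U)
    (hg : ContDiffOn ℝ ∞ g U) (hpos : ∀ p ∈ U, 0 < g p) (a : ℝ) (ha : 0 < a)
    (p : ℝ × ℝ × ℝ) (hp : p ∈ U)
    (gx gy gxx gyx gxy gyy A : ℝ) (hx : Dx g p = gx) (hy : Dy g p = gy) (hxx : Dx (Dx g) p = gxx)
    (hyx : Dy (Dx g) p = gyx) (hxy : Dx (Dy g) p = gxy) (hyy : Dy (Dy g) p = gyy)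
    (hA : A = g p * gxx - (1 - a) * gx ^ 2) :
    Dx (fun q => g q ^ a) p = a * g p ^ (a - 1) * gx ∧
    Dx (Dx (fun q => g q ^ a)) p = a * g p ^ (a - 2) * A ∧
    (A ≠ 0 → kap (fun q => g q ^ a) p = - (g p * gyx - (1 - a) * (gx * gy)) / A ∧
      LL (fun q => g q ^ a) (Dy (fun q => g q ^ a)) p = a * g p ^ (a - 2) / A *
      (A * (g p * gyy - (1 - a) * gy ^ 2) - (g p * gyx - (1 - a) * (gx * gy)) *
        (g p * gxy - (1 - a) * (gx * gy)))) := by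
  have h1 := pow_D1 g a p (diffAt_of_on hU hg hp) (hpos p hp) (0, 1, 0)
  have h2 : Dx (Dx (fun q => g q ^ a)) p = a * g p ^ (a - 2) * A := by
    have := pow_D2 g U hU hg hpos a p hp (0, 1, 0) (0, 1, 0)
    rw [hA, ← hxx, ← hx, pow_two]
    exact this
  have h3 : Dy (Dx (fun q => g q ^ a)) p = a * g p ^ (a - 2) * (g p * gyx - (1 - a) * (gx * gy)) := by
    have := pow_D2 g U hU hg hpos a p hp (0, 0, 1) (0, 1, 0)
    rw [← hyx, ← hx, ← hy, mul_comm (Dx g p)]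
    exact this
  have h4 : Dx (Dy (fun q => g q ^ a)) p = a * g p ^ (a - 2) * (g p * gxy - (1 - a) * (gx * gy)) := by
    have := pow_D2 g U hU hg hpos a p hp (0, 1, 0) (0, 0, 1)
    rw [← hxy, ← hx, ← hy]
    exact this
  have h5 : Dy (Dy (fun q => g q ^ a)) p = a * g p ^ (a - 2) * (g p * gyy - (1 - a) * gy ^ 2) := by
    have := pow_D2 g U hU hg hpos a p hp (0, 0, 1) (0, 0, 1)
    rw [← hyy, ← hy, pow_two]
    exact this
  have hc : a * g p ^ (a - 2) ≠ 0 := (mul_pos ha (rpow_pos_of_pos (hpos p hp) _)).ne'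
  refine ⟨by rw [← hx]; exact h1, h2, fun hA0 => ?_⟩
  have hk : kap (fun q => g q ^ a) p = - (g p * gyx - (1 - a) * (gx * gy)) / A := by
    rw [kap, h2, h3, ← mul_neg, mul_div_mul_left _ _ hc]
  refine ⟨hk, ?_⟩
  rw [LL, hk, h4, h5]
  field_simp
  ring

lemma poly_ne (X Y b : ℝ) (hX : X ∈ Icc (-1 : ℝ) 1) (hY : Y ∈ Icc (-1 : ℝ) 1) (hS : X + Y < 2)
    (hE : X * Y * (2 - X - Y) - b * (X + Y) * (1 - X * Y) = 0) (hp : X * Y ≠ 0) :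
    ((2 - X - Y) * X - b * (1 - X ^ 2)) *
      (X * (2 - X - Y) - X * Y - b * (1 - X * Y) + b * (X + Y) * X)
      + b * (1 - X ^ 2) * (Y * (2 - X - Y) - X * Y - b * (1 - X * Y) + b * (X + Y) * Y) ≠ 0 := by
  intro hP
  have hD : 0 < 2 - X - Y := by linarith
  have hX0 : X ≠ 0 := left_ne_zero_of_mul hp
  have hS0 : X + Y ≠ 0 := by
    intro h
    rw [h] at hE
    have : X * Y * (2 - X - Y) = 0 := by linarith
    rcases mul_eq_zero.1 this with h | h
    · exact hp h
    · linarith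
  have hp1 : X * Y ≠ 1 := by
    intro h
    rw [h] at hE
    linarith
  have hple : X * Y ≤ 1 := by nlinarith [hX.1, hX.2, hY.1, hY.2, sq_nonneg (X - Y)]
  have hpge : -1 ≤ X * Y := by nlinarith [hX.1, hX.2, hY.1, hY.2, sq_nonneg (X + Y)]
  have hplt : X * Y < 1 := lt_of_le_of_ne hple hp1
  set T := (X + Y) * (1 - X * Y) with hT
  have h1 : ((2 - X - Y) * X - b * (1 - X ^ 2)) * T = (2 - X - Y) * X ^ 2 * (1 - Y ^ 2) := by
    rw [hT]; linear_combination (1 - X ^ 2) * hE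
  have h2 : b * (1 - X ^ 2) * T = (2 - X - Y) * X * Y * (1 - X ^ 2) := by
    rw [hT]; linear_combination (-(1 - X ^ 2)) * hE
  have h3 : (X * (2 - X - Y) - X * Y - b * (1 - X * Y) + b * (X + Y) * X) * T =
      X * ((2 - X - Y) * (X + Y) - 2 * Y * (1 - X * Y)) := by
    rw [hT]; linear_combination (1 - X * Y - (X + Y) * X) * hE
  have h4 : (Y * (2 - X - Y) - X * Y - b * (1 - X * Y) + b * (X + Y) * Y) * T =
      Y * ((2 - X - Y) * (X + Y) - 2 * X * (1 - X * Y)) := by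
    rw [hT]; linear_combination (1 - X * Y - (X + Y) * Y) * hE
  set f := (2 - X - Y) * (X - Y) ^ 2 + 2 * (X * Y) * (1 - X * Y) * ((1 - X) * (1 - Y)) with hf
  have key : (2 - X - Y) * X * (X + Y) * f = 0 := by
    have e := congrArg (fun z => z * T ^ 2) hP
    simp only [zero_mul] at e
    rw [← e]
    have e2 : ∀ a b' c d : ℝ, (a * b' + c * d) * T ^ 2 = (a * T) * (b' * T) + (c * T) * (d * T) := by
      intros; ring
    rw [e2, h1, h2, h3, h4, hf]
    ring
  have hfpos : 0 < f := by
    rcases lt_or_gt_of_ne hp with h | h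
    · have : f = (2 - X - Y) * ((X + Y) ^ 2 - 2 * (X * Y) * (1 + X * Y))
        - 2 * (X * Y) * (1 - X * Y) ^ 2 := by rw [hf]; ring
      rw [this]
      have a1 : 0 < -(2 * (X * Y) * (1 - X * Y) ^ 2) := by
        have : 0 < (1 - X * Y) ^ 2 := by apply pow_pos; linarith
        nlinarith
      have a2 : 0 ≤ (2 - X - Y) * ((X + Y) ^ 2 - 2 * (X * Y) * (1 + X * Y)) := by
        apply mul_nonneg hD.le
        nlinarith [sq_nonneg (X + Y)]
      linarith
    · have a2 : 0 ≤ 2 * (X * Y) * (1 - X * Y) * ((1 - X) * (1 - Y)) := by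
        apply mul_nonneg
        · apply mul_nonneg <;> linarith
        · apply mul_nonneg <;> linarith [hX.2, hY.2]
      by_cases hXY : X = Y
      · have : X < 1 := by linarith
        have a3 : 0 < (1 - X) * (1 - Y) := by apply mul_pos <;> linarith
        have a4 : 0 < 2 * (X * Y) * (1 - X * Y) * ((1 - X) * (1 - Y)) := by
          apply mul_pos _ a3
          apply mul_pos <;> linarith
        have : 0 ≤ (2 - X - Y) * (X - Y) ^ 2 := by positivity
        linarith
      · have : 0 < (2 - X - Y) * (X - Y) ^ 2 := by
          apply mul_pos hD
          have := sub_ne_zero.2 hXY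
          positivity
        linarith
  exact absurd key (mul_ne_zero (mul_ne_zero (mul_ne_zero hD.ne' hX0) hS0) hfpos.ne')

noncomputable def g0 (p : ℝ × ℝ × ℝ) : ℝ := 1 - (cos p.2.1 + cos p.2.2) / 2
noncomputable def W0 (a : ℝ) (p : ℝ × ℝ × ℝ) : ℝ := g0 p ^ a
def U0 : Set (ℝ × ℝ × ℝ) := {p | 0 < g0 p}

lemma g0_contDiff : ContDiff ℝ ∞ g0 := by unfold g0; fun_prop
lemma U0_open : IsOpen U0 := isOpen_lt continuous_const g0_contDiff.continuous

lemma Dx_g0 : Dx g0 = fun p => sin p.2.1 / 2 := by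
  funext ⟨n, x, y⟩
  apply Dx_eq (g0_contDiff.differentiable (by simp) _)
  unfold g0
  have := (((hasDerivAt_cos x).add_const (cos y)).div_const 2).const_sub 1
  exact this.congr_deriv (by simp only; ring)

lemma Dy_g0 : Dy g0 = fun p => sin p.2.2 / 2 := by
  funext ⟨n, x, y⟩
  apply Dy_eq (g0_contDiff.differentiable (by simp) _)
  unfold g0
  have := (((hasDerivAt_cos y).const_add (cos x)).div_const 2).const_sub 1
  exact this.congr_deriv (by simp only; ring)

noncomputable def Hh (b : ℝ) (p : ℝ × ℝ × ℝ) : ℝ :=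
  (2 - cos p.2.1 - cos p.2.2) * cos p.2.1 - b * sin p.2.1 ^ 2
noncomputable def EE (b : ℝ) (p : ℝ × ℝ × ℝ) : ℝ :=
  cos p.2.1 * cos p.2.2 * (2 - cos p.2.1 - cos p.2.2) -
    b * (cos p.2.1 + cos p.2.2) * (1 - cos p.2.1 * cos p.2.2)
noncomputable def EX (b : ℝ) (p : ℝ × ℝ × ℝ) : ℝ :=
  cos p.2.2 * (2 - cos p.2.1 - cos p.2.2) - cos p.2.1 * cos p.2.2
    - b * (1 - cos p.2.1 * cos p.2.2) + b * (cos p.2.1 + cos p.2.2) * cos p.2.2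
noncomputable def EY (b : ℝ) (p : ℝ × ℝ × ℝ) : ℝ :=
  cos p.2.1 * (2 - cos p.2.1 - cos p.2.2) - cos p.2.1 * cos p.2.2
    - b * (1 - cos p.2.1 * cos p.2.2) + b * (cos p.2.1 + cos p.2.2) * cos p.2.1
noncomputable def PP (b : ℝ) (p : ℝ × ℝ × ℝ) : ℝ :=
  sin p.2.2 * (Hh b p * EY b p + b * sin p.2.1 ^ 2 * EX b p)

lemma basic_formulas (a : ℝ) (ha : 0 < a) (p : ℝ × ℝ × ℝ) (hp : p ∈ U0) :
    Dx (W0 a) p = a * g0 p ^ (a - 1) * (sin p.2.1 / 2) ∧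
    Dx (Dx (W0 a)) p = a * g0 p ^ (a - 2) * (Hh (1 - a) p / 4) ∧
    (Hh (1 - a) p ≠ 0 → kap (W0 a) p = (1 - a) * (sin p.2.1 * sin p.2.2) / Hh (1 - a) p ∧
      LL (W0 a) (Dy (W0 a)) p = a * g0 p ^ (a - 1) / (2 * Hh (1 - a) p) * EE (1 - a) p) := by
  have hg := g0_contDiff
  have cxx : Dx (Dx g0) p = cos p.2.1 / 2 := by
    obtain ⟨n, x, y⟩ := p
    rw [Dx_g0]
    exact Dx_eq (by fun_prop) ((hasDerivAt_sin x).div_const 2)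
  have cyx : Dy (Dx g0) p = 0 := by
    obtain ⟨n, x, y⟩ := p
    rw [Dx_g0]
    exact Dy_eq (by fun_prop) (hasDerivAt_const y (sin x / 2))
  have cxy : Dx (Dy g0) p = 0 := by
    obtain ⟨n, x, y⟩ := p
    rw [Dy_g0]
    exact Dx_eq (by fun_prop) (hasDerivAt_const x (sin y / 2))
  have cyy : Dy (Dy g0) p = cos p.2.2 / 2 := by
    obtain ⟨n, x, y⟩ := p
    rw [Dy_g0]
    exact Dy_eq (by fun_prop) ((hasDerivAt_sin y).div_const 2)
  have hpos : 0 < g0 p := hp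
  obtain ⟨h1, h2, h3⟩ := pow_LL g0 U0 U0_open hg.contDiffOn (fun p hp => hp) a ha p hp
    (sin p.2.1 / 2) (sin p.2.2 / 2) _ _ _ _ (Hh (1 - a) p / 4) (by rw [Dx_g0]) (by rw [Dy_g0]) cxx cyx cxy cyy
    (by rw [Hh, g0]; ring)
  refine ⟨h1, h2, fun hne => ?_⟩
  obtain ⟨h4, h5⟩ := h3 (by simpa using hne)
  refine ⟨h4.trans ?_, h5.trans ?_⟩
  · field_simp; ring
  · have e : g0 p ^ (a - 1) = g0 p ^ (a - 2) * g0 p := by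
      rw [← rpow_add_one hpos.ne']; congr 1; ring
    rw [e]
    have e2 : Hh (1 - a) p / 4 * (g0 p * (cos p.2.2 / 2) - (1 - a) * (sin p.2.2 / 2) ^ 2) -
        (g0 p * 0 - (1 - a) * (sin p.2.1 / 2 * (sin p.2.2 / 2))) *
        (g0 p * 0 - (1 - a) * (sin p.2.1 / 2 * (sin p.2.2 / 2))) = g0 p * EE (1 - a) p / 8 := by
      have s1 := sin_sq p.2.1
      have s2 := sin_sq p.2.2
      rw [Hh, EE, g0]
      ring_nf
      simp only [s1, s2]
      ring
    rw [e2]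
    field_simp
    ring

lemma contDiff_Hh (b : ℝ) : ContDiff ℝ ∞ (Hh b) := by unfold Hh; fun_prop
lemma contDiff_EE (b : ℝ) : ContDiff ℝ ∞ (EE b) := by unfold EE; fun_prop
lemma contDiff_EX (b : ℝ) : ContDiff ℝ ∞ (EX b) := by unfold EX; fun_prop
lemma contDiff_EY (b : ℝ) : ContDiff ℝ ∞ (EY b) := by unfold EY; fun_prop
lemma contDiff_PP (b : ℝ) : ContDiff ℝ ∞ (PP b) := by
  have h1 := contDiff_Hh b
  have h2 := contDiff_EX b
  have h3 := contDiff_EY b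
  unfold PP
  fun_prop

lemma Dx_EE (b : ℝ) (p : ℝ × ℝ × ℝ) : Dx (EE b) p = - sin p.2.1 * EX b p := by
  obtain ⟨n, x, y⟩ := p
  apply Dx_eq ((contDiff_EE b).differentiable (by simp) _)
  have hc := hasDerivAt_cos x
  have := ((hc.mul_const (cos y)).mul ((hc.const_sub 2).sub_const (cos y))).sub
    (((hc.add_const (cos y)).const_mul b).mul ((hc.mul_const (cos y)).const_sub 1))
  refine HasDerivAt.congr_deriv this ?_
  simp only [EX]
  ring

lemma Dy_EE (b : ℝ) (p : ℝ × ℝ × ℝ) : Dy (EE b) p = - sin p.2.2 * EY b p := by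
  obtain ⟨n, x, y⟩ := p
  apply Dy_eq ((contDiff_EE b).differentiable (by simp) _)
  have hc := hasDerivAt_cos y
  have := ((hc.const_mul (cos x)).mul (hc.const_sub (2 - cos x))).sub
    (((hc.const_add (cos x)).const_mul b).mul ((hc.const_mul (cos x)).const_sub 1))
  refine HasDerivAt.congr_deriv this ?_
  simp only [EY]
  ring

/-- at a cusp point the third order quantity does not vanish -/
lemma cusp_PP (b n x y : ℝ) (hx : cos x = 0) (hy : cos y = 0) :
    Dy (PP b) (n, x, y) - (sin x * sin y) * Dx (PP b) (n, x, y) = -6 * b := by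
  have s1 : sin x ^ 2 = 1 := by have := sin_sq_add_cos_sq x; rw [hx] at this; linarith
  have s2 : sin y ^ 2 = 1 := by have := sin_sq_add_cos_sq y; rw [hy] at this; linarith
  have hPd := (contDiff_PP b).differentiable (by simp) (n, x, y)
  have hdx : Dx (PP b) (n, x, y) = sin y * (4 * b * sin x) := by
    apply Dx_eq hPd
    unfold PP Hh EY EX
    simp only
    have hc := hasDerivAt_cos x
    have hs := hasDerivAt_sin x
    have hH := ((((hc.const_sub 2).sub_const (cos y)).mul hc).sub ((hs.pow 2).const_mul b))
    have hEY := ((hc.mul ((hc.const_sub 2).sub_const (cos y))).sub (hc.mul_const (cos y))).sub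
      (((hc.mul_const (cos y)).const_sub 1).const_mul b) |>.add
      (((hc.add_const (cos y)).const_mul b).mul hc)
    have hEX := ((((hc.const_sub 2).sub_const (cos y)).const_mul (cos y)).sub (hc.mul_const (cos y))).sub
      (((hc.mul_const (cos y)).const_sub 1).const_mul b) |>.add
      (((hc.add_const (cos y)).const_mul b).mul_const (cos y))
    have := ((hH.mul hEY).add (((hs.pow 2).const_mul b).mul hEX)).const_mul (sin y)
    refine HasDerivAt.congr_deriv this ?_
    simp only [hx, hy, Pi.sub_apply, Pi.mul_apply, Pi.add_apply, Pi.pow_apply, s1]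
    ring_nf
    try simp only [s1]
    try ring
  have hdy : Dy (PP b) (n, x, y) = - (2 * b) := by
    apply Dy_eq hPd
    unfold PP Hh EY EX
    simp only
    have hc := hasDerivAt_cos y
    have hs := hasDerivAt_sin y
    have hH := ((hc.const_sub (2 - cos x)).mul_const (cos x)).sub_const (b * sin x ^ 2)
    have hEY := (((hc.const_sub (2 - cos x)).const_mul (cos x)).sub (hc.const_mul (cos x))).sub
      (((hc.const_mul (cos x)).const_sub 1).const_mul b) |>.add
      (((hc.const_add (cos x)).const_mul b).mul_const (cos x))
    have hEX := ((hc.mul (hc.const_sub (2 - cos x))).sub (hc.const_mul (cos x))).sub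
      (((hc.const_mul (cos x)).const_sub 1).const_mul b) |>.add
      (((hc.const_add (cos x)).const_mul b).mul hc)
    have := hs.mul ((hH.mul hEY).add (hEX.const_mul (b * sin x ^ 2)))
    refine HasDerivAt.congr_deriv this ?_
    simp only [hx, hy, Pi.sub_apply, Pi.mul_apply, Pi.add_apply, s1]
    ring_nf
    try simp only [s2]
    try ring
  rw [hdx, hdy]
  linear_combination (-4 * b * sin y ^ 2) * s1 - 4 * b * s2

theorem nondeg1 (a : ℝ) (ha0 : 0 < a) (ha1 : a < 1) (p : ℝ × ℝ × ℝ) (hp : p ∈ U0)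
    (hH : Hh (1 - a) p ≠ 0) : ∃ k ≤ 2, (LL (W0 a))^[k + 1] (Dy (W0 a)) p ≠ 0 := by
  set b := 1 - a with hb
  have hb0 : 0 < b := by linarith
  set O : Set (ℝ × ℝ × ℝ) := U0 ∩ {p | Hh b p ≠ 0} with hO
  have hOo : IsOpen O := U0_open.inter (isOpen_ne_fun (contDiff_Hh b).continuous continuous_const)
  have hpO : p ∈ O := ⟨hp, hH⟩
  have hW : ContDiffOn ℝ ∞ (W0 a) O :=
    (pow_contDiffOn g0 U0 g0_contDiff.contDiffOn (fun p hp => hp) a).mono inter_subset_left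
  have hgp : ∀ q ∈ O, 0 < g0 q := fun q hq => hq.1
  have hxx : ∀ q ∈ O, Dx (Dx (W0 a)) q ≠ 0 := by
    intro q hq
    rw [(basic_formulas a ha0 q hq.1).2.1]
    exact mul_ne_zero (mul_ne_zero ha0.ne' (rpow_pos_of_pos (hgp q hq) _).ne')
      (div_ne_zero hq.2 (by norm_num))
  set c₁ : ℝ × ℝ × ℝ → ℝ := fun q => a * g0 q ^ (a - 1) / (2 * Hh b q) with hc₁
  set c₂ : ℝ × ℝ × ℝ → ℝ := fun q => - (Hh b q)⁻¹ with hc₂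
  have hc₁s : ContDiffOn ℝ ∞ c₁ O := by
    apply ContDiffOn.div
    · exact contDiffOn_const.mul ((pow_contDiffOn g0 U0 g0_contDiff.contDiffOn (fun p hp => hp)
        (a - 1)).mono inter_subset_left)
    · exact contDiffOn_const.mul (contDiff_Hh b).contDiffOn
    · intro q hq; exact mul_ne_zero two_ne_zero hq.2
  have hc₂s : ContDiffOn ℝ ∞ c₂ O := ((contDiff_Hh b).contDiffOn.inv (fun q hq => hq.2)).neg
  have hc₁n : ∀ q ∈ O, c₁ q ≠ 0 := by
    intro q hq
    exact div_ne_zero (mul_ne_zero ha0.ne' (rpow_pos_of_pos (hgp q hq) _).ne')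
      (mul_ne_zero two_ne_zero hq.2)
  have hc₂n : ∀ q ∈ O, c₂ q ≠ 0 := fun q hq => neg_ne_zero.2 (inv_ne_zero hq.2)
  have hE := (contDiff_EE b).contDiffOn (s := O)
  have hP := (contDiff_PP b).contDiffOn (s := O)
  have F1 : ∀ q ∈ O, LL (W0 a) (Dy (W0 a)) q = c₁ q * EE b q := fun q hq =>
    ((basic_formulas a ha0 q hq.1).2.2 hq.2).2
  have LE : ∀ q ∈ O, LL (W0 a) (EE b) q = c₂ q * PP b q := by
    intro q hq
    rw [LL, Dx_EE, Dy_EE, ((basic_formulas a ha0 q hq.1).2.2 hq.2).1, hc₂, PP, ← hb]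
    have := hq.2
    simp only [mem_ofPred_eq] at this
    field_simp
    ring
  have mulL : ∀ f g : ℝ × ℝ × ℝ → ℝ, ContDiffOn ℝ ∞ f O → ContDiffOn ℝ ∞ g O → ∀ q ∈ O,
      LL (W0 a) (fun q => f q * g q) q = LL (W0 a) f q * g q + f q * LL (W0 a) g q :=
    fun f g hf hg q hq => LL_mul (diffAt_of_on hOo hf hq) (diffAt_of_on hOo hg hq)
  by_cases hE0 : EE b p = 0
  swap
  · refine ⟨0, by norm_num, ?_⟩
    simp only [zero_add, Function.iterate_one]
    rw [F1 p hpO]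
    exact mul_ne_zero (hc₁n p hpO) hE0
  have F2 : ∀ q ∈ O, LL (W0 a) (LL (W0 a) (Dy (W0 a))) q =
      LL (W0 a) c₁ q * EE b q + c₁ q * (c₂ q * PP b q) := by
    intro q hq
    rw [LL_congr hOo F1 hq, mulL _ _ hc₁s hE q hq, LE q hq]
  by_cases hP0 : PP b p = 0
  swap
  · refine ⟨1, by norm_num, ?_⟩
    show LL (W0 a) (LL (W0 a) (Dy (W0 a))) p ≠ 0
    rw [F2 p hpO, hE0, mul_zero, zero_add]
    exact mul_ne_zero (hc₁n p hpO) (mul_ne_zero (hc₂n p hpO) hP0)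
  have hLc := contDiffOn_LL hOo hW hxx hc₁s
  have hcP := hc₂s.mul hP
  have F3 : LL (W0 a) (LL (W0 a) (LL (W0 a) (Dy (W0 a)))) p = c₁ p * (c₂ p * LL (W0 a) (PP b) p) := by
    rw [LL_congr hOo F2 hpO]
    have e1 : ∀ f g : ℝ × ℝ × ℝ → ℝ, DifferentiableAt ℝ f p → DifferentiableAt ℝ g p →
        LL (W0 a) (fun q => f q + g q) p = LL (W0 a) f p + LL (W0 a) g p := by
      intro f g hf hg
      simp only [LL, Dx, Dy]
      rw [fderiv_fun_add hf hg]
      simp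
      ring
    rw [e1 (fun q => LL (W0 a) c₁ q * EE b q) (fun q => c₁ q * (c₂ q * PP b q))
      (diffAt_of_on hOo (hLc.mul hE) hpO) (diffAt_of_on hOo (hc₁s.mul hcP) hpO),
      mulL _ _ hLc hE p hpO, mulL _ _ hc₁s hcP p hpO, mulL _ _ hc₂s hP p hpO, LE p hpO, hE0, hP0]
    ring
  obtain ⟨n, x, y⟩ := p
  -- trigonometric ranges
  have hcx : cos x ∈ Icc (-1 : ℝ) 1 := ⟨neg_one_le_cos x, cos_le_one x⟩
  have hcy : cos y ∈ Icc (-1 : ℝ) 1 := ⟨neg_one_le_cos y, cos_le_one y⟩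
  have hS : cos x + cos y < 2 := by
    have := hgp _ hpO
    simp only [g0] at this
    linarith
  have hsx := sin_sq x
  have hsy := sin_sq y
  simp only [EE] at hE0
  simp only [PP, Hh, EX, EY, hsx] at hP0
  simp only [Hh, hsx] at hH
  by_cases hxy : cos x * cos y = 0
  swap
  · exfalso
    have hn := poly_ne (cos x) (cos y) b hcx hcy hS hE0 hxy
    rcases mul_eq_zero.1 hP0 with h | h
    · -- sin y = 0
      have hy2 : cos y ^ 2 = 1 := by rw [h] at hsy; linarith
      apply hH
      have : cos y * ((2 - cos x - cos y) * cos x - b * (1 - cos x ^ 2)) = 0 := by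
        linear_combination hE0 - b * cos x * hy2
      exact (mul_eq_zero.1 this).resolve_left (right_ne_zero_of_mul hxy)
    · exact hn h
  · have hS0 : cos x + cos y = 0 := by
      rw [hxy] at hE0
      have : b * (cos x + cos y) = 0 := by linarith
      exact (mul_eq_zero.1 this).resolve_left hb0.ne'
    have hx0 : cos x = 0 := by
      have : cos y = - cos x := by linarith
      rw [this] at hxy
      nlinarith
    have hy0 : cos y = 0 := by linarith
    refine ⟨2, le_rfl, ?_⟩
    show LL (W0 a) (LL (W0 a) (LL (W0 a) (Dy (W0 a)))) (n, x, y) ≠ 0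
    rw [F3]
    refine mul_ne_zero (hc₁n _ hpO) (mul_ne_zero (hc₂n _ hpO) ?_)
    have hk := ((basic_formulas a ha0 _ hpO.1).2.2 hpO.2).1
    have hk' : kap (W0 a) (n, x, y) = - (sin x * sin y) := by
      rw [hk, ← hb]
      simp only [Hh, hx0, hsx]
      rw [show (2 - 0 - cos y) * 0 - b * (1 - 0 ^ 2) = -b by ring]
      field_simp
    rw [LL, hk']
    have := cusp_PP b n x y hx0 hy0
    intro h
    have h6 : -6 * b = 0 := by linarith
    linarith

/-- localized estimate with a given integration region -/
lemma local_use (W : ℝ × ℝ × ℝ → ℝ) (U : Set (ℝ × ℝ × ℝ)) (hU : IsOpen U)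
    (hW : ContDiffOn ℝ ∞ W U) (ξ₀ : ℝ × ℝ) (hp₀ : ((0 : ℝ), ξ₀) ∈ U)
    (h0 : Dx (Dx W) (0, ξ₀) ≠ 0) (hne : ∃ k ≤ 2, (LL W)^[k + 1] (Dy W) (0, ξ₀) ≠ 0)
    (S : Set (ℝ × ℝ)) (hS : MeasurableSet S) (A₁ B₁ A₂ B₂ : ℝ)
    (hSR : ∀ᶠ ξ in 𝓝 ξ₀, (ξ ∈ S ↔ ξ ∈ Reg W 0 A₁ B₁ A₂ B₂)) :
    ∃ ε > 0, ∀ a : ℝ × ℝ → ℝ, ContDiff ℝ ∞ a → (∀ ξ, a ξ ≠ 0 → ξ ∈ Metric.ball ξ₀ ε) →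
      ∃ C ≥ 0, ∀ (v : ℝ × ℝ) (τ : ℝ), 1 ≤ τ →
        ‖∫ ξ in S, eW W τ v 0 ξ * (a ξ : ℂ)‖ ≤ C * τ ^ (-(3 : ℝ) / 4) := by
  obtain ⟨k, hk, hne⟩ := hne
  obtain ⟨ε, hε, H⟩ := local_thm W U hU hW 0 ξ₀ hp₀ h0 k hk hne
  obtain ⟨ε', hε', hb⟩ := Metric.eventually_nhds_iff_ball.1 hSR
  refine ⟨min ε ε', lt_min hε hε', ?_⟩
  intro a ha has
  obtain ⟨C, hC, HC⟩ := H a ha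
    (fun ξ hξ => Metric.ball_subset_ball (min_le_left _ _) (has ξ hξ))
  refine ⟨C, hC, ?_⟩
  intro v τ hτ
  have := HC 0 (by simpa using hε) A₁ B₁ A₂ B₂ v τ hτ
  rw [← integral_indicator hS]
  have e : S.indicator (fun ξ => eW W τ v 0 ξ * (a ξ : ℂ))
      = (Reg W 0 A₁ B₁ A₂ B₂).indicator (fun ξ => eW W τ v 0 ξ * (a ξ : ℂ)) := by
    funext ξ
    by_cases h : a ξ = 0
    · simp only [indicator]
      rw [h]; simp
    · have h1 := hb ξ (Metric.ball_subset_ball (min_le_right _ _) (has ξ h))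
      by_cases hs : ξ ∈ S
      · rw [indicator_of_mem hs, indicator_of_mem (h1.1 hs)]
      · rw [indicator_of_notMem hs, indicator_of_notMem (fun h' => hs (h1.2 h'))]
  rw [e]
  exact this

def Sq : Set (ℝ × ℝ) := Icc ((-π, -π) : ℝ × ℝ) ((π, π) : ℝ × ℝ)

lemma mem_Sq {x y : ℝ} : (x, y) ∈ Sq ↔ (-π ≤ x ∧ x ≤ π) ∧ (-π ≤ y ∧ y ≤ π) := by
  simp only [Sq, mem_Icc, Prod.mk_le_mk]
  tauto

lemma g0_pos {x y : ℝ} (h : (x, y) ∈ Sq) (h0 : (x, y) ≠ ((0, 0) : ℝ × ℝ)) : (0, x, y) ∈ U0 := by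
  rw [mem_Sq] at h
  show 0 < g0 (0, x, y)
  simp only [g0]
  have pp := pi_pos
  have key : ∀ t : ℝ, -π ≤ t → t ≤ π → t ≠ 0 → cos t < 1 := by
    intro t h1 h2 h3
    refine lt_of_le_of_ne (cos_le_one t) ?_
    intro h
    exact h3 ((cos_eq_one_iff_of_lt_of_lt (by linarith) (by linarith)).1 h)
  by_cases hx : x = 0
  · by_cases hy : y = 0
    · exact absurd (by rw [hx, hy]) h0
    · have := key y h.2.1 h.2.2 hy
      have := cos_le_one x
      linarith
  · have := key x h.1.1 h.1.2 hx
    have := cos_le_one y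
    linarith

lemma W0_contDiffOn (a : ℝ) : ContDiffOn ℝ ∞ (W0 a) U0 :=
  pow_contDiffOn g0 U0 g0_contDiff.contDiffOn (fun p hp => hp) a

/-- local estimate at points where `w₁₁ ≠ 0` -/
lemma loc_Hh (a : ℝ) (ha0 : 0 < a) (ha1 : a < 1) (x y : ℝ) (h : (x, y) ∈ Sq)
    (h0 : (x, y) ≠ ((0, 0) : ℝ × ℝ)) (hH : Hh (1 - a) (0, x, y) ≠ 0) :
    ∃ ε > 0, ∀ b : ℝ × ℝ → ℝ, ContDiff ℝ ∞ b → (∀ ξ, b ξ ≠ 0 → ξ ∈ Metric.ball (x, y) ε) →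
      ∃ C ≥ 0, ∀ (v : ℝ × ℝ) (τ : ℝ), 1 ≤ τ →
        ‖∫ ξ in Sq, eW (W0 a) τ v 0 ξ * (b ξ : ℂ)‖ ≤ C * τ ^ (-(3 : ℝ) / 4) := by
  have hU := g0_pos h h0
  have hxx : Dx (Dx (W0 a)) (0, x, y) ≠ 0 := by
    rw [(basic_formulas a ha0 _ hU).2.1]
    exact mul_ne_zero (mul_ne_zero ha0.ne' (rpow_pos_of_pos hU _).ne') (div_ne_zero hH (by norm_num))
  have hnd := nondeg1 a ha0 ha1 (0, x, y) hU hH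
  have pp := pi_pos
  have hc0 : Continuous (fun ξ : ℝ × ℝ => ((0 : ℝ), ξ)) := by fun_prop
  have hUe : ∀ᶠ ξ : ℝ × ℝ in 𝓝 (x, y), (0, ξ) ∈ U0 :=
    hc0.continuousAt.eventually (U0_open.mem_nhds hU)
  have hcont : ContinuousAt (fun ξ : ℝ × ℝ => Dx (W0 a) (0, ξ)) (x, y) := by
    have := ((contDiffOn_Dx U0_open (W0_contDiffOn a)).continuousOn.continuousAt
      (U0_open.mem_nhds hU))
    exact ContinuousAt.comp (f := fun ξ : ℝ × ℝ => ((0 : ℝ), ξ)) (x := (x, y)) this hc0.continuousAt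
  set m := Dx (W0 a) (0, x, y) with hm
  have hlo : ∀ᶠ ξ : ℝ × ℝ in 𝓝 (x, y), m - 1 < Dx (W0 a) (0, ξ) :=
    hcont.eventually (lt_mem_nhds (by linarith))
  have hhi : ∀ᶠ ξ : ℝ × ℝ in 𝓝 (x, y), Dx (W0 a) (0, ξ) < m + 1 :=
    hcont.eventually (gt_mem_nhds (by linarith))
  have hx1 : ∀ t < x, ∀ᶠ ξ : ℝ × ℝ in 𝓝 (x, y), t < ξ.1 := fun t ht =>
    continuous_fst.continuousAt.eventually (lt_mem_nhds ht)
  have hx2 : ∀ t > x, ∀ᶠ ξ : ℝ × ℝ in 𝓝 (x, y), ξ.1 < t := fun t ht =>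
    continuous_fst.continuousAt.eventually (gt_mem_nhds ht)
  have hS : MeasurableSet Sq := measurableSet_Icc
  have hsin : ∀ ξ : ℝ × ℝ, (0, ξ) ∈ U0 → ∃ c > 0, Dx (W0 a) (0, ξ) = c * sin ξ.1 := by
    intro ξ hξ
    refine ⟨a * g0 (0, ξ) ^ (a - 1) / 2, ?_, ?_⟩
    · have : 0 < g0 (0, ξ) ^ (a - 1) := rpow_pos_of_pos hξ _
      positivity
    · rw [(basic_formulas a ha0 _ hξ).1]; ring
  have hSq := mem_Sq.1 h
  rcases eq_or_lt_of_le hSq.1.2 with hxπ | hxπ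
  · -- x = π
    have hm0 : m = 0 := by
      obtain ⟨c, _, hc⟩ := hsin (x, y) hU
      rw [hm, hc]; simp [hxπ]
    refine local_use (W0 a) U0 U0_open (W0_contDiffOn a) (x, y) hU hxx hnd Sq hS 0 1 (-π) π ?_
    filter_upwards [hUe, hhi, hx1 0 (by linarith), hx2 (2 * π) (by linarith)] with ξ h1 h2 h3 h4
    obtain ⟨c, hc, hD⟩ := hsin ξ h1
    obtain ⟨s, t⟩ := ξ
    simp only at h2 h3 h4 hD
    rw [hm0, zero_add] at h2
    rw [mem_Sq]
    simp only [Reg, mem_ofPred_eq, mem_Icc]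
    constructor
    · rintro ⟨⟨u1, u2⟩, u3⟩
      refine ⟨⟨?_, h2.le⟩, u3⟩
      rw [hD]
      exact mul_nonneg hc.le (sin_nonneg_of_nonneg_of_le_pi h3.le u2)
    · rintro ⟨⟨u1, u2⟩, u3⟩
      refine ⟨⟨by linarith, ?_⟩, u3⟩
      by_contra hs
      push Not at hs
      have : sin s < 0 := by
        have := sin_pos_of_pos_of_lt_pi (x := s - π) (by linarith) (by linarith)
        rw [sin_sub_pi] at this
        linarith
      rw [hD] at u1
      nlinarith
  rcases eq_or_lt_of_le hSq.1.1 with hxπ' | hxπ'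
  · have hm0 : m = 0 := by
      obtain ⟨c, _, hc⟩ := hsin (x, y) hU
      rw [hm, hc]; simp [← hxπ']
    refine local_use (W0 a) U0 U0_open (W0_contDiffOn a) (x, y) hU hxx hnd Sq hS (-1) 0 (-π) π ?_
    filter_upwards [hUe, hlo, hx2 0 (by linarith), hx1 (-(2 * π)) (by linarith)] with ξ h1 h2 h3 h4
    obtain ⟨c, hc, hD⟩ := hsin ξ h1
    obtain ⟨s, t⟩ := ξ
    simp only at h2 h3 h4 hD
    rw [hm0, zero_sub] at h2
    rw [mem_Sq]
    simp only [Reg, mem_ofPred_eq, mem_Icc]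
    constructor
    · rintro ⟨⟨u1, u2⟩, u3⟩
      refine ⟨⟨h2.le, ?_⟩, u3⟩
      rw [hD]
      exact mul_nonpos_of_nonneg_of_nonpos hc.le (sin_nonpos_of_nonpos_of_neg_pi_le h3.le u1)
    · rintro ⟨⟨u1, u2⟩, u3⟩
      refine ⟨⟨?_, by linarith⟩, u3⟩
      by_contra hs
      push Not at hs
      have : 0 < sin s := by
        have := sin_pos_of_pos_of_lt_pi (x := s + 2 * π) (by linarith) (by linarith)
        rwa [sin_add_two_pi] at this
      rw [hD] at u2
      nlinarith
  · refine local_use (W0 a) U0 U0_open (W0_contDiffOn a) (x, y) hU hxx hnd Sq hS (m - 1) (m + 1) (-π) π ?_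
    filter_upwards [hlo, hhi, hx1 (-π) hxπ', hx2 π hxπ] with ξ h1 h2 h3 h4
    obtain ⟨s, t⟩ := ξ
    rw [mem_Sq]
    simp only [Reg, mem_ofPred_eq, mem_Icc]
    simp only at h3 h4
    exact ⟨fun u => ⟨⟨h1.le, h2.le⟩, u.2⟩, fun u => ⟨⟨h3.le, h4.le⟩, u.2⟩⟩

noncomputable def g1 (p : ℝ × ℝ × ℝ) : ℝ := 1 - (cos p.2.1 + cos (p.2.1 + p.2.2)) / 2
def U1 : Set (ℝ × ℝ × ℝ) := {p | 0 < g1 p}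

lemma g1_contDiff : ContDiff ℝ ∞ g1 := by unfold g1; fun_prop
lemma U1_open : IsOpen U1 := isOpen_lt continuous_const g1_contDiff.continuous

lemma Dx_g1 : Dx g1 = fun p => (sin p.2.1 + sin (p.2.1 + p.2.2)) / 2 := by
  funext ⟨n, x, y⟩
  apply Dx_eq (g1_contDiff.differentiable (by simp) _)
  unfold g1
  have := (((hasDerivAt_cos x).add ((hasDerivAt_cos (x + y)).comp_add_const x y)).div_const 2).const_sub 1
  exact this.congr_deriv (by simp only; ring)

lemma Dy_g1 : Dy g1 = fun p => sin (p.2.1 + p.2.2) / 2 := by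
  funext ⟨n, x, y⟩
  apply Dy_eq (g1_contDiff.differentiable (by simp) _)
  unfold g1
  have := ((((hasDerivAt_cos (x + y)).comp_const_add x y).const_add (cos x)).div_const 2).const_sub 1
  exact this.congr_deriv (by simp only; ring)

lemma shear_formulas (a : ℝ) (ha0 : 0 < a) (ha1 : a < 1) (x y : ℝ) (hU : (0, x, y) ∈ U0)
    (h1 : Hh (1 - a) (0, x, y) = 0) (h2 : Hh (1 - a) (0, y, x) = 0) :
    sin x ≠ 0 ∧ sin y ≠ 0 ∧ (0, x, y - x) ∈ U1 ∧
    Dx (Dx (fun q => g1 q ^ a)) (0, x, y - x) ≠ 0 ∧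
    LL (fun q => g1 q ^ a) (Dy (fun q => g1 q ^ a)) (0, x, y - x) ≠ 0 := by
  have hG : 0 < 2 - cos x - cos y := by
    have : 0 < g0 (0, x, y) := hU
    simp only [g0] at this; linarith
  simp only [Hh] at h1 h2
  have key : ∀ u v : ℝ, 0 < 2 - cos u - cos v → (2 - cos u - cos v) * cos u - (1 - a) * sin u ^ 2 = 0 →
      sin u ≠ 0 := by
    intro u v hp h hs
    rw [hs] at h
    have h3 : cos u = 0 := by
      have : (2 - cos u - cos v) * cos u = 0 := by linarith
      rcases mul_eq_zero.1 this with h | h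
      · linarith
      · exact h
    have := sin_sq_add_cos_sq u
    rw [hs, h3] at this
    norm_num at this
  have s1 := key x y hG h1
  have s2 := key y x (by linarith) h2
  have e : x + (y - x) = y := by ring
  have hU1 : (0, x, y - x) ∈ U1 := by
    show 0 < g1 (0, x, y - x)
    simp only [g1, e]; linarith
  have cxx : Dx (Dx g1) (0, x, y - x) = (cos x + cos y) / 2 := by
    rw [Dx_g1]
    refine Dx_eq (by fun_prop) ?_
    have := (((hasDerivAt_sin x).add ((hasDerivAt_sin (x + (y - x))).comp_add_const x (y - x))).div_const 2)
    exact this.congr_deriv (by rw [e])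
  have cyx : Dy (Dx g1) (0, x, y - x) = cos y / 2 := by
    rw [Dx_g1]
    refine Dy_eq (by fun_prop) ?_
    have := ((((hasDerivAt_sin (x + (y - x))).comp_const_add x (y - x)).const_add (sin x)).div_const 2)
    exact this.congr_deriv (by rw [e])
  have cxy : Dx (Dy g1) (0, x, y - x) = cos y / 2 := by
    rw [Dy_g1]
    refine Dx_eq (by fun_prop) ?_
    have := (((hasDerivAt_sin (x + (y - x))).comp_add_const x (y - x))).div_const 2
    exact this.congr_deriv (by rw [e])
  have cyy : Dy (Dy g1) (0, x, y - x) = cos y / 2 := by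
    rw [Dy_g1]
    refine Dy_eq (by fun_prop) ?_
    have := ((((hasDerivAt_sin (x + (y - x))).comp_const_add x (y - x)))).div_const 2
    exact this.congr_deriv (by rw [e])
  have eg : g1 (0, x, y - x) = (2 - cos x - cos y) / 2 := by simp only [g1, e]; ring
  obtain ⟨_, r2, r3⟩ := pow_LL g1 U1 U1_open g1_contDiff.contDiffOn (fun p hp => hp) a ha0 _ hU1
    ((sin x + sin y) / 2) (sin y / 2) _ _ _ _ (-(1 - a) * (sin x * sin y) / 2)
    (by rw [Dx_g1]; simp only [e]) (by rw [Dy_g1]; simp only [e]) cxx cyx cxy cyy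
    (by rw [eg]; linear_combination (1 / 4) * (-h1 - h2))
  have hb : 0 < 1 - a := by linarith
  have hA : -(1 - a) * (sin x * sin y) / 2 ≠ 0 :=
    div_ne_zero (mul_ne_zero (by linarith) (mul_ne_zero s1 s2)) (by norm_num)
  have hgp : 0 < g1 (0, x, y - x) ^ (a - 2) := rpow_pos_of_pos hU1 _
  refine ⟨s1, s2, hU1, ?_, ?_⟩
  · rw [r2]
    exact mul_ne_zero (mul_ne_zero ha0.ne' hgp.ne') hA
  · rw [(r3 hA).2]
    refine mul_ne_zero (div_ne_zero (mul_ne_zero ha0.ne' hgp.ne') hA) ?_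
    rw [eg]
    have : -(1 - a) * (sin x * sin y) / 2 *
          ((2 - cos x - cos y) / 2 * (cos y / 2) - (1 - a) * (sin y / 2) ^ 2) -
        ((2 - cos x - cos y) / 2 * (cos y / 2) - (1 - a) * ((sin x + sin y) / 2 * (sin y / 2))) *
          ((2 - cos x - cos y) / 2 * (cos y / 2) - (1 - a) * ((sin x + sin y) / 2 * (sin y / 2)))
        = -(-(1 - a) * (sin x * sin y) / 2) ^ 2 / 4 := by
      have h3 : (2 - cos x - cos y) * cos y = (1 - a) * sin y ^ 2 := by linarith
      have h4 : (2 - cos x - cos y) / 2 * (cos y / 2) = (1 - a) * sin y ^ 2 / 4 := by linarith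
      rw [h4]; ring
    rw [this]
    have := pow_ne_zero 2 hA
    intro h
    apply this
    linarith

lemma loc_shear (a : ℝ) (ha0 : 0 < a) (ha1 : a < 1) (x y : ℝ) (h : (x, y) ∈ Sq)
    (h0 : (x, y) ≠ ((0, 0) : ℝ × ℝ)) (h1 : Hh (1 - a) (0, x, y) = 0)
    (h2 : Hh (1 - a) (0, y, x) = 0) :
    ∃ ε > 0, ∀ b : ℝ × ℝ → ℝ, ContDiff ℝ ∞ b → (∀ ξ, b ξ ≠ 0 → ξ ∈ Metric.ball (x, y) ε) →
      ∃ C ≥ 0, ∀ (v : ℝ × ℝ) (τ : ℝ), 1 ≤ τ →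
        ‖∫ ξ in Sq, eW (W0 a) τ v 0 ξ * (b ξ : ℂ)‖ ≤ C * τ ^ (-(3 : ℝ) / 4) := by
  obtain ⟨s1, s2, hU1, hxx, hL⟩ := shear_formulas a ha0 ha1 x y (g0_pos h h0) h1 h2
  have hSq : Sq ∈ 𝓝 (x, y) := by
    have hm := mem_Sq.1 h
    have n1 : -π < x := lt_of_le_of_ne hm.1.1 (by rintro rfl; simp at s1)
    have n2 : x < π := lt_of_le_of_ne hm.1.2 (by rintro rfl; simp at s1)
    have n3 : -π < y := lt_of_le_of_ne hm.2.1 (by rintro rfl; simp at s2)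
    have n4 : y < π := lt_of_le_of_ne hm.2.2 (by rintro rfl; simp at s2)
    refine Filter.mem_of_superset (prod_mem_nhds (Ioo_mem_nhds n1 n2) (Ioo_mem_nhds n3 n4)) ?_
    rintro ⟨s, t⟩ ⟨u1, u2⟩
    exact mem_Sq.2 ⟨⟨u1.1.le, u1.2.le⟩, ⟨u2.1.le, u2.2.le⟩⟩
  obtain ⟨δ, hδ, hδS⟩ := Metric.mem_nhds_iff.1 hSq
  set W : ℝ × ℝ × ℝ → ℝ := fun q => g1 q ^ a with hWdef
  have hW : ContDiffOn ℝ ∞ W U1 := pow_contDiffOn g1 U1 g1_contDiff.contDiffOn (fun p hp => hp) a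
  set m := Dx W (0, x, y - x) with hm
  have hc0 : Continuous (fun ξ : ℝ × ℝ => ((0 : ℝ), ξ)) := by fun_prop
  have hcont : ContinuousAt (fun ξ : ℝ × ℝ => Dx W (0, ξ)) (x, y - x) := by
    have := ((contDiffOn_Dx U1_open hW).continuousOn.continuousAt (U1_open.mem_nhds hU1))
    exact ContinuousAt.comp (f := fun ξ : ℝ × ℝ => ((0 : ℝ), ξ)) (x := (x, y - x)) this hc0.continuousAt
  obtain ⟨ε, hε, H⟩ := local_use W U1 U1_open hW (x, y - x) hU1 hxx ⟨0, by norm_num, hL⟩ univ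
    MeasurableSet.univ (m - 1) (m + 1) (y - x - 1) (y - x + 1) (by
      filter_upwards [hcont.eventually (lt_mem_nhds (show m - 1 < m by linarith)),
        hcont.eventually (gt_mem_nhds (show m < m + 1 by linarith)),
        continuous_snd.continuousAt.eventually (lt_mem_nhds (show y - x - 1 < (x, y - x).2 by simp)),
        continuous_snd.continuousAt.eventually (gt_mem_nhds (show (x, y - x).2 < y - x + 1 by simp))]
        with ξ u1 u2 u3 u4
      simp only [mem_univ, true_iff, Reg, mem_ofPred_eq, mem_Icc]
      exact ⟨⟨u1.le, u2.le⟩, ⟨u3.le, u4.le⟩⟩)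
  refine ⟨min δ (ε / 2), lt_min hδ (by linarith), ?_⟩
  intro b hb hbs
  obtain ⟨C, hC, HC⟩ := H (fun ζ => b (ζ.1, ζ.1 + ζ.2)) (hb.comp (by fun_prop)) (by
    intro ζ hζ
    have := Metric.ball_subset_ball (min_le_right _ _) (hbs _ hζ)
    rw [Metric.mem_ball, Prod.dist_eq, max_lt_iff, Real.dist_eq, Real.dist_eq, abs_lt, abs_lt] at *
    simp only at this ⊢
    refine ⟨⟨?_, ?_⟩, ⟨?_, ?_⟩⟩ <;> linarith [this.1.1, this.1.2, this.2.1, this.2.2])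
  refine ⟨C, hC, ?_⟩
  intro v τ hτ
  have := HC (v.1 + v.2, v.2) τ hτ
  rw [setIntegral_univ] at this
  have e1 : ∫ ξ in Sq, eW (W0 a) τ v 0 ξ * (b ξ : ℂ) = ∫ ξ, eW (W0 a) τ v 0 ξ * (b ξ : ℂ) := by
    apply setIntegral_eq_integral_of_forall_compl_eq_zero
    intro ξ hξ
    have : b ξ = 0 := by
      by_contra hne
      exact hξ (hδS (Metric.ball_subset_ball (min_le_left _ _) (hbs _ hne)))
    rw [this]; simp
  have mp : MeasurePreserving (MeasurableEquiv.shearAddRight ℝ) (volume : Measure (ℝ × ℝ)) volume :=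
    measurePreserving_prod_add volume volume
  have e2 := mp.integral_comp' (g := fun ξ => eW (W0 a) τ v 0 ξ * (b ξ : ℂ))
  rw [e1, ← e2]
  convert this using 4 with ζ
  simp only [eW]
  congr 4
  simp only [hWdef, W0, g0, g1]
  show τ * (v.1 * ζ.1 + v.2 * (ζ.1 + ζ.2) - _) = _
  ring_nf
  rfl

lemma W0_swap (a x y : ℝ) : W0 a (0, x, y) = W0 a (0, y, x) := by
  simp only [W0, g0]; congr 1; ring

lemma Sq_swap {x y : ℝ} : (x, y) ∈ Sq ↔ (y, x) ∈ Sq := by rw [mem_Sq, mem_Sq]; tauto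

lemma int_swap (a τ : ℝ) (v : ℝ × ℝ) (b : ℝ × ℝ → ℝ) :
    ∫ ξ in Sq, eW (W0 a) τ v 0 ξ * (b ξ : ℂ)
      = ∫ ξ in Sq, eW (W0 a) τ v.swap 0 ξ * (b ξ.swap : ℂ) := by
  have hS : MeasurableSet Sq := measurableSet_Icc
  rw [← integral_indicator hS, ← integral_indicator hS]
  have mp : MeasurePreserving (MeasurableEquiv.prodComm (α := ℝ) (β := ℝ))
      (volume : Measure (ℝ × ℝ)) volume := Measure.measurePreserving_swap
  rw [← mp.integral_comp' (g := Sq.indicator (fun ξ => eW (W0 a) τ v 0 ξ * (b ξ : ℂ)))]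
  congr 1
  funext ⟨x, y⟩
  show Sq.indicator (fun ξ => eW (W0 a) τ v 0 ξ * (b ξ : ℂ)) (y, x) = _
  by_cases h : (x, y) ∈ Sq
  · rw [indicator_of_mem h, indicator_of_mem (Sq_swap.1 h)]
    simp only [eW, Prod.swap, W0_swap a x y]
    congr 4
    ring
  · rw [indicator_of_notMem h, indicator_of_notMem (fun h' => h (Sq_swap.1 h'))]

lemma eW0_cont (a : ℝ) (ha : 0 < a) (τ : ℝ) (v : ℝ × ℝ) :
    Continuous (fun ξ => eW (W0 a) τ v 0 ξ) := by
  have : Continuous (fun ξ : ℝ × ℝ => W0 a (0, ξ)) := by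
    unfold W0
    refine Continuous.rpow_const ?_ (fun _ => Or.inr ha.le)
    exact g0_contDiff.continuous.comp (by fun_prop)
  unfold eW
  fun_prop

theorem thmB (a : ℝ) (ha0 : 0 < a) (ha1 : a < 1) (K : Set (ℝ × ℝ)) (hK : IsCompact K)
    (hK0 : ((0, 0) : ℝ × ℝ) ∉ K) (b : ℝ × ℝ → ℝ) (hb : ContDiff ℝ ∞ b)
    (hbs : ∀ ξ, b ξ ≠ 0 → ξ ∈ K) :
    ∃ C ≥ 0, ∀ (v : ℝ × ℝ) (τ : ℝ), 1 ≤ τ →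
        ‖∫ ξ in Sq, eW (W0 a) τ v 0 ξ * (b ξ : ℂ)‖ ≤ C * τ ^ (-(3 : ℝ) / 4) := by
  have hSc : IsCompact Sq := isCompact_Icc
  have := pou K hK (fun b => Continuous b ∧ ∃ C ≥ 0, ∀ (v : ℝ × ℝ) (τ : ℝ), 1 ≤ τ →
        ‖∫ ξ in Sq, eW (W0 a) τ v 0 ξ * (b ξ : ℂ)‖ ≤ C * τ ^ (-(3 : ℝ) / 4))
    ⟨continuous_const, 0, le_rfl, by intro v τ _; simp⟩ (by
      rintro b c ⟨hb, C, hC, H⟩ ⟨hc, D, hD, H'⟩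
      refine ⟨hb.add hc, C + D, by positivity, ?_⟩
      intro v τ hτ
      have i1 : ∀ d : ℝ × ℝ → ℝ, Continuous d →
          IntegrableOn (fun ξ => eW (W0 a) τ v 0 ξ * (d ξ : ℂ)) Sq := by
        intro d hd
        refine ContinuousOn.integrableOn_compact hSc (Continuous.continuousOn ?_)
        exact (eW0_cont a ha0 τ v).mul (by fun_prop)
      have : ∫ ξ in Sq, eW (W0 a) τ v 0 ξ * ((b ξ + c ξ : ℝ) : ℂ)
          = (∫ ξ in Sq, eW (W0 a) τ v 0 ξ * (b ξ : ℂ)) + ∫ ξ in Sq, eW (W0 a) τ v 0 ξ * (c ξ : ℂ) := by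
        rw [← integral_add (i1 b hb) (i1 c hc)]
        congr 1; funext ξ; push_cast; ring
      rw [this, add_mul]
      exact (norm_add_le _ _).trans (add_le_add (H v τ hτ) (H' v τ hτ))) ?_ b hb hbs
  · exact this.2
  rintro ⟨x, y⟩ hp
  have h0 : (x, y) ≠ ((0, 0) : ℝ × ℝ) := fun h => hK0 (h ▸ hp)
  suffices hh : ∃ ε > 0, ∀ b : ℝ × ℝ → ℝ, ContDiff ℝ ∞ b →
      (∀ ξ, b ξ ≠ 0 → ξ ∈ Metric.ball (x, y) ε) →
      ∃ C ≥ 0, ∀ (v : ℝ × ℝ) (τ : ℝ), 1 ≤ τ →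
        ‖∫ ξ in Sq, eW (W0 a) τ v 0 ξ * (b ξ : ℂ)‖ ≤ C * τ ^ (-(3 : ℝ) / 4) by
    obtain ⟨ε, hε, H⟩ := hh
    exact ⟨ε, hε, fun b hb hbs => ⟨hb.continuous, H b hb hbs⟩⟩
  by_cases hS : (x, y) ∈ Sq
  · by_cases h1 : Hh (1 - a) (0, x, y) = 0
    · by_cases h2 : Hh (1 - a) (0, y, x) = 0
      · exact loc_shear a ha0 ha1 x y hS h0 h1 h2
      · obtain ⟨ε, hε, H⟩ := loc_Hh a ha0 ha1 y x (Sq_swap.1 hS)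
          (fun h => h0 (by rw [Prod.mk.injEq] at h ⊢; exact h.symm)) h2
        refine ⟨ε, hε, ?_⟩
        intro b hb hbs
        obtain ⟨C, hC, HC⟩ := H (fun ξ => b ξ.swap) (hb.comp (contDiff_snd.prodMk contDiff_fst)) (by
          intro ξ hξ
          have := hbs _ hξ
          rw [Metric.mem_ball, Prod.dist_eq, max_lt_iff] at *
          exact this.symm)
        refine ⟨C, hC, ?_⟩
        intro v τ hτ
        rw [int_swap]
        exact HC _ τ hτ
    · exact loc_Hh a ha0 ha1 x y hS h0 h1
  · obtain ⟨ε, hε, H⟩ := Metric.mem_nhds_iff.1 (hSc.isClosed.isOpen_compl.mem_nhds hS)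
    refine ⟨ε, hε, ?_⟩
    intro b hb hbs
    refine ⟨0, le_rfl, ?_⟩
    intro v τ hτ
    rw [setIntegral_eq_zero_of_forall_eq_zero]
    · simp
    intro ξ hξ
    have : b ξ = 0 := by
      by_contra hne
      exact H (hbs _ hne) hξ
    rw [this]; simp

noncomputable def sc (u : ℝ) : ℝ := (dslope Complex.sin 0 (u : ℂ)).re

lemma sc_contDiff : ContDiff ℝ ∞ sc := by
  have h1 : Differentiable ℂ (dslope Complex.sin 0) := by
    rw [← differentiableOn_univ, Complex.differentiableOn_dslope Filter.univ_mem]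
    exact Complex.differentiable_sin.differentiableOn
  have h2 : ContDiff ℝ ∞ (dslope Complex.sin 0) := (h1.contDiff (n := ∞)).restrict_scalars ℝ
  exact Complex.reCLM.contDiff.comp (h2.comp Complex.ofRealCLM.contDiff)

lemma sc_zero : sc 0 = 1 := by
  simp [sc]

lemma mul_sc (u : ℝ) : u * sc u = sin u := by
  have h := sub_smul_dslope Complex.sin 0 (u : ℂ)
  simp only [sub_zero, smul_eq_mul, Complex.sin_zero] at h
  have := congrArg Complex.re h
  rw [Complex.re_ofReal_mul, Complex.sin_ofReal_re] at this
  exact this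

noncomputable def gS (p : ℝ × ℝ × ℝ) : ℝ :=
  (p.2.1 / 2 * sc (p.1 * p.2.1 / 2)) ^ 2 + (p.2.2 / 2 * sc (p.1 * p.2.2 / 2)) ^ 2
def US : Set (ℝ × ℝ × ℝ) := {p | 0 < gS p}
noncomputable def WS (a : ℝ) (p : ℝ × ℝ × ℝ) : ℝ := gS p ^ a

lemma gS_contDiff : ContDiff ℝ ∞ gS := by
  have := sc_contDiff
  unfold gS; fun_prop
lemma US_open : IsOpen US := isOpen_lt continuous_const gS_contDiff.continuous

lemma gS_zero (x y : ℝ) : gS (0, x, y) = (x ^ 2 + y ^ 2) / 4 := by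
  simp only [gS, zero_mul, zero_div, sc_zero]; ring

lemma Dx_gS (x y : ℝ) : Dx gS (0, x, y) = x / 2 := by
  apply Dx_eq (gS_contDiff.differentiable (by simp) _)
  simp only [gS_zero]
  have := (((hasDerivAt_pow 2 x).add_const (y ^ 2)).div_const 4)
  exact this.congr_deriv (by ring)

lemma Dy_gS (x y : ℝ) : Dy gS (0, x, y) = y / 2 := by
  apply Dy_eq (gS_contDiff.differentiable (by simp) _)
  simp only [gS_zero]
  have := (((hasDerivAt_pow 2 y).const_add (x ^ 2)).div_const 4)
  exact this.congr_deriv (by ring)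

lemma gS_formulas (a : ℝ) (ha0 : 1 / 2 < a) (ha1 : a < 1) (x y : ℝ) (h : (x, y) ≠ ((0, 0) : ℝ × ℝ)) :
    (0, x, y) ∈ US ∧ Dx (Dx (WS a)) (0, x, y) ≠ 0 ∧ LL (WS a) (Dy (WS a)) (0, x, y) ≠ 0 := by
  have hr : 0 < x ^ 2 + y ^ 2 := by
    by_cases hx : x = 0
    · have hy : y ≠ 0 := fun hy => h (by rw [hx, hy])
      positivity
    · positivity
  have hU : (0, x, y) ∈ US := by
    show 0 < gS (0, x, y)
    rw [gS_zero]; positivity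
  have dx : ContDiffOn ℝ ∞ (Dx gS) univ := contDiffOn_Dx isOpen_univ gS_contDiff.contDiffOn
  have dy : ContDiffOn ℝ ∞ (Dy gS) univ := contDiffOn_Dy isOpen_univ gS_contDiff.contDiffOn
  have cxx : Dx (Dx gS) (0, x, y) = 1 / 2 := by
    refine Dx_eq (diffAt_of_on isOpen_univ dx (mem_univ _)) ?_
    simp only [Dx_gS]
    exact (hasDerivAt_id x).div_const 2
  have cyx : Dy (Dx gS) (0, x, y) = 0 := by
    refine Dy_eq (diffAt_of_on isOpen_univ dx (mem_univ _)) ?_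
    simp only [Dx_gS]
    exact hasDerivAt_const _ _
  have cxy : Dx (Dy gS) (0, x, y) = 0 := by
    refine Dx_eq (diffAt_of_on isOpen_univ dy (mem_univ _)) ?_
    simp only [Dy_gS]
    exact hasDerivAt_const _ _
  have cyy : Dy (Dy gS) (0, x, y) = 1 / 2 := by
    refine Dy_eq (diffAt_of_on isOpen_univ dy (mem_univ _)) ?_
    simp only [Dy_gS]
    exact (hasDerivAt_id y).div_const 2
  have ha : 0 < a := by linarith
  obtain ⟨_, r2, r3⟩ := pow_LL gS US US_open gS_contDiff.contDiffOn (fun p hp => hp) a ha _ hU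
    (x / 2) (y / 2) _ _ _ _ (((2 * a - 1) * x ^ 2 + y ^ 2) / 8)
    (Dx_gS x y) (Dy_gS x y) cxx cyx cxy cyy (by rw [gS_zero]; ring)
  have hA : 0 < ((2 * a - 1) * x ^ 2 + y ^ 2) / 8 := by
    have h1 : 0 < 2 * a - 1 := by linarith
    by_cases hx : x = 0
    · have hy : y ≠ 0 := fun hy => h (by rw [hx, hy])
      positivity
    · positivity
  have hgp : 0 < gS (0, x, y) ^ (a - 2) := rpow_pos_of_pos hU _
  refine ⟨hU, ?_, ?_⟩
  · show Dx (Dx (fun q => gS q ^ a)) (0, x, y) ≠ 0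
    rw [r2]
    positivity
  · show LL (fun q => gS q ^ a) (Dy (fun q => gS q ^ a)) (0, x, y) ≠ 0
    rw [(r3 hA.ne').2]
    refine mul_ne_zero (by positivity) ?_
    rw [gS_zero]
    have : ((2 * a - 1) * x ^ 2 + y ^ 2) / 8 * ((x ^ 2 + y ^ 2) / 4 * (1 / 2) - (1 - a) * (y / 2) ^ 2) -
        ((x ^ 2 + y ^ 2) / 4 * 0 - (1 - a) * (x / 2 * (y / 2))) *
          ((x ^ 2 + y ^ 2) / 4 * 0 - (1 - a) * (x / 2 * (y / 2)))
        = (2 * a - 1) * (x ^ 2 + y ^ 2) ^ 2 / 64 := by ring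
    rw [this]
    have h1 : 0 < 2 * a - 1 := by linarith
    positivity

lemma eWS_cont (a : ℝ) (ha : 0 < a) (τ n : ℝ) (v : ℝ × ℝ) :
    Continuous (fun ξ => eW (WS a) τ v n ξ) := by
  have : Continuous (fun ξ : ℝ × ℝ => WS a (n, ξ)) := by
    unfold WS
    refine Continuous.rpow_const ?_ (fun _ => Or.inr ha.le)
    exact gS_contDiff.continuous.comp (by fun_prop)
  unfold eW
  fun_prop

theorem thmC (a : ℝ) (ha0 : 1 / 2 < a) (ha1 : a < 1) (K : Set (ℝ × ℝ)) (hK : IsCompact K)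
    (hK0 : ((0, 0) : ℝ × ℝ) ∉ K) (b : ℝ × ℝ → ℝ) (hb : ContDiff ℝ ∞ b)
    (hbs : ∀ ξ, b ξ ≠ 0 → ξ ∈ K) :
    ∃ ε > 0, ∃ C ≥ 0, ∀ n : ℝ, |n| < ε → ∀ (v : ℝ × ℝ) (τ : ℝ), 1 ≤ τ →
        ‖∫ ξ, eW (WS a) τ v n ξ * (b ξ : ℂ)‖ ≤ C * τ ^ (-(3 : ℝ) / 4) := by
  have ha : 0 < a := by linarith
  have := pou K hK (fun b => (Continuous b ∧ HasCompactSupport b) ∧ ∃ ε > 0, ∃ C ≥ 0,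
      ∀ n : ℝ, |n| < ε → ∀ (v : ℝ × ℝ) (τ : ℝ), 1 ≤ τ →
        ‖∫ ξ, eW (WS a) τ v n ξ * (b ξ : ℂ)‖ ≤ C * τ ^ (-(3 : ℝ) / 4))
    ⟨⟨continuous_const, HasCompactSupport.zero⟩, 1, one_pos, 0, le_rfl, by intro n _ v τ _; simp⟩ (by
      rintro b c ⟨hb, ε, hε, C, hC, H⟩ ⟨hc, ε', hε', D, hD, H'⟩
      refine ⟨⟨hb.1.add hc.1, hb.2.add hc.2⟩, min ε ε', lt_min hε hε', C + D, by positivity, ?_⟩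
      intro n hn v τ hτ
      have i1 : ∀ d : ℝ × ℝ → ℝ, Continuous d ∧ HasCompactSupport d →
          Integrable (fun ξ => eW (WS a) τ v n ξ * (d ξ : ℂ)) := by
        rintro d ⟨hd, hd'⟩
        refine Continuous.integrable_of_hasCompactSupport ?_ ?_
        · exact (eWS_cont a ha τ n v).mul (by fun_prop)
        · refine HasCompactSupport.mul_left ?_
          exact hd'.comp_left (g := fun t : ℝ => (t : ℂ)) (by simp)
      have : ∫ ξ, eW (WS a) τ v n ξ * ((b ξ + c ξ : ℝ) : ℂ)
          = (∫ ξ, eW (WS a) τ v n ξ * (b ξ : ℂ)) + ∫ ξ, eW (WS a) τ v n ξ * (c ξ : ℂ) := by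
        rw [← integral_add (i1 b hb) (i1 c hc)]
        congr 1; funext ξ; push_cast; ring
      rw [this, add_mul]
      exact (norm_add_le _ _).trans (add_le_add (H n (hn.trans_le (min_le_left _ _)) v τ hτ)
        (H' n (hn.trans_le (min_le_right _ _)) v τ hτ))) ?_ b hb hbs
  · exact this.2
  rintro ⟨x, y⟩ hp
  have h0 : (x, y) ≠ ((0, 0) : ℝ × ℝ) := fun h => hK0 (h ▸ hp)
  obtain ⟨hU, hxx, hL⟩ := gS_formulas a ha0 ha1 x y h0
  have hW : ContDiffOn ℝ ∞ (WS a) US :=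
    pow_contDiffOn gS US gS_contDiff.contDiffOn (fun p hp => hp) a
  obtain ⟨ε, hε, H⟩ := local_thm (WS a) US US_open hW 0 (x, y) hU hxx 0 (by norm_num) hL
  set m := Dx (WS a) (0, x, y) with hm
  have hcont : ContinuousAt (Dx (WS a)) (0, x, y) :=
    ((contDiffOn_Dx US_open hW).continuousOn.continuousAt (US_open.mem_nhds hU))
  have hev : ∀ᶠ q : ℝ × ℝ × ℝ in 𝓝 (0, x, y), Dx (WS a) q ∈ Icc (m - 1) (m + 1) ∧
      q.2.2 ∈ Icc (y - 1) (y + 1) := by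
    have hy : ContinuousAt (fun q : ℝ × ℝ × ℝ => q.2.2) (0, x, y) := by fun_prop
    filter_upwards [hcont.eventually (Icc_mem_nhds (show m - 1 < m by linarith) (show m < m + 1 by linarith)),
      hy.eventually (Icc_mem_nhds (show y - 1 < y by linarith) (show y < y + 1 by linarith))] with q h1 h2
    exact ⟨h1, h2⟩
  obtain ⟨δ, hδ, hb⟩ := Metric.eventually_nhds_iff_ball.1 hev
  refine ⟨min ε δ, lt_min hε hδ, ?_⟩
  intro b hb' hbs
  refine ⟨⟨hb'.continuous, ?_⟩, ?_⟩
  · refine HasCompactSupport.of_support_subset_isCompact (isCompact_closedBall (x, y) (min ε δ)) ?_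
    intro ξ hξ
    exact Metric.ball_subset_closedBall (hbs ξ hξ)
  obtain ⟨C, hC, HC⟩ := H b hb' (fun ξ hξ => Metric.ball_subset_ball (min_le_left _ _) (hbs ξ hξ))
  refine ⟨min ε δ, lt_min hε hδ, C, hC, ?_⟩
  intro n hn v τ hτ
  have := HC n (by simpa using hn.trans_le (min_le_left _ _)) (m - 1) (m + 1) (y - 1) (y + 1) v τ hτ
  have e : (fun ξ => eW (WS a) τ v n ξ * (b ξ : ℂ)) =
      (Reg (WS a) n (m - 1) (m + 1) (y - 1) (y + 1)).indicator (fun ξ => eW (WS a) τ v n ξ * (b ξ : ℂ)) := by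
    funext ξ
    by_cases h : b ξ = 0
    · by_cases h' : ξ ∈ Reg (WS a) n (m - 1) (m + 1) (y - 1) (y + 1)
      · rw [indicator_of_mem h']
      · rw [indicator_of_notMem h', h]; simp
    · rw [indicator_of_mem]
      refine hb (n, ξ) ?_
      have h3 := Metric.ball_subset_ball (min_le_right _ _) (hbs _ h)
      have h4 := hn.trans_le (min_le_right ε δ)
      rw [Metric.mem_ball, Prod.dist_eq, max_lt_iff]
      refine ⟨by simpa [Real.dist_eq] using h4, h3⟩
  rw [e]
  exact this

lemma all_tau (F : ℝ → ℝ) (C M : ℝ) (hC : 0 ≤ C) (hM : 0 ≤ M)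
    (h1 : ∀ τ, 1 ≤ τ → F τ ≤ C * τ ^ (-(3 : ℝ) / 4)) (h2 : ∀ τ, F τ ≤ M) :
    ∀ τ, 0 < τ → F τ ≤ (C + M) * τ ^ (-(3 : ℝ) / 4) := by
  intro τ hτ
  have hp : 0 < τ ^ (-(3 : ℝ) / 4) := rpow_pos_of_pos hτ _
  by_cases h : 1 ≤ τ
  · have := h1 τ h
    nlinarith
  · have h3 : 1 ≤ τ ^ (-(3 : ℝ) / 4) :=
      one_le_rpow_of_pos_of_le_one_of_nonpos hτ (by linarith) (by norm_num)
    have := h2 τ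
    nlinarith

def Ann (r R : ℝ) : Set (ℝ × ℝ) := {ξ | r ^ 2 ≤ ξ.1 ^ 2 + ξ.2 ^ 2 ∧ ξ.1 ^ 2 + ξ.2 ^ 2 ≤ R ^ 2}

lemma Ann_compact (r R : ℝ) (hR : 0 ≤ R) : IsCompact (Ann r R) := by
  refine IsCompact.of_isClosed_subset (isCompact_Icc (a := ((-R, -R) : ℝ × ℝ)) (b := (R, R))) ?_ ?_
  · have hc : Continuous (fun ξ : ℝ × ℝ => ξ.1 ^ 2 + ξ.2 ^ 2) := by fun_prop
    exact (isClosed_le continuous_const hc).inter (isClosed_le hc continuous_const)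
  · rintro ⟨x, y⟩ ⟨_, h⟩
    simp only at h
    have h1 := abs_le_of_sq_le_sq' (show x ^ 2 ≤ R ^ 2 by nlinarith [sq_nonneg y]) hR
    have h2 := abs_le_of_sq_le_sq' (show y ^ 2 ≤ R ^ 2 by nlinarith [sq_nonneg x]) hR
    exact ⟨⟨h1.1, h2.1⟩, ⟨h1.2, h2.2⟩⟩

lemma Ann_zero (r R : ℝ) (hr : 0 < r) : ((0, 0) : ℝ × ℝ) ∉ Ann r R := by
  rintro ⟨h, _⟩
  simp only at h
  have : 0 < r ^ 2 := by positivity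
  linarith

lemma W0_eq (α x y : ℝ) : (sin (x / 2) ^ 2 + sin (y / 2) ^ 2) ^ (α / 2) = W0 (α / 2) (0, x, y) := by
  simp only [W0, g0, sin_sq_eq_half_sub]
  congr 1
  rw [show 2 * (x / 2) = x by ring, show 2 * (y / 2) = y by ring]; ring

lemma W0_scale (α N x y : ℝ) (hN : 0 < N) :
    W0 (α / 2) (0, N * x, N * y) = N ^ α * WS (α / 2) (N, x, y) := by
  rw [← W0_eq]
  have : sin (N * x / 2) ^ 2 + sin (N * y / 2) ^ 2 = N ^ 2 * gS (N, x, y) := by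
    rw [← mul_sc, ← mul_sc]
    simp only [gS]; ring
  have h0 : 0 ≤ gS (N, x, y) := by simp only [gS]; positivity
  rw [this, mul_rpow (by positivity) h0, ← rpow_natCast, ← rpow_mul hN.le, WS]
  congr 2
  push_cast; ring

lemma scale_int (α N τ : ℝ) (hN : 0 < N) (v : ℝ × ℝ) (η : ℝ × ℝ → ℝ) :
    ∫ ξ : ℝ × ℝ, eW (W0 (α / 2)) τ v 0 ξ * ((η (ξ.1 / N, ξ.2 / N) : ℝ) : ℂ)
      = (N ^ 2 : ℝ) • ∫ ζ : ℝ × ℝ, eW (WS (α / 2)) (τ * N ^ α) (N / N ^ α * v.1, N / N ^ α * v.2) N ζ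
        * ((η ζ : ℝ) : ℂ) := by
  have h := Measure.integral_comp_smul (volume : Measure (ℝ × ℝ))
    (fun ξ : ℝ × ℝ => eW (W0 (α / 2)) τ v 0 ξ * ((η (ξ.1 / N, ξ.2 / N) : ℝ) : ℂ)) N
  have hf : Module.finrank ℝ (ℝ × ℝ) = 2 := by simp
  rw [hf, abs_of_pos (by positivity)] at h
  have hNa : 0 < N ^ α := rpow_pos_of_pos hN _
  have e : (fun ζ : ℝ × ℝ => eW (WS (α / 2)) (τ * N ^ α) (N / N ^ α * v.1, N / N ^ α * v.2) N ζ
        * ((η ζ : ℝ) : ℂ)) = fun ζ : ℝ × ℝ => eW (W0 (α / 2)) τ v 0 (N • ζ)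
        * ((η ((N • ζ).1 / N, (N • ζ).2 / N) : ℝ) : ℂ) := by
    funext ⟨x, y⟩
    simp only [Prod.smul_mk, smul_eq_mul]
    rw [mul_div_cancel_left₀ x hN.ne', mul_div_cancel_left₀ y hN.ne']
    congr 1
    simp only [eW]
    rw [W0_scale α N x y hN]
    congr 3
    field_simp
  rw [e, h, smul_smul, mul_inv_cancel₀ (by positivity), one_smul]

lemma eta_zero (ψ : ℝ → ℝ) (hψ1 : ∀ x ∈ Set.Icc (-π) π, ψ x = 1)
    (η : ℝ × ℝ → ℝ)
    (hη : ∀ ξ, η ξ = ψ (Real.sqrt (ξ.1 ^ 2 + ξ.2 ^ 2))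
        - ψ (2 * Real.sqrt (ξ.1 ^ 2 + ξ.2 ^ 2))) (ξ : ℝ × ℝ)
    (h : ξ.1 ^ 2 + ξ.2 ^ 2 ≤ (π / 2) ^ 2) : η ξ = 0 := by
  have pp := pi_pos
  have h1 : Real.sqrt (ξ.1 ^ 2 + ξ.2 ^ 2) ≤ π / 2 := Real.sqrt_le_iff.2 ⟨by positivity, h⟩
  have h2 := Real.sqrt_nonneg (ξ.1 ^ 2 + ξ.2 ^ 2)
  rw [hη, hψ1 _ ⟨by linarith, by linarith⟩, hψ1 _ ⟨by linarith, by linarith⟩, sub_self]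

lemma eta_supp (ψ : ℝ → ℝ)
    (hψsupp : Function.support ψ ⊆ Set.Ioo (-(2 * π)) (2 * π))
    (hψ1 : ∀ x ∈ Set.Icc (-π) π, ψ x = 1)
    (η : ℝ × ℝ → ℝ)
    (hη : ∀ ξ, η ξ = ψ (Real.sqrt (ξ.1 ^ 2 + ξ.2 ^ 2))
        - ψ (2 * Real.sqrt (ξ.1 ^ 2 + ξ.2 ^ 2))) (ξ : ℝ × ℝ)
    (h : η ξ ≠ 0) : ξ ∈ Ann (π / 2) (2 * π) := by
  have pp := pi_pos
  constructor
  · by_contra h'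
    push Not at h'
    exact h (eta_zero ψ hψ1 η hη ξ h'.le)
  · by_contra h'
    push Not at h'
    have h1 : 2 * π ≤ Real.sqrt (ξ.1 ^ 2 + ξ.2 ^ 2) := Real.le_sqrt_of_sq_le h'.le
    have hz : ∀ t, 2 * π ≤ t → ψ t = 0 := by
      intro t ht
      by_contra hne
      have := (hψsupp hne).2
      linarith
    apply h
    rw [hη, hz _ h1, hz _ (by linarith), sub_self]

lemma eta_smooth (ψ : ℝ → ℝ) (hψs : ContDiff ℝ ∞ ψ)
    (hψ1 : ∀ x ∈ Set.Icc (-π) π, ψ x = 1)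
    (η : ℝ × ℝ → ℝ)
    (hη : ∀ ξ, η ξ = ψ (Real.sqrt (ξ.1 ^ 2 + ξ.2 ^ 2))
        - ψ (2 * Real.sqrt (ξ.1 ^ 2 + ξ.2 ^ 2))) : ContDiff ℝ ∞ η := by
  have pp := pi_pos
  rw [contDiff_iff_contDiffAt]
  intro ξ
  by_cases h : ξ.1 ^ 2 + ξ.2 ^ 2 = 0
  · have hc : Continuous (fun ξ : ℝ × ℝ => ξ.1 ^ 2 + ξ.2 ^ 2) := by fun_prop
    have : η =ᶠ[𝓝 ξ] fun _ => 0 := by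
      filter_upwards [hc.continuousAt.eventually
        (gt_mem_nhds (show ξ.1 ^ 2 + ξ.2 ^ 2 < (π / 2) ^ 2 by rw [h]; positivity))] with ζ hζ
      exact eta_zero ψ hψ1 η hη ζ hζ.le
    exact contDiffAt_const.congr_of_eventuallyEq this
  · have e : η = fun ξ => ψ (Real.sqrt (ξ.1 ^ 2 + ξ.2 ^ 2))
        - ψ (2 * Real.sqrt (ξ.1 ^ 2 + ξ.2 ^ 2)) := funext hη
    rw [e]
    have hs : ContDiffAt ℝ ∞ (fun ξ : ℝ × ℝ => Real.sqrt (ξ.1 ^ 2 + ξ.2 ^ 2)) ξ :=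
      ContDiffAt.sqrt (by fun_prop) h
    exact (hψs.contDiffAt.comp ξ hs).sub (hψs.contDiffAt.comp ξ (contDiffAt_const.mul hs))

lemma main_aux (α : ℝ) (hα1 : 1 < α) (hα2 : α < 2) (η : ℝ × ℝ → ℝ) (hηs : ContDiff ℝ ∞ η)
    (hη1 : ∀ ξ, |η ξ| ≤ 1) (hsupp : ∀ ξ, η ξ ≠ 0 → ξ ∈ Ann (π / 2) (2 * π)) :
    ∃ C > 0, ∀ N : ℝ, (∃ k : ℕ, N = (2 : ℝ) ^ (-(k : ℤ))) →
      ∀ v : ℝ × ℝ, ∀ τ : ℝ, 0 < τ →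
        ‖∫ ξ in Sq, eW (W0 (α / 2)) τ v 0 ξ * ((η (ξ.1 / N, ξ.2 / N) : ℝ) : ℂ)‖
          ≤ C * N ^ (2 - 3 / 4 * α) * τ ^ (-(3 : ℝ) / 4) := by
  have pp := pi_pos
  -- each fixed N
  have hB : ∀ k : ℕ, ∃ C ≥ 0, ∀ v : ℝ × ℝ, ∀ τ : ℝ, 0 < τ →
        ‖∫ ξ in Sq, eW (W0 (α / 2)) τ v 0 ξ *
          ((η (ξ.1 / (2 : ℝ) ^ (-(k : ℤ)), ξ.2 / (2 : ℝ) ^ (-(k : ℤ))) : ℝ) : ℂ)‖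
          ≤ C * ((2 : ℝ) ^ (-(k : ℤ))) ^ (2 - 3 / 4 * α) * τ ^ (-(3 : ℝ) / 4) := by
    intro k
    set N : ℝ := (2 : ℝ) ^ (-(k : ℤ)) with hNdef
    have hN : 0 < N := by positivity
    obtain ⟨C, hC, H⟩ := thmB (α / 2) (by linarith) (by linarith) (Ann (N * (π / 2)) (N * (2 * π)))
      (Ann_compact _ _ (by positivity)) (Ann_zero _ _ (by positivity))
      (fun ξ => η (ξ.1 / N, ξ.2 / N)) (hηs.comp (by fun_prop)) (by
        intro ξ hξ
        have := hsupp _ hξ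
        simp only [Ann, mem_ofPred_eq] at this ⊢
        have e : ξ.1 ^ 2 + ξ.2 ^ 2 = N ^ 2 * ((ξ.1 / N) ^ 2 + (ξ.2 / N) ^ 2) := by field_simp
        rw [e, mul_pow N, mul_pow N]
        exact ⟨mul_le_mul_of_nonneg_left this.1 (by positivity),
          mul_le_mul_of_nonneg_left this.2 (by positivity)⟩)
    have hNp : 0 < N ^ (2 - 3 / 4 * α) := rpow_pos_of_pos hN _
    refine ⟨(C + 1 * volume.real Sq) / N ^ (2 - 3 / 4 * α), by positivity, ?_⟩
    intro v
    rw [div_mul_cancel₀ _ hNp.ne']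
    refine all_tau _ C (1 * volume.real Sq) hC (by positivity) (fun τ hτ => H v τ hτ) ?_
    intro τ
    refine norm_setIntegral_le_of_norm_le_const (isCompact_Icc.measure_lt_top) ?_
    intro ξ _
    rw [norm_mul, norm_eW, one_mul, Complex.norm_real]
    exact hη1 _
  choose C hC HB using hB
  obtain ⟨ε, hε, D, hD, HC⟩ := thmC (α / 2) (by linarith) (by linarith) (Ann (π / 2) (2 * π))
    (Ann_compact _ _ (by positivity)) (Ann_zero _ _ (by positivity)) η hηs hsupp
  obtain ⟨k₀, hk₀⟩ : ∃ k₀ : ℕ, ∀ k ≥ k₀, (2 : ℝ) ^ (-(k : ℤ)) < ε ∧ (2 : ℝ) ^ (-(k : ℤ)) ≤ 1 / 2 := by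
    obtain ⟨m, hm⟩ := exists_pow_lt_of_lt_one hε (show (1 / 2 : ℝ) < 1 by norm_num)
    refine ⟨m + 1, fun k hk => ?_⟩
    have e : (2 : ℝ) ^ (-(k : ℤ)) = (1 / 2 : ℝ) ^ k := by
      rw [zpow_neg, zpow_natCast, one_div, inv_pow]
    rw [e]
    refine ⟨lt_of_le_of_lt (pow_le_pow_of_le_one (by norm_num) (by norm_num) (by omega)) hm, ?_⟩
    calc (1 / 2 : ℝ) ^ k ≤ (1 / 2 : ℝ) ^ 1 :=
          pow_le_pow_of_le_one (by norm_num) (by norm_num) (by omega)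
      _ = 1 / 2 := by norm_num
  set M := ∫ ξ, ‖η ξ‖ with hM
  have hM0 : 0 ≤ M := integral_nonneg (fun _ => norm_nonneg _)
  have hS0 : 0 ≤ ∑ k ∈ Finset.range k₀, C k := Finset.sum_nonneg (fun k _ => hC k)
  refine ⟨(D + M) + ∑ k ∈ Finset.range k₀, C k + 1, by positivity, ?_⟩
  rintro N ⟨k, rfl⟩ v τ hτ
  by_cases hk : k < k₀
  · refine (HB k v τ hτ).trans ?_
    gcongr
    have := Finset.single_le_sum (f := C) (fun k _ => hC k) (Finset.mem_range.2 hk)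
    linarith
  push Not at hk
  obtain ⟨hN1, hN2⟩ := hk₀ k hk
  set N : ℝ := (2 : ℝ) ^ (-(k : ℤ)) with hNdef
  have hN : 0 < N := by positivity
  have hNa : 0 < N ^ α := rpow_pos_of_pos hN _
  have e1 : ∫ ξ in Sq, eW (W0 (α / 2)) τ v 0 ξ * ((η (ξ.1 / N, ξ.2 / N) : ℝ) : ℂ)
      = ∫ ξ, eW (W0 (α / 2)) τ v 0 ξ * ((η (ξ.1 / N, ξ.2 / N) : ℝ) : ℂ) := by
    apply setIntegral_eq_integral_of_forall_compl_eq_zero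
    rintro ⟨x, y⟩ hξ
    have : η (x / N, y / N) = 0 := by
      by_contra hne
      apply hξ
      have h := (hsupp _ hne).2
      simp only at h
      have hh : x ^ 2 + y ^ 2 ≤ π ^ 2 := by
        have e : x ^ 2 + y ^ 2 = N ^ 2 * ((x / N) ^ 2 + (y / N) ^ 2) := by field_simp
        rw [e]
        calc N ^ 2 * ((x / N) ^ 2 + (y / N) ^ 2) ≤ (1 / 2) ^ 2 * (2 * π) ^ 2 := by gcongr
          _ = π ^ 2 := by ring
      have h1 := abs_le_of_sq_le_sq' (show x ^ 2 ≤ π ^ 2 by nlinarith [sq_nonneg y]) pp.le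
      have h2 := abs_le_of_sq_le_sq' (show y ^ 2 ≤ π ^ 2 by nlinarith [sq_nonneg x]) pp.le
      exact mem_Sq.2 ⟨h1, h2⟩
    simp only [this]; simp
  rw [e1, scale_int α N τ hN v η, norm_smul, Real.norm_of_nonneg (by positivity)]
  have h2 := all_tau (fun T => ‖∫ ζ : ℝ × ℝ, eW (WS (α / 2)) T (N / N ^ α * v.1, N / N ^ α * v.2) N ζ
        * ((η ζ : ℝ) : ℂ)‖) D M hD hM0
    (fun T hT => HC N (by rwa [abs_of_pos hN]) _ T hT) (by
      intro T
      refine (norm_integral_le_integral_norm _).trans (le_of_eq ?_)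
      congr 1
      funext ζ
      rw [norm_mul, norm_eW, one_mul, Complex.norm_real]) (τ * N ^ α) (by positivity)
  have e3 : (τ * N ^ α) ^ (-(3 : ℝ) / 4) = τ ^ (-(3 : ℝ) / 4) * N ^ (- (3 / 4 * α)) := by
    rw [mul_rpow hτ.le hNa.le, ← rpow_mul hN.le]
    congr 2; ring
  have e4 : N ^ (2 - 3 / 4 * α) = N ^ 2 * N ^ (- (3 / 4 * α)) := by
    rw [sub_eq_add_neg, rpow_add hN, rpow_two]
  rw [e3] at h2
  rw [e4]
  have hp1 : 0 < N ^ (- (3 / 4 * α)) := rpow_pos_of_pos hN _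
  have hp2 : 0 < τ ^ (-(3 : ℝ) / 4) := rpow_pos_of_pos hτ _
  calc N ^ 2 * _ ≤ N ^ 2 * ((D + M) * (τ ^ (-(3 : ℝ) / 4) * N ^ (- (3 / 4 * α)))) := by gcongr
    _ = (D + M) * (N ^ 2 * N ^ (- (3 / 4 * α))) * τ ^ (-(3 : ℝ) / 4) := by ring
    _ ≤ _ := by
      refine mul_le_mul_of_nonneg_right (mul_le_mul_of_nonneg_right ?_ (by positivity)) hp2.le
      linarith

end helpers

theorem stmt19 (α : ℝ) (hα1 : 1 < α) (hα2 : α < 2)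
    (ψ : ℝ → ℝ) (hψs : ContDiff ℝ (⊤ : ℕ∞) ψ)
    (hψr : ∀ x, ψ x ∈ Set.Icc (0 : ℝ) 1)
    (hψe : ∀ x, ψ (-x) = ψ x)
    (hψsupp : Function.support ψ ⊆ Set.Ioo (-(2 * π)) (2 * π))
    (hψ1 : ∀ x ∈ Set.Icc (-π) π, ψ x = 1)
    (η : ℝ × ℝ → ℝ)
    (hη : ∀ ξ, η ξ = ψ (Real.sqrt (ξ.1 ^ 2 + ξ.2 ^ 2))
        - ψ (2 * Real.sqrt (ξ.1 ^ 2 + ξ.2 ^ 2))) :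
    ∃ C > 0, ∀ N : ℝ, (∃ k : ℕ, N = (2 : ℝ) ^ (-(k : ℤ))) →
      ∀ v : ℝ × ℝ, ∀ τ : ℝ, 0 < τ →
        ‖∫ ξ in Set.Icc ((-π, -π) : ℝ × ℝ) ((π, π) : ℝ × ℝ),
            Complex.exp (Complex.I * (τ : ℂ) *
              ((v.1 * ξ.1 + v.2 * ξ.2
                - (Real.sin (ξ.1 / 2) ^ 2 + Real.sin (ξ.2 / 2) ^ 2) ^ (α / 2) : ℝ) : ℂ))
            * ((η (ξ.1 / N, ξ.2 / N) : ℝ) : ℂ)‖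
          ≤ C * N ^ (2 - 3 / 4 * α) * τ ^ (-(3 : ℝ) / 4) := by
  obtain ⟨C, hC, H⟩ := main_aux α hα1 hα2 η (eta_smooth ψ hψs hψ1 η hη) (by
    intro ξ
    rw [hη, abs_le]
    have h1 := hψr (Real.sqrt (ξ.1 ^ 2 + ξ.2 ^ 2))
    have h2 := hψr (2 * Real.sqrt (ξ.1 ^ 2 + ξ.2 ^ 2))
    constructor <;> linarith [h1.1, h1.2, h2.1, h2.2]) (eta_supp ψ hψsupp hψ1 η hη)
  refine ⟨C, hC, ?_⟩
  intro N hN v τ hτ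
  have := H N hN v τ hτ
  have e : ∀ ξ : ℝ × ℝ, Complex.exp (Complex.I * (τ : ℂ) *
              ((v.1 * ξ.1 + v.2 * ξ.2
                - (Real.sin (ξ.1 / 2) ^ 2 + Real.sin (ξ.2 / 2) ^ 2) ^ (α / 2) : ℝ) : ℂ))
      = eW (W0 (α / 2)) τ v 0 ξ := by
    intro ξ
    rw [W0_eq, eW, Complex.ofReal_mul τ, mul_assoc]
  simp only [e]
  exact this
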